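/- For every d ∈ ℕ there exist δ > 0 and c > 0 such that the following holds: for every n ∈ ℕ and every multilinear homogeneous polynomial of degree d, P(x) = Σ_{S ⊆ {1,…,n}, |S| = d} a_S ∏_{i∈S} x_i, if the Lévy–Prokhorov distance between the law of P(G_1, …, G_n) (where G_1, …, G_n are independent standard Gaussians) and N(0,1) is at most δ, then for every ε > 0 one has P( |P(G_1, …, G_n)| ≤ ε ) ≤ c · ε. -/

import Mathlib

open MeasureTheory ProbabilityTheory MvPolynomial Filter Topology
open scoped ENNReal NNReal

noncomputable def gaussPi (ι : Type) [Fintype ι] : Measure (ι → ℝ) :=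
  Measure.pi fun _ => gaussianReal 0 1

noncomputable def hermiteProd {K : ℕ} (k : Fin K → ℕ) : MvPolynomial (Fin K) ℝ :=
  ∏ i, Polynomial.aeval (MvPolynomial.X i) (Polynomial.hermite (k i))

noncomputable def chaos (K m : ℕ) : Submodule ℝ (MvPolynomial (Fin K) ℝ) :=
  Submodule.span ℝ {P | ∃ k : Fin K → ℕ, ∑ i, k i = m ∧ P = hermiteProd k}

noncomputable def sqField {ι : Type} [Fintype ι] (P : MvPolynomial ι ℝ) (x : ι → ℝ) : ℝ :=
  ∑ i, (eval x (pderiv i P)) ^ 2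

def TendstoInLaw {E : Type} [MeasurableSpace E] [TopologicalSpace E]
    (μs : ℕ → Measure E) (μ : Measure E) : Prop :=
  ∀ f : BoundedContinuousFunction E ℝ,
    Tendsto (fun n => ∫ x, f x ∂μs n) atTop (𝓝 (∫ x, f x ∂μ))


instance gaussPi_prob (ι : Type) [Fintype ι] : IsProbabilityMeasure (gaussPi ι) := by
  unfold gaussPi; infer_instance

/-- product of standard Gaussian vectors -/
noncomputable def Gam (κ ι : Type) [Fintype κ] [Fintype ι] : Measure (κ → ι → ℝ) :=
  Measure.pi fun _ => gaussPi ι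

instance Gam_prob (κ ι : Type) [Fintype κ] [Fintype ι] : IsProbabilityMeasure (Gam κ ι) := by
  unfold Gam; infer_instance

lemma gauss_char (s : ℝ) : ∫ x, Complex.exp ((s * x : ℝ) * Complex.I) ∂(gaussianReal 0 1)
    = Complex.exp (-(s^2/2 : ℝ)) := by
  have h := charFun_gaussianReal (μ := 0) (v := 1) s
  rw [charFun_apply_real] at h
  simp only [Complex.ofReal_mul]
  rw [h]
  congr 1
  push_cast
  ring

lemma gaussPi_char {ι : Type} [Fintype ι] (l : ι → ℝ) :
    ∫ x, Complex.exp ((∑ a, l a * x a : ℝ) * Complex.I) ∂(gaussPi ι)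
    = Complex.exp (-((∑ a, l a ^ 2)/2 : ℝ)) := by
  have h : ∀ x : ι → ℝ, Complex.exp ((∑ a, l a * x a : ℝ) * Complex.I)
      = ∏ a, Complex.exp ((l a * x a : ℝ) * Complex.I) := by
    intro x
    rw [← Complex.exp_sum, Complex.ofReal_sum, Finset.sum_mul]
  simp_rw [h]
  unfold gaussPi
  rw [integral_fintype_prod_eq_prod (𝕜 := ℂ) (fun a (y : ℝ) => Complex.exp ((l a * y : ℝ) * Complex.I))]
  simp_rw [gauss_char]
  rw [← Complex.exp_sum]
  congr 1
  push_cast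
  rw [Finset.sum_neg_distrib, Finset.sum_div]

lemma Gam_char {κ ι : Type} [Fintype κ] [Fintype ι] (l : κ → ι → ℝ) :
    ∫ x, Complex.exp ((∑ i, ∑ a, l i a * x i a : ℝ) * Complex.I) ∂(Gam κ ι)
    = Complex.exp (-((∑ i, ∑ a, l i a ^ 2)/2 : ℝ)) := by
  have h : ∀ x : κ → ι → ℝ, Complex.exp ((∑ i, ∑ a, l i a * x i a : ℝ) * Complex.I)
      = ∏ i, Complex.exp ((∑ a, l i a * x i a : ℝ) * Complex.I) := by
    intro x
    rw [← Complex.exp_sum, Complex.ofReal_sum, Finset.sum_mul]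
  simp_rw [h]
  unfold Gam
  rw [integral_fintype_prod_eq_prod (𝕜 := ℂ) (fun i (y : ι → ℝ) => Complex.exp ((∑ a, l i a * y a : ℝ) * Complex.I))]
  simp_rw [gaussPi_char]
  rw [← Complex.exp_sum]
  congr 1
  push_cast
  rw [Finset.sum_neg_distrib, Finset.sum_div]

lemma gaussPi_crit {ι : Type} [Fintype ι] (μ : Measure (ι → ℝ)) [IsFiniteMeasure μ]
    (h : ∀ l : ι → ℝ, ∫ x, Complex.exp ((∑ a, l a * x a : ℝ) * Complex.I) ∂μ
      = Complex.exp (-((∑ a, l a ^ 2)/2 : ℝ))) : μ = gaussPi ι := by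
  classical
  apply Measure.ext_of_charFunDual
  ext L
  have hL : ∀ x : ι → ℝ, L x = ∑ a, L (Pi.single a 1) * x a := by
    intro x
    conv_lhs => rw [← Finset.univ_sum_single x]
    rw [map_sum]
    refine Finset.sum_congr rfl fun a _ => ?_
    have : (Pi.single a (x a) : ι → ℝ) = x a • Pi.single a 1 := by
      ext j; by_cases hj : j = a
      · subst hj; simp
      · simp [Pi.single_eq_of_ne hj]
    rw [this, map_smul, smul_eq_mul, mul_comm]
  rw [charFunDual_apply, charFunDual_apply]
  obtain ⟨l, hl⟩ : ∃ l : ι → ℝ, ∀ x, L x = ∑ a, l a * x a := ⟨_, hL⟩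
  simp_rw [hl]
  rw [h, gaussPi_char]

lemma Gam_crit {κ ι : Type} [Fintype κ] [Fintype ι] (μ : Measure (κ → ι → ℝ)) [IsFiniteMeasure μ]
    (h : ∀ l : κ → ι → ℝ, ∫ x, Complex.exp ((∑ i, ∑ a, l i a * x i a : ℝ) * Complex.I) ∂μ
      = Complex.exp (-((∑ i, ∑ a, l i a ^ 2)/2 : ℝ))) : μ = Gam κ ι := by
  classical
  apply Measure.ext_of_charFunDual
  ext L
  have hL : ∀ x : κ → ι → ℝ, L x = ∑ i, ∑ a, L (Pi.single i (Pi.single a 1)) * x i a := by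
    intro x
    conv_lhs => rw [← Finset.univ_sum_single x]
    rw [map_sum]
    refine Finset.sum_congr rfl fun i _ => ?_
    conv_lhs => rw [← Finset.univ_sum_single (x i)]
    have e1 : (Pi.single i (∑ a, Pi.single a (x i a)) : κ → ι → ℝ)
        = ∑ a, x i a • Pi.single i (Pi.single a 1) := by
      ext j b
      by_cases hj : j = i
      · subst hj; simp [Pi.single_apply, Finset.sum_apply]
      · simp [Pi.single_eq_of_ne hj, Finset.sum_apply]
    rw [e1, map_sum]
    refine Finset.sum_congr rfl fun a _ => ?_
    rw [map_smul, smul_eq_mul, mul_comm]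
  rw [charFunDual_apply, charFunDual_apply]
  obtain ⟨l, hl⟩ : ∃ l : κ → ι → ℝ, ∀ x, L x = ∑ i, ∑ a, l i a * x i a := ⟨_, hL⟩
  simp_rw [hl]
  rw [h, Gam_char]

/-- orthogonal matrices preserve gaussPi -/
lemma gaussPi_orth {ι : Type} [Fintype ι] [DecidableEq ι] (O : Matrix ι ι ℝ) (hO : O * O.transpose = 1) :
    MeasurePreserving (fun x : ι → ℝ => O.mulVec x) (gaussPi ι) (gaussPi ι) := by
  have hm : Measurable (fun x : ι → ℝ => O.mulVec x) :=
    (Continuous.matrix_mulVec continuous_const continuous_id).measurable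
  refine ⟨hm, ?_⟩
  have := Measure.isProbabilityMeasure_map (μ := gaussPi ι) hm.aemeasurable
  apply gaussPi_crit
  intro l
  rw [integral_map hm.aemeasurable (Continuous.aestronglyMeasurable (by fun_prop))]
  have e1 : ∀ x : ι → ℝ, ∑ a, l a * (O.mulVec x) a = ∑ a, (O.transpose.mulVec l) a * x a := by
    intro x
    have : dotProduct l (O.mulVec x) = dotProduct (O.transpose.mulVec l) x := by
      rw [Matrix.dotProduct_mulVec, Matrix.mulVec_transpose]
    exact this
  simp_rw [e1]
  rw [gaussPi_char]
  congr 4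
  have : dotProduct (O.transpose.mulVec l) (O.transpose.mulVec l) = dotProduct l l := by
    rw [Matrix.dotProduct_mulVec, ← Matrix.mulVec_transpose, Matrix.mulVec_mulVec, Matrix.transpose_transpose, hO,
      Matrix.one_mulVec]
  simpa [dotProduct, sq] using this

lemma Gam_comb {κ ι : Type} [Fintype κ] [Fintype ι] (u : κ → ℝ) (hu : ∑ i, u i ^ 2 = 1) :
    MeasurePreserving (fun Y : κ → ι → ℝ => ∑ i, u i • Y i) (Gam κ ι) (gaussPi ι) := by
  have hm : Measurable (fun Y : κ → ι → ℝ => ∑ i, u i • Y i) := by fun_prop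
  refine ⟨hm, ?_⟩
  have := Measure.isProbabilityMeasure_map (μ := Gam κ ι) hm.aemeasurable
  apply gaussPi_crit
  intro l
  rw [integral_map hm.aemeasurable (Continuous.aestronglyMeasurable (by fun_prop))]
  have e1 : ∀ x : κ → ι → ℝ, ∑ a, l a * (∑ i, u i • x i) a = ∑ i, ∑ a, (u i * l a) * x i a := by
    intro x
    rw [Finset.sum_comm]
    refine Finset.sum_congr rfl fun a _ => ?_
    simp [Finset.sum_apply, Finset.mul_sum]
    refine Finset.sum_congr rfl fun i _ => ?_
    ring
  simp_rw [e1]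
  rw [Gam_char]
  congr 4
  simp_rw [mul_pow, ← Finset.mul_sum, ← Finset.sum_mul]
  rw [hu, one_mul]

lemma Gam_diff {κ ι : Type} [Fintype κ] [Fintype ι] :
    MeasurePreserving (fun p : (κ → ι → ℝ) × (κ → ι → ℝ) => (√2)⁻¹ • (p.1 - p.2))
      ((Gam κ ι).prod (Gam κ ι)) (Gam κ ι) := by
  have hm : Measurable (fun p : (κ → ι → ℝ) × (κ → ι → ℝ) => (√2)⁻¹ • (p.1 - p.2)) := by fun_prop
  refine ⟨hm, ?_⟩
  have := Measure.isProbabilityMeasure_map (μ := (Gam κ ι).prod (Gam κ ι)) hm.aemeasurable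
  apply Gam_crit
  intro l
  rw [integral_map hm.aemeasurable (Continuous.aestronglyMeasurable (by fun_prop))]
  have e1 : ∀ p : (κ → ι → ℝ) × (κ → ι → ℝ),
      Complex.exp ((∑ i, ∑ a, l i a * ((√2)⁻¹ • (p.1 - p.2)) i a : ℝ) * Complex.I)
      = Complex.exp ((∑ i, ∑ a, ((√2)⁻¹ * l i a) * p.1 i a : ℝ) * Complex.I) *
        Complex.exp ((∑ i, ∑ a, (-(√2)⁻¹ * l i a) * p.2 i a : ℝ) * Complex.I) := by
    intro p
    rw [← Complex.exp_add, ← add_mul, ← Complex.ofReal_add, ← Finset.sum_add_distrib]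
    congr 3
    refine Finset.sum_congr rfl fun i _ => ?_
    rw [← Finset.sum_add_distrib]
    refine Finset.sum_congr rfl fun a _ => ?_
    simp
    ring
  simp_rw [e1]
  rw [integral_prod_mul (fun x : κ → ι → ℝ => Complex.exp ((∑ i, ∑ a, ((√2)⁻¹ * l i a) * x i a : ℝ) * Complex.I))
    (fun x : κ → ι → ℝ => Complex.exp ((∑ i, ∑ a, (-(√2)⁻¹ * l i a) * x i a : ℝ) * Complex.I)),
    Gam_char, Gam_char, ← Complex.exp_add]
  congr 1
  rw [← Complex.ofReal_neg, ← Complex.ofReal_neg, ← Complex.ofReal_neg, ← Complex.ofReal_add]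
  congr 1
  simp_rw [mul_pow, ← Finset.mul_sum]
  have : ((√2)⁻¹)^2 = (1/2:ℝ) := by
    rw [inv_pow, Real.sq_sqrt (by norm_num)]; norm_num
  rw [neg_sq, this]
  ring

/-- one-dimensional projections -/
lemma gaussPi_proj {ι : Type} [Fintype ι] (l : ι → ℝ) :
    Measure.map (fun x : ι → ℝ => ∑ a, l a * x a) (gaussPi ι)
      = Measure.map (fun y : ℝ => √(∑ a, l a ^ 2) * y) (gaussianReal 0 1) := by
  have hm : Measurable (fun x : ι → ℝ => ∑ a, l a * x a) := by fun_prop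
  have hm2 : Measurable (fun y : ℝ => √(∑ a, l a ^ 2) * y) := by fun_prop
  have := Measure.isProbabilityMeasure_map (μ := gaussPi ι) hm.aemeasurable
  have := Measure.isProbabilityMeasure_map (μ := gaussianReal 0 1) hm2.aemeasurable
  apply Measure.ext_of_charFun
  ext t
  rw [charFun_apply_real, charFun_apply_real, integral_map hm.aemeasurable (Continuous.aestronglyMeasurable (by fun_prop)),
    integral_map hm2.aemeasurable (Continuous.aestronglyMeasurable (by fun_prop))]
  have e1 := gaussPi_char (fun a => t * l a)
  have e2 := gauss_char (t * √(∑ a, l a ^ 2))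
  have e3 : ∀ x : ι → ℝ, (t:ℂ) * ((∑ a, l a * x a : ℝ):ℂ) = (∑ a, t * l a * x a : ℝ) := by
    intro x; push_cast; rw [Finset.mul_sum]; simp_rw [mul_assoc]
  have e4 : ∀ y : ℝ, (t:ℂ) * ((√(∑ a, l a ^ 2) * y : ℝ):ℂ) = (t * √(∑ a, l a ^ 2) * y : ℝ) := by
    intro x; push_cast; ring
  simp_rw [e3, e4]
  rw [e1, e2]
  congr 3
  rw [mul_pow, Real.sq_sqrt (Finset.sum_nonneg fun a _ => sq_nonneg _)]
  simp_rw [mul_pow, ← Finset.mul_sum]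


lemma lintegral_pi_prod {κ : Type} [Fintype κ] {E : Type} [MeasurableSpace E] (μ : Measure E)
    [IsProbabilityMeasure μ] (f : κ → E → ℝ≥0∞) (hf : ∀ i, Measurable (f i)) :
    ∫⁻ x : κ → E, ∏ i, f i (x i) ∂(Measure.pi fun _ => μ) = ∏ i, ∫⁻ x, f i x ∂μ := by
  rw [lintegral_prod_eq_prod_lintegral_of_indepFun Finset.univ (fun i (x : κ → E) => f i (x i))
    (iIndepFun_pi fun i => (hf i).aemeasurable) (fun i => (hf i).comp (measurable_pi_apply i))]
  refine Finset.prod_congr rfl fun i _ => ?_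
  exact (measurePreserving_eval (fun _ : κ => μ) i).lintegral_comp (hf i)

lemma spec_lemma {ι : Type} [Fintype ι] [DecidableEq ι] (Q : Matrix ι ι ℝ) (hQ : Q.PosSemidef) :
    ∃ (O : Matrix ι ι ℝ) (lam : ι → ℝ), O * O.transpose = 1 ∧ O.transpose * O = 1 ∧ (∀ a, 0 ≤ lam a) ∧
      O.transpose * Q * O = Matrix.diagonal lam := by
  let U : Matrix ι ι ℝ := hQ.1.eigenvectorUnitary
  have h1 : U * U.transpose = 1 := by
    have := Unitary.coe_mul_star_self hQ.1.eigenvectorUnitary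
    rwa [Unitary.coe_star, Matrix.star_eq_conjTranspose, Matrix.conjTranspose_eq_transpose_of_trivial] at this
  have h2 : U.transpose * U = 1 := mul_eq_one_comm.mp h1
  refine ⟨U, hQ.1.eigenvalues, h1, h2, hQ.eigenvalues_nonneg, ?_⟩
  have h3 := hQ.1.spectral_theorem
  rw [Unitary.conjStarAlgAut_apply, Matrix.star_eq_conjTranspose, Matrix.conjTranspose_eq_transpose_of_trivial] at h3
  change Q = U * _ * U.transpose at h3
  generalize hQ.1.eigenvalues = lam at *
  rw [h3]
  calc _ = (U.transpose * U) * Matrix.diagonal (RCLike.ofReal ∘ lam) * (U.transpose * U) := by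
        simp only [mul_assoc]
    _ = _ := by rw [h2, one_mul, mul_one]; rfl

noncomputable def gx (r : ℝ) : ℝ≥0∞ := ENNReal.ofReal (Real.exp (-(r / 2)))

lemma gx_continuous : Continuous gx := by
  unfold gx; exact ENNReal.continuous_ofReal.comp (by fun_prop)

@[fun_prop]
lemma gx_measurable : Measurable gx := gx_continuous.measurable

lemma gx_add (r s : ℝ) : gx (r + s) = gx r * gx s := by
  unfold gx
  rw [← ENNReal.ofReal_mul (Real.exp_pos _).le, ← Real.exp_add]; congr 2; ring

lemma gx_zero : gx 0 = 1 := by simp [gx]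

lemma gx_sum {ι : Type} (s : Finset ι) (f : ι → ℝ) : gx (∑ a ∈ s, f a) = ∏ a ∈ s, gx (f a) := by
  classical
  induction s using Finset.induction_on with
  | empty => simp [gx_zero]
  | insert a s ha ih => rw [Finset.sum_insert ha, Finset.prod_insert ha, gx_add, ih]

lemma gx_le_one {r : ℝ} (hr : 0 ≤ r) : gx r ≤ 1 := by
  unfold gx
  rw [← ENNReal.ofReal_one]
  apply ENNReal.ofReal_le_ofReal
  rw [Real.exp_le_one_iff]; linarith

lemma gauss_le_volume : gaussianReal 0 1 ≤ (volume : Measure ℝ) := by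
  rw [gaussianReal_of_var_ne_zero _ one_ne_zero]
  conv_rhs => rw [← withDensity_one (μ := (volume : Measure ℝ))]
  apply withDensity_mono
  refine ae_of_all _ fun x => ?_
  rw [gaussianPDF_def, Pi.one_apply, ← ENNReal.ofReal_one]
  apply ENNReal.ofReal_le_ofReal
  rw [gaussianPDFReal_def]
  simp only [NNReal.coe_one, mul_one, sub_zero]
  have h1 : Real.exp (-x^2/2) ≤ 1 := by rw [Real.exp_le_one_iff]; nlinarith [sq_nonneg x]
  have h2 : (√(2*Real.pi))⁻¹ ≤ 1 := by
    apply inv_le_one_of_one_le₀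
    rw [Real.one_le_sqrt]; nlinarith [Real.pi_gt_three]
  exact mul_le_one₀ h2 (Real.exp_pos _).le h1

lemma gauss_exp {s : ℝ} (hs : 0 ≤ s) :
    ∫⁻ x, gx (s * x ^ 2) ∂(gaussianReal 0 1) = ENNReal.ofReal ((√(1+s))⁻¹) := by
  have hIntg : ∫ x, Real.exp (-((s * x^2)/2)) ∂(gaussianReal 0 1) = (√(1+s))⁻¹ := by
    rw [integral_gaussianReal_eq_integral_smul one_ne_zero]
    have : ∀ x : ℝ, gaussianPDFReal 0 1 x • Real.exp (-((s * x^2)/2))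
        = (√(2*Real.pi))⁻¹ * Real.exp (-((1+s)/2) * x^2) := by
      intro x
      rw [gaussianPDFReal_def, smul_eq_mul]
      simp only [NNReal.coe_one, mul_one, sub_zero]
      rw [mul_assoc, ← Real.exp_add]; congr 2; ring
    simp_rw [this]
    rw [integral_const_mul, integral_gaussian, ← Real.sqrt_inv, ← Real.sqrt_inv, ← Real.sqrt_mul (by positivity)]
    congr 1
    have : 1 + s ≠ 0 := by positivity
    field_simp
  unfold gx
  rw [← ofReal_integral_eq_lintegral_ofReal, hIntg]
  · apply Integrable.of_bound (C := 1)
    · exact Continuous.aestronglyMeasurable (by fun_prop)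
    · refine ae_of_all _ fun x => ?_
      rw [Real.norm_of_nonneg (Real.exp_pos _).le, Real.exp_le_one_iff]
      nlinarith [mul_nonneg hs (sq_nonneg x)]
  · exact ae_of_all _ fun x => (Real.exp_pos _).le

lemma gaussPi_exp {ι : Type} [Fintype ι] (s : ι → ℝ) (hs : ∀ a, 0 ≤ s a) :
    ∫⁻ x, gx (∑ a, s a * x a ^ 2) ∂(gaussPi ι) = ENNReal.ofReal ((√(∏ a, (1 + s a)))⁻¹) := by
  simp_rw [gx_sum]
  unfold gaussPi
  rw [lintegral_pi_prod _ (fun a (y : ℝ) => gx (s a * y ^ 2)) (fun a => by fun_prop)]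
  rw [Finset.prod_congr rfl fun a _ => gauss_exp (hs a), ← ENNReal.ofReal_prod_of_nonneg (fun a _ => by positivity)]
  congr 1
  rw [Finset.prod_inv_distrib, Real.sqrt_prod _ (fun a _ => by have := hs a; positivity)]

noncomputable def gm (m : ℕ) : ℝ≥0∞ := ∫⁻ x : ℝ, ‖x‖ₑ ^ (2 * m) ∂(gaussianReal 0 1)

lemma gm_lt_top (m : ℕ) : gm m < ∞ := by
  by_cases hm : m = 0
  · subst hm; simp [gm]
  have := (memLp_id_gaussianReal' (μ := 0) (v := 1) ((2 * m : ℕ) : ℝ≥0∞) (ENNReal.natCast_ne_top _)).2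
  rw [eLpNorm_lt_top_iff_lintegral_rpow_enorm_lt_top (by simp [hm]) (ENNReal.natCast_ne_top _)] at this
  unfold gm
  convert this using 3
  simp only [ENNReal.toReal_natCast, ENNReal.rpow_natCast, id]

lemma gm_large (K : ℝ≥0) : ∃ m0 : ℕ, ∀ m ≥ m0, (K : ℝ≥0∞) ^ m ≤ gm m := by
  -- use |x| ≥ K + 1
  set S : Set ℝ := {x | (K + 1 : ℝ) ≤ x}
  have hS : MeasurableSet S := measurableSet_Ici
  have hp : gaussianReal 0 1 S ≠ 0 := by
    intro h
    have := gaussianReal_absolutelyContinuous' 0 (one_ne_zero (α := ℝ≥0)) h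
    have e : S = Set.Ici (K + 1 : ℝ) := rfl
    rw [e, Real.volume_Ici] at this
    exact absurd this (by simp)
  have key : ∀ m : ℕ, ((K : ℝ≥0∞) + 1) ^ (2 * m) * gaussianReal 0 1 S ≤ gm m := by
    intro m
    unfold gm
    calc _ = ∫⁻ x in S, ((K : ℝ≥0∞) + 1) ^ (2 * m) ∂(gaussianReal 0 1) := by simp
      _ ≤ ∫⁻ x in S, ‖x‖ₑ ^ (2 * m) ∂(gaussianReal 0 1) := by
        apply setLIntegral_mono' hS
        intro x hx
        gcongr
        have hx' : (K + 1 : ℝ) ≤ x := hx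
        have hx0 : 0 ≤ x := by have := K.2; linarith [K.coe_nonneg]
        rw [Real.enorm_eq_ofReal hx0]
        have : ((K : ℝ≥0∞) + 1) = ENNReal.ofReal (K + 1 : ℝ) := by
          rw [ENNReal.ofReal_add K.coe_nonneg zero_le_one]; simp
        rw [this]
        exact ENNReal.ofReal_le_ofReal hx'
      _ ≤ _ := setLIntegral_le_lintegral _ _
  have hp1 : (gaussianReal 0 1 S).toNNReal ≠ 0 := by
    rw [ENNReal.toNNReal_ne_zero]; exact ⟨hp, measure_ne_top _ _⟩
  set p := (gaussianReal 0 1 S).toNNReal with hpdef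
  have hpe : gaussianReal 0 1 S = p := by rw [hpdef, ENNReal.coe_toNNReal (measure_ne_top _ _)]
  have hlim : ∃ m0 : ℕ, ∀ m ≥ m0, (K / (K + 1) ^ 2) ^ m ≤ p := by
    have hlt : K / (K + 1) ^ 2 < 1 := by
      rw [div_lt_one (by positivity)]
      have : (K:ℝ) < (K + 1)^2 := by nlinarith [K.coe_nonneg]
      exact_mod_cast this
    have := (NNReal.tendsto_pow_atTop_nhds_zero_of_lt_one hlt).eventually_le_const (pos_iff_ne_zero.2 hp1)
    exact eventually_atTop.1 this
  obtain ⟨m0, hm0⟩ := hlim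
  refine ⟨m0, fun m hm => le_trans ?_ (key m)⟩
  have := hm0 m hm
  rw [div_pow, div_le_iff₀ (by positivity)] at this
  rw [hpe]
  have h2 : K ^ m ≤ (K + 1) ^ (2 * m) * p := by rw [pow_mul, mul_comm]; exact this
  exact_mod_cast h2

lemma proj_moment {ι : Type} [Fintype ι] (l : ι → ℝ) (m : ℕ) :
    ∫⁻ x, ‖∑ a, l a * x a‖ₑ ^ (2 * m) ∂(gaussPi ι) = ENNReal.ofReal (∑ a, l a ^ 2) ^ m * gm m := by
  have h := gaussPi_proj l
  have hm : Measurable (fun x : ι → ℝ => ∑ a, l a * x a) := by fun_prop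
  have hm2 : Measurable (fun y : ℝ => √(∑ a, l a ^ 2) * y) := by fun_prop
  have e := lintegral_map (μ := gaussPi ι) (f := fun y : ℝ => ‖y‖ₑ ^ (2 * m)) (by fun_prop) hm
  rw [← e, h, lintegral_map (by fun_prop) hm2]
  simp_rw [enorm_mul, mul_pow]
  rw [lintegral_const_mul _ (by fun_prop)]
  unfold gm
  congr 1
  rw [pow_mul, Real.enorm_eq_ofReal (Real.sqrt_nonneg _), ← ENNReal.ofReal_pow (Real.sqrt_nonneg _),
    Real.sq_sqrt (Finset.sum_nonneg fun a _ => sq_nonneg _)]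

lemma memLp_gauss_sq : MemLp (fun x : ℝ => x ^ 2) 2 (gaussianReal 0 1) := by
  have h := memLp_id_gaussianReal' (μ := 0) (v := 1) 4 (by simp)
  have h2 := h.norm_rpow_div (2 : ℝ≥0∞)
  have e : (4 : ℝ≥0∞) / 2 = 2 := by
    rw [show (4 : ℝ≥0∞) = 2 * 2 by norm_num, ENNReal.mul_div_cancel_right (by simp) (by simp)]
  rw [e] at h2
  simpa using h2

noncomputable def V4 : ℝ := variance (fun x : ℝ => x ^ 2) (gaussianReal 0 1)

lemma V4_nonneg : 0 ≤ V4 := variance_nonneg _ _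

lemma gauss_sq : ∫ x : ℝ, x ^ 2 ∂(gaussianReal 0 1) = 1 := by
  have h := variance_id_gaussianReal (μ := 0) (v := 1)
  rw [variance_eq_sub (memLp_id_gaussianReal' 2 (by simp))] at h
  simpa using h

lemma cheb {ι : Type} [Fintype ι] (lam : ι → ℝ) {θ : ℝ} (hθ : 0 < θ) :
    gaussPi ι {x | θ ≤ |∑ a, lam a * x a ^ 2 - ∑ a, lam a|} ≤ ENNReal.ofReal (V4 * (∑ a, lam a ^ 2) / θ ^ 2) := by
  have hL : ∀ a, MemLp (fun x : ℝ => lam a * x ^ 2) 2 (gaussianReal 0 1) := fun a => memLp_gauss_sq.const_mul _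
  have hL' : ∀ a, MemLp (fun x : ι → ℝ => lam a * x a ^ 2) 2 (gaussPi ι) := fun a =>
    (hL a).comp_measurePreserving (measurePreserving_eval (fun _ : ι => gaussianReal 0 1) a)
  have hS : MemLp (fun x : ι → ℝ => ∑ a, lam a * x a ^ 2) 2 (gaussPi ι) := by
    exact memLp_finsetSum _ fun a _ => hL' a
  have hE : ∫ x, ∑ a, lam a * x a ^ 2 ∂(gaussPi ι) = ∑ a, lam a := by
    rw [integral_finsetSum _ fun a _ => (hL' a).integrable (by norm_num)]
    refine Finset.sum_congr rfl fun a _ => ?_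
    have := integral_comp_eval (μ := fun _ : ι => gaussianReal 0 1) (i := a) (f := fun x : ℝ => lam a * x ^ 2)
      (Continuous.aestronglyMeasurable (by fun_prop))
    unfold gaussPi
    rw [this, integral_const_mul, gauss_sq, mul_one]
  have hV : variance (fun x : ι → ℝ => ∑ a, lam a * x a ^ 2) (gaussPi ι) = V4 * ∑ a, lam a ^ 2 := by
    have := variance_sum_pi (μ := fun _ : ι => gaussianReal 0 1) hL
    unfold gaussPi
    rw [Finset.mul_sum]
    have e : (fun x : ι → ℝ => ∑ a, lam a * x a ^ 2) = ∑ a, fun x : ι → ℝ => lam a * x a ^ 2 := by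
      ext x; simp
    rw [e, this]
    refine Finset.sum_congr rfl fun a _ => ?_
    rw [variance_const_mul, mul_comm]; rfl
  have := meas_ge_le_variance_div_sq hS hθ
  rwa [hE, hV] at this

lemma gauss_neg_half : ∫⁻ x : ℝ, ENNReal.ofReal (|x| ^ (-(1/2:ℝ))) ∂(gaussianReal 0 1) < ∞ := by
  have hmeas : Measurable fun x : ℝ => ENNReal.ofReal (|x| ^ (-(1/2:ℝ))) := by fun_prop
  have h1 : ∀ x : ℝ, ENNReal.ofReal (|x| ^ (-(1/2:ℝ))) ≤
      (Set.Ioo (-1:ℝ) 1).indicator (fun x => ENNReal.ofReal (|x| ^ (-(1/2:ℝ)))) x + 1 := by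
    intro x
    by_cases hx : x ∈ Set.Ioo (-1:ℝ) 1
    · rw [Set.indicator_of_mem hx]; exact le_self_add
    · rw [Set.indicator_of_notMem hx, zero_add, ← ENNReal.ofReal_one]
      apply ENNReal.ofReal_le_ofReal
      apply Real.rpow_le_one_of_one_le_of_nonpos _ (by norm_num)
      by_contra h
      push Not at h
      exact hx (abs_lt.1 h)
  refine lt_of_le_of_lt (lintegral_mono h1) ?_
  rw [lintegral_add_right _ measurable_const, lintegral_indicator measurableSet_Ioo]
  simp only [lintegral_const, measure_univ, mul_one]
  refine ENNReal.add_lt_top.2 ⟨?_, by simp⟩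
  refine lt_of_le_of_lt (lintegral_mono' (Measure.restrict_mono subset_rfl gauss_le_volume) le_rfl) ?_
  have hi : IntegrableOn (fun x : ℝ => |x| ^ (-(1/2:ℝ))) (Set.Ioo (-1:ℝ) 1) := by
    have := (intervalIntegral.integrableOn_Ioo_rpow_iff (s := -(1/2:ℝ)) (t := 1) one_pos).2 (by norm_num)
    have hp : IntegrableOn (fun x : ℝ => |x| ^ (-(1/2:ℝ))) (Set.Ioo (0:ℝ) 1) := by
      refine this.congr_fun (fun x hx => ?_) measurableSet_Ioo
      simp only [abs_of_pos hx.1]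
    have hn : IntegrableOn (fun x : ℝ => |x| ^ (-(1/2:ℝ))) (Set.Ioo (-1:ℝ) 0) := by
      have := hp.comp_neg
      simpa using this
    have : Set.Ioo (-1:ℝ) 1 ⊆ (Set.Ioo (-1:ℝ) 0 ∪ {0}) ∪ Set.Ioo (0:ℝ) 1 := by
      intro x hx
      rcases lt_trichotomy x 0 with h | h | h
      · left; left; exact ⟨hx.1, h⟩
      · left; right; exact h
      · right; exact ⟨h, hx.2⟩
    refine IntegrableOn.mono_set ((hn.union ?_).union hp) this
    exact integrableOn_singleton (hx := by simp)
  have := hi.2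
  rw [hasFiniteIntegral_iff_ofReal (ae_of_all _ fun x => by positivity)] at this
  exact this


/-- algebraic expansion of the determinant -/
lemma det_expand {q : ℕ} {κ : Type} [Fintype κ] [DecidableEq κ] (μ : κ → ℝ) (V : Fin q → κ → ℝ) :
    (Matrix.of fun i j => ∑ a, μ a * V i a * V j a : Matrix (Fin q) (Fin q) ℝ).det
      = ∑ r : Fin q → κ, ∑ σ : Equiv.Perm (Fin q), ((Equiv.Perm.sign σ : ℤ) : ℝ) *
          ∏ i, (μ (r i) * (V i (r i) * V i (r (σ i)))) := by
  have h1 : (Matrix.of fun i j => ∑ a, μ a * V i a * V j a : Matrix (Fin q) (Fin q) ℝ)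
      = fun i => ∑ a, (μ a * V i a) • (fun j => V j a) := by
    ext i j
    simp [Finset.sum_apply]
  have h2 : (Matrix.of fun i j => ∑ a, μ a * V i a * V j a : Matrix (Fin q) (Fin q) ℝ).det
      = (Matrix.detRowAlternating (R := ℝ) (n := Fin q)).toMultilinearMap
        (fun i => ∑ a, (μ a * V i a) • (fun j => V j a)) := by
    rw [h1]; rfl
  rw [h2, MultilinearMap.map_sum]
  refine Finset.sum_congr rfl fun r _ => ?_
  rw [MultilinearMap.map_smul_univ]
  have h3 : (Matrix.detRowAlternating (R := ℝ) (n := Fin q)).toMultilinearMap (fun i j => V j (r i))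
      = (Matrix.of fun i j => V j (r i) : Matrix (Fin q) (Fin q) ℝ).det := rfl
  rw [h3, Matrix.det_apply', smul_eq_mul, Finset.mul_sum]
  refine Finset.sum_congr rfl fun σ _ => ?_
  simp only [Matrix.of_apply]
  simp_rw [Finset.prod_mul_distrib]
  ring

lemma sum_sign_delta {q : ℕ} {κ : Type} [Fintype κ] [DecidableEq κ] (r : Fin q → κ) :
    ∑ σ : Equiv.Perm (Fin q), ((Equiv.Perm.sign σ : ℤ) : ℝ) * ∏ i, (if r i = r (σ i) then (1:ℝ) else 0)
      = if Function.Injective r then 1 else 0 := by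
  have h : ∑ σ : Equiv.Perm (Fin q), ((Equiv.Perm.sign σ : ℤ) : ℝ) * ∏ i, (if r i = r (σ i) then (1:ℝ) else 0)
     = (Matrix.of fun i j => if r j = r i then (1:ℝ) else 0 : Matrix (Fin q) (Fin q) ℝ).det := by
    rw [Matrix.det_apply']; rfl
  rw [h]
  split_ifs with hr
  · have : (Matrix.of fun i j => if r j = r i then (1:ℝ) else 0 : Matrix (Fin q) (Fin q) ℝ) = 1 := by
      ext i j
      simp only [Matrix.of_apply, Matrix.one_apply, hr.eq_iff, eq_comm]
    rw [this, Matrix.det_one]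
  · rw [Function.Injective] at hr
    push Not at hr
    obtain ⟨i, j, hij, hne⟩ := hr
    apply Matrix.det_zero_of_row_eq hne
    ext k
    simp [hij]

lemma sum_inj_le {q : ℕ} {κ : Type} [Fintype κ] [DecidableEq κ] (μ : κ → ℝ) (hμ : ∀ a, 0 ≤ μ a) :
    ∑ r : Fin q → κ, (if Function.Injective r then ∏ i, μ (r i) else 0) ≤ (q:ℝ) ^ q * ∏ a, (1 + μ a) := by
  classical
  rw [Finset.prod_one_add, ← Finset.sum_filter, Finset.mul_sum,
    ← Finset.sum_fiberwise_of_maps_to (s := Finset.univ.filter fun r : Fin q → κ => Function.Injective r)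
      (t := Finset.univ.powerset) (g := fun r => Finset.univ.image r) (by intro r _; simp)]
  refine Finset.sum_le_sum fun S _ => ?_
  set F := (Finset.univ.filter fun r : Fin q → κ => Function.Injective r).filter
    (fun r => Finset.univ.image r = S) with hF
  have h1 : ∀ r ∈ F, ∏ i, μ (r i) = ∏ a ∈ S, μ a := by
    intro r hr
    simp only [hF, Finset.mem_filter, Finset.mem_univ, true_and] at hr
    rw [← hr.2, Finset.prod_image (fun i _ j _ h => hr.1 h)]
  rw [Finset.sum_congr rfl h1, Finset.sum_const, nsmul_eq_mul]
  refine mul_le_mul_of_nonneg_right ?_ (Finset.prod_nonneg fun a _ => hμ a)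
  by_cases hne : F = ∅
  · rw [hne]; simp
  · obtain ⟨r0, hr0⟩ := Finset.nonempty_iff_ne_empty.2 hne
    have hS : S.card = q := by
      simp only [hF, Finset.mem_filter, Finset.mem_univ, true_and] at hr0
      rw [← hr0.2, Finset.card_image_of_injective _ hr0.1]; simp
    have hsub : F ⊆ Fintype.piFinset (fun _ : Fin q => S) := by
      intro r hr
      simp only [hF, Finset.mem_filter, Finset.mem_univ, true_and] at hr
      rw [Fintype.mem_piFinset]
      intro i
      rw [← hr.2]; exact Finset.mem_image_of_mem _ (Finset.mem_univ _)
    have := Finset.card_le_card hsub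
    rw [Fintype.card_piFinset] at this
    simp [hS] at this
    exact_mod_cast this

/-- augmented vector -/
noncomputable def vaug {q : ℕ} {ι : Type} (i : Fin q) (a : ι ⊕ Fin q) (y : ι → ℝ) : ℝ :=
  match a with
  | Sum.inl a => y a
  | Sum.inr j => if i = j then 1 else 0

lemma memLp_coord {ι : Type} [Fintype ι] (a : ι) : MemLp (fun y : ι → ℝ => y a) 2 (gaussPi ι) :=
  (memLp_id_gaussianReal' (μ := 0) (v := 1) 2 (by simp)).comp_measurePreserving
    (measurePreserving_eval (fun _ : ι => gaussianReal 0 1) a)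

lemma memLp_vaug {q : ℕ} {ι : Type} [Fintype ι] (i : Fin q) (a : ι ⊕ Fin q) :
    MemLp (vaug i a) 2 (gaussPi ι) := by
  rcases a with a | j
  · exact memLp_coord a
  · exact memLp_const _

lemma integral_coord {ι : Type} [Fintype ι] (a : ι) : ∫ y : ι → ℝ, y a ∂(gaussPi ι) = 0 := by
  have := integral_comp_eval (μ := fun _ : ι => gaussianReal 0 1) (i := a) (f := fun x : ℝ => x)
      (Continuous.aestronglyMeasurable (by fun_prop))
  unfold gaussPi
  rw [this]
  simp

lemma integral_coord_mul {ι : Type} [Fintype ι] [DecidableEq ι] (a b : ι) :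
    ∫ y : ι → ℝ, y a * y b ∂(gaussPi ι) = if a = b then 1 else 0 := by
  split_ifs with h
  · subst h
    have := integral_comp_eval (μ := fun _ : ι => gaussianReal 0 1) (i := a) (f := fun x : ℝ => x ^ 2)
      (Continuous.aestronglyMeasurable (by fun_prop))
    unfold gaussPi
    simp_rw [← sq]
    rw [this, gauss_sq]
  · have hi : IndepFun (fun y : ι → ℝ => y a) (fun y : ι → ℝ => y b) (gaussPi ι) :=
      (iIndepFun_pi (μ := fun _ : ι => gaussianReal 0 1) (X := fun _ (x : ℝ) => x)
        (fun i => measurable_id.aemeasurable)).indepFun h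
    have := hi.integral_mul_eq_mul_integral (memLp_coord a).1 (memLp_coord b).1
    have e : ∫ y : ι → ℝ, y a * y b ∂(gaussPi ι) = (∫ y : ι → ℝ, y a ∂(gaussPi ι)) * ∫ y : ι → ℝ, y b ∂(gaussPi ι) := this
    rw [e, integral_coord, zero_mul]

lemma integral_vaug {q : ℕ} {ι : Type} [Fintype ι] [DecidableEq ι] (i : Fin q) (a : ι ⊕ Fin q) :
    ∃ w : ℝ, 0 ≤ w ∧ w ≤ 1 ∧ ∀ b, ∫ y, vaug i a y * vaug i b y ∂(gaussPi ι) = w * if a = b then 1 else 0 := by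
  rcases a with a | j
  · refine ⟨1, zero_le_one, le_rfl, fun b => ?_⟩
    rcases b with b | k
    · simpa [vaug] using integral_coord_mul a b
    · simp only [vaug]
      rw [integral_mul_const, integral_coord]; simp
  · refine ⟨if i = j then 1 else 0, by split_ifs <;> simp, by split_ifs <;> simp, fun b => ?_⟩
    rcases b with b | k
    · simp only [vaug]
      rw [integral_const_mul, integral_coord]; simp
    · simp only [vaug]
      by_cases h1 : i = j <;> by_cases h2 : i = k <;> by_cases h3 : j = k <;> simp_all

noncomputable def Mdet {q : ℕ} {ι : Type} [Fintype ι] (s : ι → ℝ) (Y : Fin q → ι → ℝ) : Matrix (Fin q) (Fin q) ℝ :=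
  1 + Matrix.of fun i j => ∑ a, s a * Y i a * Y j a

lemma Mdet_eq {q : ℕ} {ι : Type} [Fintype ι] (s : ι → ℝ) (Y : Fin q → ι → ℝ) :
    Mdet s Y = Matrix.of fun i j => ∑ a, (Sum.elim s (fun _ => 1)) a * vaug i a (Y i) * vaug j a (Y j) := by
  ext i j
  simp only [Mdet, Matrix.add_apply, Matrix.one_apply, Matrix.of_apply, Fintype.sum_sum_type, Sum.elim_inl, Sum.elim_inr,
    vaug, one_mul]
  rw [add_comm]
  congr 1
  simp

lemma det_expect {q : ℕ} {ι : Type} [Fintype ι] [DecidableEq ι] (s : ι → ℝ) (hs : ∀ a, 0 ≤ s a) :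
    Integrable (fun Y : Fin q → ι → ℝ => (Mdet s Y).det) (Gam (Fin q) ι) ∧
    ∫ Y : Fin q → ι → ℝ, (Mdet s Y).det ∂(Gam (Fin q) ι) ≤ (q:ℝ) ^ q * 2 ^ q * ∏ a, (1 + s a) := by
  set μ : ι ⊕ Fin q → ℝ := Sum.elim s (fun _ => 1) with hμ
  have hμ0 : ∀ a, 0 ≤ μ a := by rintro (a | a) <;> simp [hμ, hs]
  simp_rw [Mdet_eq, ← hμ]
  have h1 : ∀ Y : Fin q → ι → ℝ,
      (Matrix.of fun i j => ∑ a, μ a * vaug i a (Y i) * vaug j a (Y j) : Matrix (Fin q) (Fin q) ℝ).det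
      = ∑ r : Fin q → ι ⊕ Fin q, ∑ σ : Equiv.Perm (Fin q), ((Equiv.Perm.sign σ : ℤ) : ℝ) *
          ∏ i, (fun y => μ (r i) * (vaug i (r i) y * vaug i (r (σ i)) y)) (Y i) :=
    fun Y => det_expand μ (fun i a => vaug i a (Y i))
  simp_rw [h1]
  have hIntg : ∀ (r : Fin q → ι ⊕ Fin q) (σ : Equiv.Perm (Fin q)),
      Integrable (fun Y : Fin q → ι → ℝ => ∏ i, (fun y => μ (r i) * (vaug i (r i) y * vaug i (r (σ i)) y)) (Y i)) (Gam (Fin q) ι) := by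
    intro r σ
    apply Integrable.fintype_prod (f := fun i => fun y => μ (r i) * (vaug i (r i) y * vaug i (r (σ i)) y))
    intro i
    exact ((memLp_vaug i (r i)).integrable_mul (memLp_vaug i (r (σ i)))).const_mul _
  refine ⟨integrable_finsetSum _ fun r _ => integrable_finsetSum _ fun σ _ => (hIntg r σ).const_mul _, ?_⟩
  rw [integral_finsetSum _ fun r _ => integrable_finsetSum _ fun σ _ => (hIntg r σ).const_mul _]
  choose w hw0 hw1 hw using fun (i : Fin q) (a : ι ⊕ Fin q) => integral_vaug i a
  have h2 : ∀ r : Fin q → ι ⊕ Fin q, ∫ Y, ∑ σ : Equiv.Perm (Fin q), ((Equiv.Perm.sign σ : ℤ) : ℝ) *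
          ∏ i, (fun y => μ (r i) * (vaug i (r i) y * vaug i (r (σ i)) y)) (Y i) ∂(Gam (Fin q) ι)
      = (∏ i, μ (r i) * w i (r i)) * if Function.Injective r then 1 else 0 := by
    intro r
    rw [integral_finsetSum _ fun σ _ => (hIntg r σ).const_mul _, ← sum_sign_delta, Finset.mul_sum]
    refine Finset.sum_congr rfl fun σ _ => ?_
    rw [integral_const_mul]
    unfold Gam
    rw [integral_fintype_prod_eq_prod (𝕜 := ℝ) (fun i => fun y => μ (r i) * (vaug i (r i) y * vaug i (r (σ i)) y))]
    simp_rw [integral_const_mul, hw, Finset.prod_mul_distrib]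
    ring
  simp_rw [h2]
  calc _ ≤ ∑ r : Fin q → ι ⊕ Fin q, (if Function.Injective r then ∏ i, μ (r i) else 0) := by
        refine Finset.sum_le_sum fun r _ => ?_
        split_ifs
        · rw [mul_one]
          refine Finset.prod_le_prod (fun i _ => mul_nonneg (hμ0 _) (hw0 _ _)) fun i _ => ?_
          exact mul_le_of_le_one_right (hμ0 _) (hw1 _ _)
        · simp
    _ ≤ (q:ℝ) ^ q * ∏ a, (1 + μ a) := sum_inj_le μ hμ0
    _ = _ := by
        rw [Fintype.prod_sum_type]
        simp [hμ]
        norm_num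
        ring


section
variable {E : Type} [NormedAddCommGroup E] [InnerProductSpace ℝ E]

lemma inner_comb {ι : Type} [Fintype ι] (b : ι → E) (x y : ι → ℝ) :
    inner ℝ (∑ a, x a • b a) (∑ a, y a • b a) = dotProduct x ((Matrix.gram ℝ b).mulVec y) := by
  have := Matrix.star_dotProduct_gram_mulVec (𝕜 := ℝ) b x y
  simpa using this.symm

lemma dot_orth {ι : Type} [Fintype ι] [DecidableEq ι] (O Q : Matrix ι ι ℝ) (lam : ι → ℝ)
    (h : O.transpose * Q * O = Matrix.diagonal lam) (x y : ι → ℝ) :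
    dotProduct (O.mulVec x) (Q.mulVec (O.mulVec y)) = ∑ a, lam a * x a * y a := by
  have e : dotProduct (O.mulVec x) (Q.mulVec (O.mulVec y)) = dotProduct x ((O.transpose * Q * O).mulVec y) := by
    rw [← Matrix.mulVec_mulVec, ← Matrix.mulVec_mulVec, Matrix.dotProduct_mulVec x, Matrix.vecMul_transpose]
  rw [e, h]
  simp only [dotProduct, Matrix.mulVec_diagonal]
  refine Finset.sum_congr rfl fun a _ => by ring

lemma quad_int {κ : Type} [Fintype κ] [DecidableEq κ] (K : Matrix κ κ ℝ) (hK : K.PosSemidef) :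
    ∫⁻ u, gx (dotProduct u (K.mulVec u)) ∂(gaussPi κ) = ENNReal.ofReal ((√(1 + K).det)⁻¹) := by
  obtain ⟨O, lam, h1, h2, h3, h4⟩ := spec_lemma K hK
  have hp := gaussPi_orth O h1
  have hm : Measurable fun u : κ → ℝ => gx (dotProduct u (K.mulVec u)) := by
    apply gx_measurable.comp
    apply Continuous.measurable
    unfold dotProduct
    have : Continuous fun u : κ → ℝ => K.mulVec u := Continuous.matrix_mulVec continuous_const continuous_id
    fun_prop
  rw [← hp.lintegral_comp hm]
  simp_rw [dot_orth O K lam h4]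
  have : ∀ x : κ → ℝ, ∑ a, lam a * x a * x a = ∑ a, lam a * x a ^ 2 := fun x =>
    Finset.sum_congr rfl fun a _ => by ring
  simp_rw [this]
  rw [gaussPi_exp lam h3]
  congr 3
  have e : O.transpose * (1 + K) * O = Matrix.diagonal fun a => 1 + lam a := by
    rw [mul_add, add_mul, mul_one, h2, h4, ← Matrix.diagonal_one, Matrix.diagonal_add]
  have e2 : (1 + K).det = (O.transpose * (1 + K) * O).det := by
    rw [Matrix.det_mul, Matrix.det_mul, mul_comm, ← mul_assoc, ← Matrix.det_mul, h1, Matrix.det_one, one_mul]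
  rw [e2, e, Matrix.det_diagonal]

noncomputable def NB (q : ℕ) : ℝ := (q:ℝ) ^ q * 2 ^ q

lemma NB_pos (q : ℕ) (hq : 0 < q) : 0 < NB q := by unfold NB; positivity

lemma partB (q : ℕ) (hq : 0 < q) {ι : Type} [Fintype ι] [DecidableEq ι] (b : ι → E) (G : Set (Fin q → ι → ℝ))
    (hG : MeasurableSet G) (hGp : Gam (Fin q) ι Gᶜ ≤ 1 / 2) :
    ∫⁻ x, gx (‖∑ a, x a • b a‖ ^ 2) ∂(gaussPi ι) ≤
      (4 * ENNReal.ofReal (√(4 * NB q))) *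
      ∫⁻ Y in G, (∫⁻ u, gx (‖∑ a, (∑ i, u i • Y i) a • b a‖ ^ 2) ∂(gaussPi (Fin q))) ∂(Gam (Fin q) ι) := by
  obtain ⟨O, lam, h1, h2, h3, h4⟩ := spec_lemma _ (Matrix.posSemidef_gram ℝ b)
  have hp := gaussPi_orth O h1
  have hnorm : ∀ x : ι → ℝ, ‖∑ a, x a • b a‖ ^ 2 = dotProduct x ((Matrix.gram ℝ b).mulVec x) := fun x => by
    rw [← inner_comb, real_inner_self_eq_norm_sq]
  have hcont : Continuous fun x : ι → ℝ => ‖∑ a, x a • b a‖ ^ 2 := by fun_prop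
  -- left side
  have hL : ∫⁻ x, gx (‖∑ a, x a • b a‖ ^ 2) ∂(gaussPi ι) = ENNReal.ofReal ((√(∏ a, (1 + lam a)))⁻¹) := by
    rw [← hp.lintegral_comp (f := fun x : ι → ℝ => gx (‖∑ a, x a • b a‖ ^ 2)) (gx_measurable.comp hcont.measurable)]
    simp_rw [hnorm, dot_orth O _ lam h4]
    have : ∀ x : ι → ℝ, ∑ a, lam a * x a * x a = ∑ a, lam a * x a ^ 2 := fun x =>
      Finset.sum_congr rfl fun a _ => by ring
    simp_rw [this]
    rw [gaussPi_exp lam h3]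
  set Pi1 := ∏ a, (1 + lam a) with hPi
  have hPi1 : 0 < Pi1 := Finset.prod_pos fun a _ => by have := h3 a; linarith
  -- inner integral
  set K : (Fin q → ι → ℝ) → Matrix (Fin q) (Fin q) ℝ := fun Y => Matrix.gram ℝ fun i => ∑ a, Y i a • b a with hK
  have hJ : ∀ Y : Fin q → ι → ℝ, ∫⁻ u, gx (‖∑ a, (∑ i, u i • Y i) a • b a‖ ^ 2) ∂(gaussPi (Fin q))
      = ENNReal.ofReal ((√(1 + K Y).det)⁻¹) := by
    intro Y
    rw [← quad_int _ (Matrix.posSemidef_gram ℝ _)]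
    congr 1
    ext u
    rw [← inner_comb, real_inner_self_eq_norm_sq]
    congr 3
    simp_rw [Finset.smul_sum, Finset.sum_apply, Finset.sum_smul]
    rw [Finset.sum_comm]
    simp [smul_smul]
  simp_rw [hJ]
  have hKc : Continuous fun Y : Fin q → ι → ℝ => (1 + K Y).det := by
    apply Continuous.matrix_det
    refine continuous_const.add ?_
    apply continuous_matrix
    intro i j
    simp only [hK, Matrix.gram_apply]
    fun_prop
  have hdet1 : ∀ Y, 0 < (1 + K Y).det := fun Y =>
    (Matrix.PosDef.one.add_posSemidef (Matrix.posSemidef_gram ℝ _)).det_pos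
  set D := 4 * NB q * Pi1 with hD
  have hDpos : 0 < D := by have := NB_pos q hq; positivity
  have hbad : Gam (Fin q) ι {Y | D ≤ (1 + K Y).det} ≤ 1 / 4 := by
    have hpO : MeasurePreserving (fun (Y : Fin q → ι → ℝ) i => O.mulVec (Y i)) (Gam (Fin q) ι) (Gam (Fin q) ι) :=
      measurePreserving_pi _ _ fun _ => hp
    have hKO : ∀ Y : Fin q → ι → ℝ, 1 + K (fun i => O.mulVec (Y i)) = Mdet lam Y := by
      intro Y
      unfold Mdet
      congr 1
      ext i j
      simp only [hK, Matrix.gram_apply, Matrix.of_apply]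
      rw [inner_comb, dot_orth O _ lam h4]
    rw [← hpO.measure_preimage (measurableSet_le measurable_const hKc.measurable).nullMeasurableSet]
    have e : (fun (Y : Fin q → ι → ℝ) i => O.mulVec (Y i)) ⁻¹' {Y | D ≤ (1 + K Y).det}
        = {Y | ENNReal.ofReal D ≤ ENNReal.ofReal (Mdet lam Y).det} := by
      ext Y
      simp only [Set.mem_preimage, Set.mem_ofPred_eq, hKO]
      rw [ENNReal.ofReal_le_ofReal_iff]
      rw [← hKO]; exact (hdet1 _).le
    rw [e]
    obtain ⟨hIntg, hle⟩ := det_expect (q := q) lam h3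
    have hmk := mul_meas_ge_le_lintegral₀ (μ := Gam (Fin q) ι) (f := fun Y => ENNReal.ofReal (Mdet lam Y).det)
      (hIntg.aestronglyMeasurable.aemeasurable.ennreal_ofReal) (ENNReal.ofReal D)
    rw [← ofReal_integral_eq_lintegral_ofReal hIntg (ae_of_all _ fun Y => by
      simp only [Pi.zero_apply]; rw [← hKO]; exact (hdet1 _).le)] at hmk
    have h5 : ENNReal.ofReal D * Gam (Fin q) ι {Y | ENNReal.ofReal D ≤ ENNReal.ofReal (Mdet lam Y).det}
        ≤ ENNReal.ofReal D * (1/4) := by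
      refine hmk.trans ?_
      have : (1/4 : ℝ≥0∞) = ENNReal.ofReal (1/4) := by
        rw [ENNReal.ofReal_div_of_pos (by norm_num)]; simp
      rw [this, ← ENNReal.ofReal_mul hDpos.le]
      apply ENNReal.ofReal_le_ofReal
      refine hle.trans (le_of_eq ?_)
      rw [hD, NB]; ring
    exact (ENNReal.mul_le_mul_iff_right (by simpa using hDpos) ENNReal.ofReal_ne_top).1 h5
  set S := G ∩ {Y | (1 + K Y).det < D} with hS
  have hSm : MeasurableSet S := hG.inter (measurableSet_lt hKc.measurable measurable_const)
  have hSp : 1 / 4 ≤ Gam (Fin q) ι S := by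
    have hc : Gam (Fin q) ι Sᶜ ≤ 1/2 + 1/4 := by
      rw [hS, Set.compl_inter]
      refine (measure_union_le _ _).trans (add_le_add hGp ?_)
      refine le_trans (measure_mono ?_) hbad
      intro Y hY
      simpa using hY
    have hsum := prob_add_prob_compl (μ := Gam (Fin q) ι) hSm
    by_contra hlt
    push Not at hlt
    have h6 : (1/4 : ℝ≥0∞) + (1/2 + 1/4) = 1 := by
      have e4 : (1/4 : ℝ≥0∞) = ENNReal.ofReal (1/4) := by
        rw [ENNReal.ofReal_div_of_pos (by norm_num)]; simp
      have e2 : (1/2 : ℝ≥0∞) = ENNReal.ofReal (1/2) := by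
        rw [ENNReal.ofReal_div_of_pos (by norm_num)]; simp
      rw [e4, e2, ← ENNReal.ofReal_add (by norm_num) (by norm_num), ← ENNReal.ofReal_add (by norm_num) (by norm_num)]
      norm_num
    have h7 := ENNReal.add_lt_add_of_lt_of_le (measure_ne_top _ _) hlt hc
    rw [hsum, h6] at h7
    exact lt_irrefl _ h7
  rw [hL]
  calc ENNReal.ofReal ((√Pi1)⁻¹) = (4 * ENNReal.ofReal (√(4 * NB q))) * (ENNReal.ofReal ((√D)⁻¹) * (1/4)) := by
        have : (4 * ENNReal.ofReal (√(4 * NB q))) * (ENNReal.ofReal ((√D)⁻¹) * (1/4)) = 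
          (4 * (1/4)) * (ENNReal.ofReal (√(4 * NB q)) * ENNReal.ofReal ((√D)⁻¹)) := by ring
        rw [this, ← ENNReal.ofReal_mul (Real.sqrt_nonneg _), one_div, ENNReal.mul_inv_cancel (by simp) (by simp), one_mul]
        congr 1
        have hN := NB_pos q hq
        rw [hD, Real.sqrt_mul (by positivity : 0 ≤ 4 * NB q), mul_inv, ← mul_assoc, mul_inv_cancel₀ (by positivity), one_mul]
    _ ≤ (4 * ENNReal.ofReal (√(4 * NB q))) * ∫⁻ Y in S, ENNReal.ofReal ((√D)⁻¹) ∂(Gam (Fin q) ι) := by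
        gcongr
        rw [setLIntegral_const]
        gcongr
    _ ≤ (4 * ENNReal.ofReal (√(4 * NB q))) * ∫⁻ Y in S, ENNReal.ofReal ((√(1 + K Y).det)⁻¹) ∂(Gam (Fin q) ι) := by
        gcongr 1
        apply setLIntegral_mono' hSm
        intro Y hY
        apply ENNReal.ofReal_le_ofReal
        have := hdet1 Y
        exact inv_anti₀ (Real.sqrt_pos.2 this) (Real.sqrt_le_sqrt hY.2.le)
    _ ≤ _ := by
        gcongr 1
        exact lintegral_mono_set Set.inter_subset_left
end


lemma jensen_pow {Ω : Type} [MeasurableSpace Ω] (ν : Measure Ω) [IsProbabilityMeasure ν] (f : Ω → ℝ≥0∞)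
    (hf : Measurable f) (m : ℕ) (hm : 1 ≤ m) : (∫⁻ z, f z ∂ν) ^ m ≤ ∫⁻ z, f z ^ m ∂ν := by
  have h := eLpNorm'_le_eLpNorm'_of_exponent_le (f := f) (p := 1) (q := m) one_pos (by exact_mod_cast hm) ν
    hf.aestronglyMeasurable
  simp only [eLpNorm'_eq_lintegral_enorm, enorm_eq_self, ENNReal.rpow_one, ENNReal.rpow_natCast, div_one] at h
  have h2 : (∫⁻ z, f z ∂ν) ^ m ≤ ((∫⁻ z, f z ^ m ∂ν) ^ (1 / (m:ℝ))) ^ m := by gcongr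
  refine h2.trans (le_of_eq ?_)
  rw [← ENNReal.rpow_natCast, ← ENNReal.rpow_mul, one_div_mul_cancel (by positivity), ENNReal.rpow_one]

lemma sum_pow_le {κ : Type} [Fintype κ] (f : κ → ℝ≥0∞) (m : ℕ) (hm : 1 ≤ m) :
    (∑ i, f i) ^ m ≤ (Fintype.card κ : ℝ≥0∞) ^ m * ∑ i, f i ^ m := by
  rcases isEmpty_or_nonempty κ with h | h
  · simp; omega
  obtain ⟨i0, hi0⟩ := Finite.exists_max f
  calc (∑ i, f i) ^ m ≤ (∑ i : κ, f i0) ^ m := by gcongr with i; exact hi0 i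
    _ = (Fintype.card κ : ℝ≥0∞) ^ m * f i0 ^ m := by simp [mul_pow]
    _ ≤ _ := by
      gcongr
      exact Finset.single_le_sum (f := fun i => f i ^ m) (fun i _ => zero_le) (Finset.mem_univ i0)

section
variable {E : Type} [NormedAddCommGroup E] [InnerProductSpace ℝ E]

lemma dir_moment {ι : Type} [Fintype ι] (b : ι → E) (v : ι → ℝ) (hv : ∑ a, v a ^ 2 = 1) (m : ℕ) (hm : 1 ≤ m) :
    gm m * ‖∑ a, v a • b a‖ₑ ^ (2 * m) ≤ ∫⁻ x, ‖∑ a, x a • b a‖ₑ ^ (2 * m) ∂(gaussPi ι) := by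
  set e := ∑ a, v a • b a with he
  by_cases h0 : e = 0
  · rw [h0, enorm_zero, zero_pow (by omega), mul_zero]; exact zero_le
  have hp := proj_moment (fun a => inner ℝ (b a) e) m
  have hx : ∀ x : ι → ℝ, ∑ a, inner ℝ (b a) e * x a = inner ℝ (∑ a, x a • b a) e := by
    intro x
    rw [sum_inner]
    exact Finset.sum_congr rfl fun a _ => by rw [real_inner_smul_left]; ring
  simp_rw [hx] at hp
  have h1 : ‖e‖ ^ 4 ≤ ∑ a, (inner ℝ (b a) e) ^ 2 := by
    have := Finset.sum_mul_sq_le_sq_mul_sq Finset.univ v (fun a => inner ℝ (b a) e)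
    rw [hv, one_mul] at this
    refine le_trans (le_of_eq ?_) this
    have h3 := hx v
    rw [← he, real_inner_self_eq_norm_sq] at h3
    rw [show ∑ a, v a * inner ℝ (b a) e = ∑ a, inner ℝ (b a) e * v a from Finset.sum_congr rfl fun a _ => mul_comm _ _, h3]
    ring
  have hee : ‖e‖ₑ ^ 4 ≤ ENNReal.ofReal (∑ a, (inner ℝ (b a) e) ^ 2) := by
    rw [← ofReal_norm, ← ENNReal.ofReal_pow (norm_nonneg _)]
    exact ENNReal.ofReal_le_ofReal h1
  have h2 : (‖e‖ₑ ^ 4) ^ m * gm m ≤ (∫⁻ x, ‖∑ a, x a • b a‖ₑ ^ (2 * m) ∂(gaussPi ι)) * ‖e‖ₑ ^ (2*m) := by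
    calc _ ≤ (ENNReal.ofReal (∑ a, (inner ℝ (b a) e) ^ 2)) ^ m * gm m := by gcongr
      _ = _ := hp.symm
      _ ≤ ∫⁻ x, ‖∑ a, x a • b a‖ₑ ^ (2 * m) * ‖e‖ₑ ^ (2*m) ∂(gaussPi ι) := by
        apply lintegral_mono
        intro x
        dsimp only
        rw [← mul_pow]
        gcongr
        rw [← ofReal_norm, ← ofReal_norm, ← ofReal_norm, ← ENNReal.ofReal_mul (norm_nonneg _)]
        exact ENNReal.ofReal_le_ofReal (norm_inner_le_norm _ _)
      _ = _ := by
        rw [lintegral_mul_const]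
        exact (Continuous.measurable (by fun_prop))
  have h4 : (‖e‖ₑ ^ 4) ^ m * gm m = (gm m * ‖e‖ₑ ^ (2 * m)) * ‖e‖ₑ ^ (2*m) := by
    rw [← pow_mul, mul_assoc, ← pow_add, mul_comm]; congr 2; ring
  rw [h4] at h2
  refine (ENNReal.mul_le_mul_iff_left ?_ ?_).1 h2
  · exact pow_ne_zero _ (by simpa using h0)
  · exact ENNReal.pow_ne_top enorm_ne_top
end

lemma quad_good {ι : Type} [Fintype ι] [DecidableEq ι] (Q : Matrix ι ι ℝ) (hQ : Q.PosSemidef) (η c : ℝ) (hη : 0 ≤ η)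
    (hc : 0 < c) (h1 : ∀ v : ι → ℝ, ∑ a, v a ^ 2 = 1 → v ⬝ᵥ Q.mulVec v ≤ η * c)
    (h2 : ENNReal.ofReal c ≤ ∫⁻ x, ENNReal.ofReal (x ⬝ᵥ Q.mulVec x) ∂(gaussPi ι)) :
    ∃ tr : ℝ, c ≤ tr ∧ ∀ θ > 0, gaussPi ι {v | θ ≤ |v ⬝ᵥ Q.mulVec v - tr|} ≤ ENNReal.ofReal (V4 * (η * tr ^ 2) / θ ^ 2) := by
  obtain ⟨O, lam, o1, o2, o3, o4⟩ := spec_lemma Q hQ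
  have hp := gaussPi_orth O o1
  have hquad : ∀ x, (O.mulVec x) ⬝ᵥ Q.mulVec (O.mulVec x) = ∑ a, lam a * x a ^ 2 := by
    intro x
    rw [dot_orth O Q lam o4]
    exact Finset.sum_congr rfl fun a _ => by ring
  have hqc : Continuous fun x : ι → ℝ => x ⬝ᵥ Q.mulVec x := by
    simp only [dotProduct, Matrix.mulVec]; fun_prop
  have hl : ∀ a, lam a ≤ η * c := by
    intro a
    have := h1 (O.mulVec (Pi.single a 1)) (by
      have e1 : ∑ i, (O.mulVec (Pi.single a 1)) i ^ 2 = (O.mulVec (Pi.single a 1)) ⬝ᵥ (1 : Matrix ι ι ℝ).mulVec (O.mulVec (Pi.single a 1)) := by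
        rw [Matrix.one_mulVec]; exact Finset.sum_congr rfl fun a _ => by ring
      rw [e1, dot_orth O 1 (fun _ => 1) (by rw [Matrix.mul_one, o2]; simp)]
      simp [Pi.single_apply])
    rw [hquad] at this
    simpa [Pi.single_apply] using this
  have htr : ∫⁻ x, ENNReal.ofReal (x ⬝ᵥ Q.mulVec x) ∂(gaussPi ι) = ENNReal.ofReal (∑ a, lam a) := by
    rw [← hp.lintegral_comp (f := fun x : ι → ℝ => ENNReal.ofReal (x ⬝ᵥ Q.mulVec x)) hqc.measurable.ennreal_ofReal]
    simp_rw [hquad]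
    have hi : ∀ a, Integrable (fun x : ι → ℝ => lam a * x a ^ 2) (gaussPi ι) := fun a =>
      ((memLp_coord a).integrable_sq).const_mul _
    rw [← ofReal_integral_eq_lintegral_ofReal (integrable_finsetSum _ fun a _ => hi a)
      (ae_of_all _ fun x => Finset.sum_nonneg fun a _ => mul_nonneg (o3 a) (sq_nonneg _))]
    rw [integral_finsetSum _ fun a _ => hi a]
    congr 1
    refine Finset.sum_congr rfl fun a _ => ?_
    rw [integral_const_mul]
    have := integral_coord_mul a a
    simp only [if_true] at this
    simp_rw [pow_two]
    rw [this, mul_one]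
  refine ⟨∑ a, lam a, ?_, ?_⟩
  · rw [htr] at h2
    by_contra hlt
    push Not at hlt
    have := (ENNReal.ofReal_lt_ofReal_iff hc).2 hlt
    exact absurd h2 (not_le.2 this)
  · intro θ hθ
    have hct : c ≤ ∑ a, lam a := by
      rw [htr] at h2
      by_contra hlt
      push Not at hlt
      have := (ENNReal.ofReal_lt_ofReal_iff hc).2 hlt
      exact absurd h2 (not_le.2 this)
    rw [← hp.measure_preimage (measurableSet_le measurable_const (by fun_prop)).nullMeasurableSet]
    have e : (O.mulVec ·) ⁻¹' {v | θ ≤ |v ⬝ᵥ Q.mulVec v - ∑ a, lam a|} = {x | θ ≤ |∑ a, lam a * x a ^ 2 - ∑ a, lam a|} := by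
      ext x
      simp only [Set.mem_preimage, Set.mem_ofPred_eq, hquad]
    rw [e]
    refine (cheb lam hθ).trans (ENNReal.ofReal_le_ofReal ?_)
    have hs : ∑ a, lam a ^ 2 ≤ η * (∑ a, lam a) ^ 2 := by
      calc ∑ a, lam a ^ 2 ≤ ∑ a, (η * c) * lam a := Finset.sum_le_sum fun a _ => by
            nlinarith [hl a, o3 a]
        _ = η * c * ∑ a, lam a := by rw [Finset.mul_sum]
        _ ≤ η * (∑ a, lam a) ^ 2 := by
          rw [pow_two, ← mul_assoc]
          have : 0 ≤ ∑ a, lam a := hc.le.trans hct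
          gcongr
    have := V4_nonneg
    gcongr

lemma quad_polar {ι : Type} [Fintype ι] (Q : Matrix ι ι ℝ) (hQ : Q.transpose = Q) (x y : ι → ℝ) :
    x ⬝ᵥ Q.mulVec y = ((√2)⁻¹ • (x + y)) ⬝ᵥ Q.mulVec ((√2)⁻¹ • (x + y)) - (x ⬝ᵥ Q.mulVec x) / 2 - (y ⬝ᵥ Q.mulVec y) / 2 := by
  have hs : y ⬝ᵥ Q.mulVec x = x ⬝ᵥ Q.mulVec y := by
    rw [Matrix.dotProduct_mulVec, ← Matrix.mulVec_transpose, hQ, dotProduct_comm]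
  simp only [Matrix.mulVec_smul, Matrix.mulVec_add, dotProduct_smul, smul_dotProduct, add_dotProduct, dotProduct_add, smul_eq_mul]
  have h2 : (√2)⁻¹ * (√2)⁻¹ = (1/2 : ℝ) := by
    rw [← mul_inv, Real.mul_self_sqrt (by norm_num)]; norm_num
  rw [hs]
  linear_combination (-(x ⬝ᵥ Q.mulVec x + 2 * (x ⬝ᵥ Q.mulVec y) + y ⬝ᵥ Q.mulVec y)) * h2

/-- lower bound of a quadratic form on a near-orthonormal family -/
lemma quad_lower {ι : Type} [Fintype ι] (q : ℕ) (hq : 0 < q) (Q : Matrix ι ι ℝ) (hQ : Q.transpose = Q) (tr : ℝ)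
    (htr : 0 < tr)
    (Y : Fin q → ι → ℝ) (h1 : ∀ i, |Y i ⬝ᵥ Q.mulVec (Y i) - tr| ≤ tr / (4 * q))
    (h2 : ∀ i j, i ≠ j → |((√2)⁻¹ • (Y i + Y j)) ⬝ᵥ Q.mulVec ((√2)⁻¹ • (Y i + Y j)) - tr| ≤ tr / (4 * q))
    (u : Fin q → ℝ) (hu : ∑ i, u i ^ 2 = 1) :
    tr / 2 ≤ (∑ i, u i • Y i) ⬝ᵥ Q.mulVec (∑ i, u i • Y i) := by
  have hq' : (0:ℝ) < q := by exact_mod_cast hq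
  have hij : ∀ i j, |Y i ⬝ᵥ Q.mulVec (Y j) - if i = j then tr else 0| ≤ tr / (2 * q) := by
    intro i j
    have e : tr / (2 * q) = 2 * (tr / (4 * q)) := by field_simp; norm_num
    have hpos : 0 ≤ tr / (4 * q) := by positivity
    by_cases hh : i = j
    · subst hh
      rw [if_pos rfl, e]
      linarith [h1 i]
    · rw [if_neg hh, quad_polar Q hQ, e]
      have a1 := abs_le.1 (h1 i)
      have a2 := abs_le.1 (h1 j)
      have a3 := abs_le.1 (h2 i j hh)
      rw [abs_le]; constructor <;> linarith [a1.1, a1.2, a2.1, a2.2, a3.1, a3.2]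
  have hexp : (∑ i, u i • Y i) ⬝ᵥ Q.mulVec (∑ i, u i • Y i) = ∑ i, ∑ j, u i * u j * (Y i ⬝ᵥ Q.mulVec (Y j)) := by
    rw [Matrix.mulVec_sum, sum_dotProduct]
    refine Finset.sum_congr rfl fun i _ => ?_
    rw [dotProduct_sum]
    refine Finset.sum_congr rfl fun j _ => ?_
    rw [Matrix.mulVec_smul, dotProduct_smul, smul_dotProduct, smul_eq_mul, smul_eq_mul]; ring
  have htr' : tr = ∑ i, ∑ j, u i * u j * (if i = j then tr else 0) := by
    simp only [mul_ite, mul_zero, Finset.sum_ite_eq, Finset.mem_univ, if_true]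
    rw [← Finset.sum_mul]
    simp_rw [← pow_two]
    rw [hu, one_mul]
  have hdiff : |(∑ i, u i • Y i) ⬝ᵥ Q.mulVec (∑ i, u i • Y i) - tr| ≤ tr / 2 := by
    rw [hexp]
    nth_rw 1 [htr']
    rw [← Finset.sum_sub_distrib]
    simp_rw [← Finset.sum_sub_distrib, ← mul_sub]
    calc _ ≤ ∑ i, ∑ j, |u i| * |u j| * (tr / (2 * q)) := by
          refine (Finset.abs_sum_le_sum_abs _ _).trans (Finset.sum_le_sum fun i _ => ?_)
          refine (Finset.abs_sum_le_sum_abs _ _).trans (Finset.sum_le_sum fun j _ => ?_)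
          rw [abs_mul, abs_mul]
          gcongr
          exact hij i j
      _ = (∑ i, |u i|) ^ 2 * (tr / (2 * q)) := by
          rw [pow_two, Finset.sum_mul_sum, Finset.sum_mul]
          simp_rw [Finset.sum_mul]
      _ ≤ q * (tr / (2 * q)) := by
          gcongr
          have := sq_sum_le_card_mul_sum_sq (s := (Finset.univ : Finset (Fin q))) (f := fun i => |u i|)
          simpa [sq_abs, hu] using this
      _ = tr / 2 := by field_simp
  have := (abs_le.1 hdiff).1
  linarith


section
variable {E : Type} [NormedAddCommGroup E] [InnerProductSpace ℝ E] [MeasurableSpace E] [BorelSpace E]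
  [SecondCountableTopology E] {Ω : Type} [MeasurableSpace Ω]

lemma gramQ {ι : Type} [Fintype ι] (ν : Measure Ω) [IsProbabilityMeasure ν] (w : ι → Ω → E)
    (hw : ∀ a, MemLp (w a) 2 ν) : ∃ Q : Matrix ι ι ℝ, Q.PosSemidef ∧ Q.transpose = Q ∧
      ∀ v : ι → ℝ, ENNReal.ofReal (v ⬝ᵥ Q.mulVec v) = ∫⁻ z, ‖∑ a, v a • w a z‖ₑ ^ 2 ∂ν := by
  have hIntg : ∀ a b, Integrable (fun z => inner ℝ (w a z) (w b z)) ν := by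
    intro a b
    refine ((hw a).norm.integrable_mul (hw b).norm).mono' ?_ (ae_of_all _ fun z => norm_inner_le_norm _ _)
    exact (hw a).1.inner (hw b).1
  have hint2 : ∀ v : ι → ℝ, Integrable (fun z => ‖∑ a, v a • w a z‖ ^ 2) ν := by
    intro v
    exact (memLp_finsetSum _ fun a _ => (hw a).const_smul (v a)).norm.integrable_sq
  set Q : Matrix ι ι ℝ := Matrix.of fun a b => ∫ z, inner ℝ (w a z) (w b z) ∂ν with hQ
  have hq : ∀ v : ι → ℝ, v ⬝ᵥ Q.mulVec v = ∫ z, ‖∑ a, v a • w a z‖ ^ 2 ∂ν := by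
    intro v
    have e : ∀ z, ‖∑ a, v a • w a z‖ ^ 2 = ∑ a, ∑ b, v a * (v b * inner ℝ (w a z) (w b z)) := by
      intro z
      rw [← real_inner_self_eq_norm_sq, sum_inner]
      refine Finset.sum_congr rfl fun a _ => ?_
      rw [inner_sum]
      refine Finset.sum_congr rfl fun b _ => ?_
      rw [real_inner_smul_left, real_inner_smul_right]
    simp_rw [e]
    rw [integral_finsetSum _ fun a _ => integrable_finsetSum _ fun b _ => ((hIntg a b).const_mul _).const_mul _]
    refine Finset.sum_congr rfl fun a _ => ?_
    rw [integral_finsetSum _ fun b _ => ((hIntg a b).const_mul _).const_mul _, Matrix.mulVec, dotProduct, Finset.mul_sum]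
    refine Finset.sum_congr rfl fun b _ => ?_
    rw [integral_const_mul, integral_const_mul, hQ, Matrix.of_apply]; ring
  have ht : Q.transpose = Q := by
    ext a b
    simp only [hQ, Matrix.transpose_apply, Matrix.of_apply]
    simp_rw [real_inner_comm]
  refine ⟨Q, ?_, ht, ?_⟩
  · apply Matrix.PosSemidef.of_dotProduct_mulVec_nonneg
    · rw [Matrix.IsHermitian, Matrix.conjTranspose_eq_transpose_of_trivial]; exact ht
    · intro v
      rw [star_trivial, hq]
      exact integral_nonneg fun z => by positivity
  · intro v
    rw [hq, ofReal_integral_eq_lintegral_ofReal (hint2 v) (ae_of_all _ fun z => by positivity)]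
    refine lintegral_congr fun z => ?_
    rw [ENNReal.ofReal_pow (norm_nonneg _), ofReal_norm]

lemma meas_S {ι : Type} [Fintype ι] (w : ι → Ω → E) (hw : ∀ a, Measurable (w a)) :
    Measurable fun p : (ι → ℝ) × Ω => ∑ a, p.1 a • w a p.2 := by
  refine Finset.measurable_fun_sum _ fun a _ => ?_
  exact ((measurable_pi_apply a).comp measurable_fst).smul ((hw a).comp measurable_snd)

/-- good sets -/
lemma good_set (q : ℕ) (hq : 0 < q) (c L : ℝ) (hc : 0 < c) (hL : 0 < L) : ∃ m0 : ℕ, 1 ≤ m0 ∧ ∀ m ≥ m0,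
    ∀ {E : Type} [NormedAddCommGroup E] [InnerProductSpace ℝ E] [MeasurableSpace E] [BorelSpace E]
    [SecondCountableTopology E] {Ω : Type} [MeasurableSpace Ω] {ι : Type} [Fintype ι] [DecidableEq ι] (ν : Measure Ω) [IsProbabilityMeasure ν]
    (w : ι → Ω → E) (_ : ∀ a, Measurable (w a))
    (_ : ENNReal.ofReal c ≤ ∫⁻ x, ∫⁻ z, ‖∑ a, x a • w a z‖ₑ ^ 2 ∂ν ∂(gaussPi ι))
    (_ : ∫⁻ x, ∫⁻ z, ‖∑ a, x a • w a z‖ₑ ^ (2 * m) ∂ν ∂(gaussPi ι) ≤ ENNReal.ofReal L ^ m),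
    ∃ G : Set (Fin q → ι → ℝ), MeasurableSet G ∧ Gam (Fin q) ι Gᶜ ≤ 1 / 2 ∧ ∀ Y ∈ G, ∀ u : Fin q → ℝ, ∑ i, u i ^ 2 = 1 →
      ENNReal.ofReal (c / 2) ≤ ∫⁻ z, ‖∑ a, (∑ i, u i • Y i) a • w a z‖ₑ ^ 2 ∂ν ∧
      ∫⁻ z, ‖∑ a, (∑ i, u i • Y i) a • w a z‖ₑ ^ (2 * m) ∂ν ≤ ENNReal.ofReal (8 * q ^ 3 * L) ^ m := by
  have hq' : (1:ℝ) ≤ q := by exact_mod_cast hq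
  have hV := V4_nonneg
  set η : ℝ := 1 / (128 * q ^ 4 * (V4 + 1)) with hη
  have hη0 : 0 < η := by positivity
  set K : ℝ := max 1 (L / (η * c)) with hK
  have hK1 : 1 ≤ K := le_max_left _ _
  have hKp : 0 < K := by linarith
  obtain ⟨m0, hm0⟩ := gm_large K.toNNReal
  refine ⟨max m0 1, le_max_right _ _, ?_⟩
  intro m hm E _ _ _ _ _ Ω _ ι _ _ ν _ w hw h1 h2
  have hm1 : 1 ≤ m := le_trans (le_max_right _ _) hm
  have hgm : ENNReal.ofReal K ^ m ≤ gm m := hm0 m (le_trans (le_max_left _ _) hm)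
  have hS := meas_S w hw
  have hSz : ∀ v : ι → ℝ, Measurable fun z => ∑ a, v a • w a z := fun v => hS.comp (measurable_const.prodMk measurable_id)
  -- unit vectors
  have hunit : ∀ v : ι → ℝ, ∑ a, v a ^ 2 = 1 → ∫⁻ z, ‖∑ a, v a • w a z‖ₑ ^ 2 ∂ν ≤ ENNReal.ofReal (η * c) := by
    intro v hv
    have a1 : gm m * ∫⁻ z, ‖∑ a, v a • w a z‖ₑ ^ (2 * m) ∂ν ≤ ENNReal.ofReal L ^ m := by
      refine le_trans ?_ h2
      rw [lintegral_lintegral_swap (by exact (hS.enorm.pow_const _).aemeasurable)]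
      rw [← lintegral_const_mul _ ((hSz v).enorm.pow_const _)]
      exact lintegral_mono fun z => dir_moment (fun a => w a z) v hv m hm1
    have a2 : (∫⁻ z, ‖∑ a, v a • w a z‖ₑ ^ 2 ∂ν) ^ m ≤ ∫⁻ z, ‖∑ a, v a • w a z‖ₑ ^ (2 * m) ∂ν := by
      simp_rw [pow_mul]
      exact jensen_pow ν _ ((hSz v).enorm.pow_const _) m hm1
    have a3 : (ENNReal.ofReal K * ∫⁻ z, ‖∑ a, v a • w a z‖ₑ ^ 2 ∂ν) ^ m ≤ ENNReal.ofReal L ^ m := by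
      rw [mul_pow]
      exact (mul_le_mul' hgm a2).trans a1
    have a4 := (ENNReal.pow_le_pow_left_iff (by omega)).mp a3
    have a5 : ENNReal.ofReal L ≤ ENNReal.ofReal K * ENNReal.ofReal (η * c) := by
      rw [← ENNReal.ofReal_mul hKp.le]
      apply ENNReal.ofReal_le_ofReal
      rw [← div_le_iff₀ (by positivity)]
      exact le_max_right _ _
    exact (ENNReal.mul_le_mul_iff_right (by simpa using hKp) ENNReal.ofReal_ne_top).1 (a4.trans a5)
  have hmem : ∀ a, MemLp (w a) 2 ν := by
    intro a
    rw [memLp_two_iff_integrable_sq_norm (hw a).aestronglyMeasurable]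
    refine ⟨((hw a).norm.pow_const _).aestronglyMeasurable, ?_⟩
    rw [hasFiniteIntegral_iff_enorm]
    have := hunit (Pi.single a 1) (by simp [Pi.single_apply])
    simp only [Pi.single_apply, ite_smul, one_smul, zero_smul, Finset.sum_ite_eq', Finset.mem_univ, if_true] at this
    refine lt_of_le_of_lt ?_ (this.trans_lt ENNReal.ofReal_lt_top)
    refine lintegral_mono fun z => ?_
    rw [enorm_pow, enorm_norm]
  obtain ⟨Q, hQ1, hQt, hQ2⟩ := gramQ ν w hmem
  obtain ⟨tr, htr, hch⟩ := quad_good Q hQ1 η c hη0.le hc (by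
    intro v hv
    have := hunit v hv
    rw [← hQ2] at this
    exact (ENNReal.ofReal_le_ofReal_iff (by positivity)).1 this) (by simp_rw [hQ2]; exact h1)
  have htrp : 0 < tr := hc.trans_le htr
  have hqc : Continuous fun x : ι → ℝ => x ⬝ᵥ Q.mulVec x := by
    simp only [dotProduct, Matrix.mulVec]; fun_prop
  set θ := tr / (4 * q) with hθ
  have hθp : 0 < θ := by positivity
  set B : Set (ι → ℝ) := {v | θ ≤ |v ⬝ᵥ Q.mulVec v - tr|} with hB
  have hBm : MeasurableSet B := measurableSet_le measurable_const (by fun_prop)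
  have hBp : gaussPi ι B ≤ ENNReal.ofReal (1 / (8 * q ^ 2)) := by
    refine (hch θ hθp).trans (ENNReal.ofReal_le_ofReal ?_)
    have : V4 * (η * tr ^ 2) / θ ^ 2 = (V4 / (V4 + 1)) * (1 / (8 * q ^ 2)) := by
      rw [hη, hθ]; field_simp; ring
    rw [this]
    apply mul_le_of_le_one_left (by positivity)
    rw [div_le_one (by positivity)]; linarith
  set F : Set (ι → ℝ) := {v | ENNReal.ofReal (8 * q * L ^ m) ≤ ∫⁻ z, ‖∑ a, v a • w a z‖ₑ ^ (2 * m) ∂ν} with hF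
  have hMm : Measurable fun v : ι → ℝ => ∫⁻ z, ‖∑ a, v a • w a z‖ₑ ^ (2 * m) ∂ν :=
    Measurable.lintegral_prod_right' (f := fun p : (ι → ℝ) × Ω => ‖∑ a, p.1 a • w a p.2‖ₑ ^ (2 * m)) (hS.enorm.pow_const _)
  have hFm : MeasurableSet F := measurableSet_le measurable_const hMm
  have hFp : gaussPi ι F ≤ ENNReal.ofReal (1 / (8 * q)) := by
    have := (mul_meas_ge_le_lintegral₀ (μ := gaussPi ι) hMm.aemeasurable (ENNReal.ofReal (8 * q * L ^ m))).trans h2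
    have h3 : ENNReal.ofReal L ^ m = ENNReal.ofReal (8 * q * L ^ m) * ENNReal.ofReal (1 / (8 * q)) := by
      rw [← ENNReal.ofReal_mul (by positivity), ← ENNReal.ofReal_pow hL.le]
      congr 1; field_simp
    rw [h3] at this
    have hne : (0:ℝ) < 8 * q * L ^ m := by positivity
    exact (ENNReal.mul_le_mul_iff_right (ENNReal.ofReal_pos.2 hne).ne' ENNReal.ofReal_ne_top).1 this
  -- evaluation maps
  let ev : Fin q → (Fin q → ι → ℝ) → (ι → ℝ) := fun i Y => Y i
  let cv : Fin q → Fin q → (Fin q → ι → ℝ) → (ι → ℝ) := fun i j Y => (√2)⁻¹ • (Y i + Y j)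
  have hev : ∀ i, MeasurePreserving (ev i) (Gam (Fin q) ι) (gaussPi ι) := fun i =>
    measurePreserving_eval (fun _ : Fin q => gaussPi ι) i
  have hcv : ∀ i j, i ≠ j → MeasurePreserving (cv i j) (Gam (Fin q) ι) (gaussPi ι) := by
    intro i j hij
    have hs2 : (√2)⁻¹ ^ 2 = (1/2 : ℝ) := by rw [inv_pow, Real.sq_sqrt (by norm_num)]; norm_num
    have := Gam_comb (κ := Fin q) (ι := ι) (fun k => (√2)⁻¹ * ((if k = i then 1 else 0) + (if k = j then 1 else 0))) (by
      have e : ∀ k : Fin q, ((√2)⁻¹ * ((if k = i then 1 else 0) + (if k = j then 1 else 0))) ^ 2 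
          = (if k = i then (1/2:ℝ) else 0) + (if k = j then (1/2:ℝ) else 0) := by
        intro k
        rw [mul_pow, hs2]
        by_cases h1 : k = i
        · by_cases h2 : k = j
          · exact absurd (h1.symm.trans h2) hij
          · simp [h1, hij]
        · by_cases h2 : k = j <;> simp [h2, hij.symm, h1]
      simp_rw [e, Finset.sum_add_distrib]
      simp; norm_num)
    convert! this using 1
    ext Y a
    simp [cv, add_mul, mul_add, Finset.sum_add_distrib]
  set G : Set (Fin q → ι → ℝ) := (⋃ i, ev i ⁻¹' B ∪ ev i ⁻¹' F ∪ ⋃ j, ⋃ (_ : i ≠ j), cv i j ⁻¹' B)ᶜ with hG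
  have hGm : MeasurableSet G := by
    refine MeasurableSet.compl (MeasurableSet.iUnion fun i => ((hev i).measurable hBm |>.union ((hev i).measurable hFm)).union ?_)
    exact MeasurableSet.iUnion fun j => MeasurableSet.iUnion fun h => (hcv i j h).measurable hBm
  refine ⟨G, hGm, ?_, ?_⟩
  · rw [hG, compl_compl]
    have hi : ∀ i, Gam (Fin q) ι (ev i ⁻¹' B ∪ ev i ⁻¹' F ∪ ⋃ j, ⋃ (_ : i ≠ j), cv i j ⁻¹' B)
        ≤ ENNReal.ofReal (1 / (8 * q ^ 2) + 1 / (8 * q) + q * (1 / (8 * q ^ 2))) := by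
      intro i
      rw [ENNReal.ofReal_add (by positivity) (by positivity), ENNReal.ofReal_add (by positivity) (by positivity)]
      refine (measure_union_le _ _).trans (add_le_add ((measure_union_le _ _).trans (add_le_add ?_ ?_)) ?_)
      · rw [(hev i).measure_preimage hBm.nullMeasurableSet]; exact hBp
      · rw [(hev i).measure_preimage hFm.nullMeasurableSet]; exact hFp
      · refine (measure_iUnion_fintype_le _ _).trans ?_
        calc _ ≤ ∑ j : Fin q, ENNReal.ofReal (1 / (8 * q ^ 2)) := by
              refine Finset.sum_le_sum fun j _ => ?_
              by_cases h : i = j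
              · simp [h]
              · simp only [ne_eq, h, not_false_eq_true, Set.iUnion_true]
                rw [(hcv i j h).measure_preimage hBm.nullMeasurableSet]; exact hBp
          _ = _ := by
              rw [Finset.sum_const, Finset.card_univ, Fintype.card_fin, nsmul_eq_mul, ENNReal.ofReal_mul (by positivity),
                ENNReal.ofReal_natCast]
    refine (measure_iUnion_fintype_le _ _).trans ((Finset.sum_le_sum fun i _ => hi i).trans ?_)
    rw [Finset.sum_const, Finset.card_univ, Fintype.card_fin, nsmul_eq_mul, ← ENNReal.ofReal_natCast, ← ENNReal.ofReal_mul (by positivity)]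
    have e2 : (1/2 : ℝ≥0∞) = ENNReal.ofReal (1/2) := by
      rw [ENNReal.ofReal_div_of_pos (by norm_num)]; simp
    rw [e2]
    apply ENNReal.ofReal_le_ofReal
    have e3 : (q:ℝ) * (1 / (8 * q ^ 2) + 1 / (8 * q) + q * (1 / (8 * q ^ 2))) = (1 / q) / 8 + 1/8 + 1/8 := by
      field_simp
    rw [e3]
    have : (1:ℝ) / q ≤ 1 := by rw [div_le_one (by positivity)]; exact hq'
    linarith
  · intro Y hY u hu
    have hY' : ∀ i, Y i ∉ B ∧ Y i ∉ F ∧ ∀ j, i ≠ j → (√2)⁻¹ • (Y i + Y j) ∉ B := by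
      intro i
      simp only [hG, Set.mem_compl_iff, Set.mem_iUnion, not_exists, Set.mem_union, not_or, Set.mem_preimage] at hY
      exact ⟨(hY i).1.1, (hY i).1.2, fun j h => (hY i).2 j h⟩
    constructor
    · rw [← hQ2]
      apply ENNReal.ofReal_le_ofReal
      have := quad_lower q hq Q hQt tr htrp Y (fun i => by
          have := (hY' i).1
          simp only [hB, Set.mem_ofPred_eq, not_le] at this
          exact this.le) (fun i j hij => by
          have := (hY' i).2.2 j hij
          simp only [hB, Set.mem_ofPred_eq, not_le] at this
          exact this.le) u hu
      linarith
    · have hpt : ∀ z, ‖∑ a, (∑ i, u i • Y i) a • w a z‖ₑ ^ (2 * m) ≤ (q:ℝ≥0∞) ^ m * ∑ i, ‖∑ a, Y i a • w a z‖ₑ ^ (2 * m) := by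
        intro z
        have e1 : ∑ a, (∑ i, u i • Y i) a • w a z = ∑ i, u i • ∑ a, Y i a • w a z := by
          simp_rw [Finset.smul_sum, Finset.sum_apply, Finset.sum_smul]
          rw [Finset.sum_comm]
          simp [smul_smul]
        rw [e1]
        have e2 : ‖∑ i, u i • ∑ a, Y i a • w a z‖ ^ 2 ≤ ∑ i, ‖∑ a, Y i a • w a z‖ ^ 2 := by
          have b1 : ‖∑ i, u i • ∑ a, Y i a • w a z‖ ≤ ∑ i, |u i| * ‖∑ a, Y i a • w a z‖ := by
            refine (norm_sum_le _ _).trans (Finset.sum_le_sum fun i _ => ?_)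
            rw [norm_smul, Real.norm_eq_abs]
          have b2 := Finset.sum_mul_sq_le_sq_mul_sq Finset.univ (fun i => |u i|) (fun i => ‖∑ a, Y i a • w a z‖)
          simp only [sq_abs, hu, one_mul] at b2
          exact (pow_le_pow_left₀ (norm_nonneg _) b1 2).trans b2
        have e3 : ‖∑ i, u i • ∑ a, Y i a • w a z‖ₑ ^ 2 ≤ ∑ i, ‖∑ a, Y i a • w a z‖ₑ ^ 2 := by
          simp_rw [← ofReal_norm, ← ENNReal.ofReal_pow (norm_nonneg _)]
          rw [← ENNReal.ofReal_sum_of_nonneg fun i _ => by positivity]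
          exact ENNReal.ofReal_le_ofReal e2
        rw [pow_mul]
        refine (ENNReal.pow_le_pow_left e3).trans ?_
        have := sum_pow_le (fun i => ‖∑ a, Y i a • w a z‖ₑ ^ 2) m hm1
        simp_rw [← pow_mul, Fintype.card_fin] at this
        exact this
      refine (lintegral_mono hpt).trans ?_
      rw [lintegral_const_mul _ (Finset.measurable_fun_sum _ fun i _ => (hSz (Y i)).enorm.pow_const _),
        lintegral_finsetSum _ fun i _ => (hSz (Y i)).enorm.pow_const _]
      calc _ ≤ (q:ℝ≥0∞) ^ m * ∑ i : Fin q, ENNReal.ofReal (8 * q * L ^ m) := by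
            gcongr with i
            have := (hY' i).2.1
            simp only [hF, Set.mem_ofPred_eq, not_le] at this
            exact this.le
        _ = ENNReal.ofReal (q ^ m * (q * (8 * q * L ^ m))) := by
            rw [Finset.sum_const, Finset.card_univ, Fintype.card_fin, nsmul_eq_mul, ENNReal.ofReal_mul (p := (q:ℝ) ^ m) (by positivity),
              ENNReal.ofReal_mul (p := (q:ℝ)) (by positivity), ENNReal.ofReal_pow (by positivity), ENNReal.ofReal_natCast]
        _ ≤ _ := by
            rw [← ENNReal.ofReal_pow (by positivity)]
            apply ENNReal.ofReal_le_ofReal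
            have e4 : (8 * (q:ℝ) ^ 3 * L) ^ m = q ^ m * ((8 * q ^ 2) ^ m * L ^ m) := by
              rw [← mul_pow, ← mul_pow]; congr 1; ring
            rw [e4]
            have e5 : 8 * (q:ℝ) ^ 2 ≤ (8 * q ^ 2) ^ m := by
              apply le_self_pow₀ _ (by omega)
              nlinarith
            have e6 : (q:ℝ) * (8 * q * L ^ m) = 8 * q ^ 2 * L ^ m := by ring
            rw [e6]
            gcongr
end


lemma ae_ne_zero {κ : Type} [Fintype κ] : ∀ᵐ u ∂(gaussPi κ), ∀ i, u i ≠ 0 := by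
  rw [ae_all_iff]
  intro i
  have hp : MeasurePreserving (fun u : κ → ℝ => u i) (gaussPi κ) (gaussianReal 0 1) :=
    measurePreserving_eval (fun _ : κ => gaussianReal 0 1) i
  have : NullSingletonClass (gaussianReal 0 1) := nullSingletonClass_gaussianReal one_ne_zero
  rw [ae_iff]
  have h := hp.measure_preimage (measurableSet_singleton (0:ℝ)).nullMeasurableSet
  rw [measure_singleton] at h
  simpa [Set.preimage] using h

noncomputable def KA (A : ℕ) : ℝ≥0∞ := 4 * ENNReal.ofReal (√(4 * NB (2 * A))) *
  (∫⁻ x : ℝ, ENNReal.ofReal (|x| ^ (-(1/2:ℝ))) ∂(gaussianReal 0 1)) ^ (2 * A)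

lemma KA_lt_top (A : ℕ) : KA A < ∞ := by
  unfold KA
  exact ENNReal.mul_lt_top (ENNReal.mul_lt_top (by simp) ENNReal.ofReal_lt_top) (ENNReal.pow_lt_top gauss_neg_half)

lemma prod_half (A : ℕ) (u : Fin (2 * A) → ℝ) (hu : ∀ i, u i ≠ 0) (r : ℝ) (hr : 0 < r) (hle : ∀ i, |u i| ≤ r) :
    (r ^ A)⁻¹ ≤ ∏ i, |u i| ^ (-(1/2:ℝ)) := by
  have h1 : (r ^ A)⁻¹ = ∏ i : Fin (2 * A), r ^ (-(1/2:ℝ)) := by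
    rw [Finset.prod_const, Finset.card_univ, Fintype.card_fin, ← Real.rpow_natCast (r ^ _), ← Real.rpow_mul hr.le,
      ← Real.rpow_natCast, ← Real.rpow_neg hr.le]
    congr 1; push_cast; ring
  rw [h1]
  refine Finset.prod_le_prod (fun i _ => by positivity) fun i _ => ?_
  exact Real.rpow_le_rpow_of_nonpos (abs_pos.2 (hu i)) (hle i) (by norm_num)

lemma meas_three {E : Type} [NormedAddCommGroup E] [InnerProductSpace ℝ E] [MeasurableSpace E] [BorelSpace E]
    [SecondCountableTopology E] {Ω : Type} [MeasurableSpace Ω] {ι : Type} [Fintype ι] (q : ℕ)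
    (w : ι → Ω → E) (hw : ∀ a, Measurable (w a)) (t : ℝ) :
    Measurable fun p : (Ω × (Fin q → ι → ℝ)) × (Fin q → ℝ) => 
      gx (t ^ 2 * ‖∑ a, (∑ i, p.2 i • p.1.2 i) a • w a p.1.1‖ ^ 2) := by
  have h1 : ∀ a, Measurable fun p : (Ω × (Fin q → ι → ℝ)) × (Fin q → ℝ) => (∑ i, p.2 i • p.1.2 i) a := by
    intro a
    simp only [Finset.sum_apply, Pi.smul_apply, smul_eq_mul]
    fun_prop
  refine gx_measurable.comp (Measurable.const_mul (Measurable.pow_const (Measurable.norm ?_) 2) _)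
  refine Finset.measurable_fun_sum _ fun a _ => ?_
  exact (h1 a).smul ((hw a).comp (measurable_fst.comp measurable_fst))

lemma step (A : ℕ) (hA : 1 ≤ A) (c L : ℝ) (hc : 0 < c) (hL : 0 < L) : ∃ m0 : ℕ, 1 ≤ m0 ∧ ∀ m ≥ m0,
    ∀ {E : Type} [NormedAddCommGroup E] [InnerProductSpace ℝ E] [MeasurableSpace E] [BorelSpace E]
    [SecondCountableTopology E] {Ω : Type} [MeasurableSpace Ω] {ι : Type} [Fintype ι] [DecidableEq ι] (ν : Measure Ω) [IsProbabilityMeasure ν]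
    (w : ι → Ω → E) (_ : ∀ a, Measurable (w a))
    (_ : ENNReal.ofReal c ≤ ∫⁻ x, ∫⁻ z, ‖∑ a, x a • w a z‖ₑ ^ 2 ∂ν ∂(gaussPi ι))
    (_ : ∫⁻ x, ∫⁻ z, ‖∑ a, x a • w a z‖ₑ ^ (2 * m) ∂ν ∂(gaussPi ι) ≤ ENNReal.ofReal L ^ m) (C' : ℝ≥0∞)
    (_ : ∀ v : ι → ℝ, ENNReal.ofReal (c / 2) ≤ ∫⁻ z, ‖∑ a, v a • w a z‖ₑ ^ 2 ∂ν → 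
      ∫⁻ z, ‖∑ a, v a • w a z‖ₑ ^ (2 * m) ∂ν ≤ ENNReal.ofReal (8 * (2 * A : ℕ) ^ 3 * L) ^ m →
      ∀ s > (0:ℝ), ∫⁻ z, gx (s ^ 2 * ‖∑ a, v a • w a z‖ ^ 2) ∂ν ≤ C' * ENNReal.ofReal ((s ^ A)⁻¹)),
    ∀ t > (0:ℝ), ∫⁻ x, ∫⁻ z, gx (t ^ 2 * ‖∑ a, x a • w a z‖ ^ 2) ∂ν ∂(gaussPi ι) ≤ KA A * C' * ENNReal.ofReal ((t ^ A)⁻¹) := by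
  obtain ⟨m0, hm01, hm0⟩ := good_set (2 * A) (by omega) c L hc hL
  refine ⟨m0, hm01, ?_⟩
  intro m hm E _ _ _ _ _ Ω _ ι _ _ ν _ w hw h1 h2 C' IH t ht
  obtain ⟨G, hGm, hGp, hG⟩ := hm0 m hm ν w hw h1 h2
  have hS := meas_S w hw
  have hgS : Measurable fun p : (ι → ℝ) × Ω => gx (t ^ 2 * ‖∑ a, p.1 a • w a p.2‖ ^ 2) :=
    gx_measurable.comp ((hS.norm.pow_const 2).const_mul _)
  rw [lintegral_lintegral_swap (by exact hgS.aemeasurable)]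
  have hpB : ∀ z, ∫⁻ x, gx (t ^ 2 * ‖∑ a, x a • w a z‖ ^ 2) ∂(gaussPi ι) ≤ (4 * ENNReal.ofReal (√(4 * NB (2 * A)))) *
      ∫⁻ Y in G, (∫⁻ u, gx (t ^ 2 * ‖∑ a, (∑ i, u i • Y i) a • w a z‖ ^ 2) ∂gaussPi (Fin (2 * A))) ∂Gam (Fin (2 * A)) ι := by
    intro z
    have := partB (2 * A) (by omega) (fun a => t • w a z) G hGm hGp
    have e : ∀ x : ι → ℝ, ‖∑ a, x a • t • w a z‖ ^ 2 = t ^ 2 * ‖∑ a, x a • w a z‖ ^ 2 := by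
      intro x
      have : ∑ a, x a • t • w a z = t • ∑ a, x a • w a z := by
        rw [Finset.smul_sum]; exact Finset.sum_congr rfl fun a _ => smul_comm _ _ _
      rw [this, norm_smul, mul_pow, Real.norm_eq_abs, sq_abs]
    simp_rw [e] at this
    exact this
  refine (lintegral_mono hpB).trans ?_
  have hm3 := meas_three (2 * A) w hw t
  have hm2 := Measurable.lintegral_prod_right' (ν := gaussPi (Fin (2 * A))) hm3
  rw [lintegral_const_mul _ (Measurable.lintegral_prod_right' hm2)]
  rw [lintegral_lintegral_swap (by exact hm2.aemeasurable)]
  unfold KA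
  rw [mul_assoc (4 * ENNReal.ofReal _) _ C', mul_assoc (4 * ENNReal.ofReal _)]
  refine mul_le_mul' le_rfl ?_
  calc _ ≤ ∫⁻ Y in G, (∫⁻ x : ℝ, ENNReal.ofReal (|x| ^ (-(1/2:ℝ))) ∂(gaussianReal 0 1)) ^ (2 * A) * (C' * ENNReal.ofReal ((t ^ A)⁻¹))
          ∂Gam (Fin (2 * A)) ι := by
        refine setLIntegral_mono' hGm fun Y hY => ?_
        rw [lintegral_lintegral_swap]
        swap
        · refine Measurable.aemeasurable ?_
          exact hm3.comp (by fun_prop : Measurable fun p : Ω × (Fin (2 * A) → ℝ) => ((p.1, Y), p.2))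
        calc _ ≤ ∫⁻ u : Fin (2 * A) → ℝ, (∏ i, ENNReal.ofReal (|u i| ^ (-(1/2:ℝ)))) * (C' * ENNReal.ofReal ((t ^ A)⁻¹)) ∂(gaussPi (Fin (2 * A))) := by
              refine lintegral_mono_ae ?_
              filter_upwards [ae_ne_zero] with u hu
              set r := √(∑ i, u i ^ 2) with hr
              have hs : 0 < ∑ i, u i ^ 2 := by
                have i0 : Fin (2 * A) := ⟨0, by omega⟩
                refine Finset.sum_pos (fun i _ => by have := hu i; positivity) ⟨i0, Finset.mem_univ _⟩
              have hr0 : 0 < r := Real.sqrt_pos.2 hs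
              have hr2 : r ^ 2 = ∑ i, u i ^ 2 := Real.sq_sqrt hs.le
              have hunit : ∑ i, (r⁻¹ * u i) ^ 2 = 1 := by
                simp_rw [mul_pow]
                rw [← Finset.mul_sum, ← hr2]; field_simp
              obtain ⟨g1, g2⟩ := hG Y hY (fun i => r⁻¹ * u i) hunit
              have g3 := IH _ g1 g2 (t * r) (by positivity)
              have e1 : ∑ i, u i • Y i = r • ∑ i, (r⁻¹ * u i) • Y i := by
                rw [Finset.smul_sum]
                refine Finset.sum_congr rfl fun i _ => ?_
                rw [smul_smul]; congr 1; field_simp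
              have e2 : ∀ z, t ^ 2 * ‖∑ a, (∑ i, u i • Y i) a • w a z‖ ^ 2 = (t * r) ^ 2 * ‖∑ a, (∑ i, (r⁻¹ * u i) • Y i) a • w a z‖ ^ 2 := by
                intro z
                have e3 : (∑ a, (∑ i, u i • Y i) a • w a z : E) = r • ∑ a, (∑ i, (r⁻¹ * u i) • Y i) a • w a z := by
                  rw [e1]
                  generalize ∑ i, (r⁻¹ * u i) • Y i = y
                  rw [Finset.smul_sum]
                  refine Finset.sum_congr rfl fun a _ => ?_
                  rw [Pi.smul_apply, smul_eq_mul, mul_smul]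
                rw [e3, norm_smul, Real.norm_eq_abs, mul_pow, sq_abs]; ring
              simp_rw [e2]
              refine g3.trans ?_
              rw [← ENNReal.ofReal_prod_of_nonneg fun i _ => by positivity, mul_left_comm, ← ENNReal.ofReal_mul (Finset.prod_nonneg fun i _ => by positivity)]
              gcongr
              rw [mul_pow, mul_inv, mul_comm]
              gcongr
              refine prod_half A u hu r hr0 fun i => ?_
              rw [← Real.sqrt_sq_eq_abs]
              exact Real.sqrt_le_sqrt (Finset.single_le_sum (f := fun i => u i ^ 2) (fun i _ => sq_nonneg _) (Finset.mem_univ i))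
          _ = _ := by
              rw [lintegral_mul_const _ (by fun_prop)]
              congr 1
              have := lintegral_pi_prod (κ := Fin (2 * A)) (gaussianReal 0 1) (fun _ x => ENNReal.ofReal (|x| ^ (-(1/2:ℝ)))) (fun _ => by fun_prop)
              rw [gaussPi, this]
              simp
    _ ≤ _ := by
        rw [setLIntegral_const, mul_assoc _ C']
        exact mul_le_of_le_one_right zero_le prob_le_one


lemma Gam_cons {k : ℕ} {ι : Type} [Fintype ι] :
    MeasurePreserving (fun p : (ι → ℝ) × (Fin k → ι → ℝ) => (Fin.cons p.1 p.2 : Fin (k+1) → ι → ℝ))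
      ((gaussPi ι).prod (Gam (Fin k) ι)) (Gam (Fin (k+1)) ι) := by
  have hp := (measurePreserving_piFinSuccAbove (fun _ : Fin (k+1) => gaussPi ι) 0).symm
  unfold Gam
  convert! hp using 1
  ext p
  simp [MeasurableEquiv.piFinSuccAbove]

lemma Gam_succ {k : ℕ} {ι : Type} [Fintype ι] (F : (Fin (k+1) → ι → ℝ) → ℝ≥0∞) (hF : Measurable F) :
    ∫⁻ Z, F Z ∂(Gam (Fin (k+1)) ι) = ∫⁻ x, ∫⁻ z, F (Fin.cons x z) ∂(Gam (Fin k) ι) ∂(gaussPi ι) := by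
  rw [← Gam_cons.lintegral_comp hF, lintegral_prod _ ?_]
  exact (hF.comp Gam_cons.measurable).aemeasurable

lemma curry_expand {k : ℕ} {ι : Type} [Fintype ι] [DecidableEq ι] {E : Type} [AddCommGroup E] [Module ℝ E]
    (W : MultilinearMap ℝ (fun _ : Fin (k+1) => ι → ℝ) E) (x : ι → ℝ) (z : Fin k → ι → ℝ) :
    W (Fin.cons x z) = ∑ a, x a • W (Fin.cons (Pi.single a 1) z) := by
  have hx : x = ∑ a, x a • (Pi.single a 1 : ι → ℝ) := by
    ext b; simp [Pi.single_apply]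
  have h := congrArg (fun f : MultilinearMap ℝ (fun _ : Fin k => ι → ℝ) E => f z) 
    (congrArg (fun y => W.curryLeft y) hx)
  simp only [map_sum, map_smul, sum_apply, smul_apply] at h
  exact h

lemma multilinear_continuous {k : ℕ} {ι : Type} [Fintype ι] [DecidableEq ι] {E : Type} [NormedAddCommGroup E] [NormedSpace ℝ E]
    (W : MultilinearMap ℝ (fun _ : Fin k => ι → ℝ) E) : Continuous fun Z : Fin k → ι → ℝ => W Z := by
  induction k with
  | zero =>
    have : (fun Z : Fin 0 → ι → ℝ => W Z) = fun _ => W 0 := by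
      ext Z; congr 1; exact Subsingleton.elim _ _
    rw [this]; exact continuous_const
  | succ k ih =>
    have : (fun Z : Fin (k+1) → ι → ℝ => W Z) = fun Z : Fin (k+1) → ι → ℝ => ∑ a, Z 0 a • W.curryLeft (Pi.single a 1) (Fin.tail Z) := by
      ext Z
      conv_lhs => rw [← Fin.cons_self_tail Z]
      exact curry_expand W (Z 0) (Fin.tail Z)
    rw [this]
    refine continuous_finsetSum _ fun a _ => ?_
    have h1 : Continuous fun Z : Fin (k+1) → ι → ℝ => Fin.tail Z := by
      unfold Fin.tail; fun_prop
    have h2 := (ih (W.curryLeft (Pi.single a 1))).comp h1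
    exact Continuous.smul (by fun_prop) h2

lemma core_base (A : ℕ) (c : ℝ) (hc : 0 < c) (s : ℝ) (hs : c ≤ s) (t : ℝ) (ht : 0 < t) :
    gx (t ^ 2 * s) ≤ ENNReal.ofReal (1 + A.factorial * (2 / c) ^ A) * ENNReal.ofReal ((t ^ A)⁻¹) := by
  unfold gx
  rw [← ENNReal.ofReal_mul (by positivity)]
  apply ENNReal.ofReal_le_ofReal
  have h0 : Real.exp (-(t ^ 2 * s / 2)) ≤ Real.exp (-(t ^ 2 * c / 2)) := by
    apply Real.exp_le_exp.2
    have : t ^ 2 * c ≤ t ^ 2 * s := by gcongr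
    linarith
  refine h0.trans ?_
  have htA : 0 < t ^ A := by positivity
  have hF : (0:ℝ) < A.factorial := by exact_mod_cast A.factorial_pos
  rcases le_total t 1 with h1 | h1
  · have h2 : 1 ≤ (t ^ A)⁻¹ := (one_le_inv₀ htA).2 (pow_le_one₀ ht.le h1)
    have h3 : Real.exp (-(t ^ 2 * c / 2)) ≤ 1 := Real.exp_le_one_iff.2 (by have : 0 ≤ t ^ 2 * c := by positivity
                                                                           linarith)
    refine h3.trans (h2.trans ?_)
    apply le_mul_of_one_le_left (by positivity)
    have : (0:ℝ) ≤ A.factorial * (2 / c) ^ A := by positivity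
    linarith
  · have h2 := Real.pow_div_factorial_le_exp (t ^ 2 * c / 2) (by positivity) A
    have h3 : (t ^ 2 * c / 2) ^ A = t ^ A * t ^ A / (2 / c) ^ A := by
      rw [← mul_pow, ← div_pow]; congr 1; field_simp
    rw [h3] at h2
    rw [Real.exp_neg]
    have h4 : t ^ A / ((2 / c) ^ A * A.factorial) ≤ t ^ A * t ^ A / (2 / c) ^ A / A.factorial := by
      rw [div_div]
      gcongr
      exact le_mul_of_one_le_left htA.le (one_le_pow₀ h1)
    have h5 : (Real.exp (t ^ 2 * c / 2))⁻¹ ≤ (t ^ A / ((2 / c) ^ A * A.factorial))⁻¹ :=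
      inv_anti₀ (by positivity) (h4.trans h2)
    refine h5.trans ?_
    rw [inv_div, div_eq_mul_inv]
    gcongr
    rw [mul_comm]; linarith

lemma core (k : ℕ) : ∀ (A : ℕ) (_ : 1 ≤ A) (c L : ℝ) (_ : 0 < c) (_ : 0 < L), ∃ m0 : ℕ, 1 ≤ m0 ∧ ∀ m ≥ m0, ∃ C : ℝ≥0∞, C < ∞ ∧
    ∀ {E : Type} [NormedAddCommGroup E] [InnerProductSpace ℝ E] [MeasurableSpace E] [BorelSpace E]
    [SecondCountableTopology E] {ι : Type} [Fintype ι] [DecidableEq ι] (W : MultilinearMap ℝ (fun _ : Fin k => ι → ℝ) E)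
    (_ : ENNReal.ofReal c ≤ ∫⁻ z, ‖W z‖ₑ ^ 2 ∂(Gam (Fin k) ι))
    (_ : ∫⁻ z, ‖W z‖ₑ ^ (2 * m) ∂(Gam (Fin k) ι) ≤ ENNReal.ofReal L ^ m),
    ∀ t > (0:ℝ), ∫⁻ z, gx (t ^ 2 * ‖W z‖ ^ 2) ∂(Gam (Fin k) ι) ≤ C * ENNReal.ofReal ((t ^ A)⁻¹) := by
  induction k with
  | zero =>
    intro A hA c L hc hL
    refine ⟨1, le_rfl, fun m _ => ⟨ENNReal.ofReal (1 + A.factorial * (2 / c) ^ A), ENNReal.ofReal_lt_top, ?_⟩⟩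
    intro E _ _ _ _ _ ι _ _ W h1 _ t ht
    have hW : ∀ z, W z = W 0 := fun z => by congr 1; exact Subsingleton.elim _ _
    simp_rw [hW] at h1 ⊢
    rw [lintegral_const, measure_univ, mul_one] at h1 ⊢
    refine core_base A c hc _ ?_ t ht
    rw [← ofReal_norm, ← ENNReal.ofReal_pow (norm_nonneg _)] at h1
    exact (ENNReal.ofReal_le_ofReal_iff (by positivity)).1 h1
  | succ k ih =>
    intro A hA c L hc hL
    have hA' : (0:ℝ) < (2 * A : ℕ) := by exact_mod_cast (by omega : 0 < 2 * A)
    obtain ⟨m1, hm1, hm1'⟩ := step A hA c L hc hL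
    obtain ⟨m2, hm2, hm2'⟩ := ih A hA (c / 2) (8 * (2 * A : ℕ) ^ 3 * L) (by positivity) (by positivity)
    refine ⟨max m1 m2, le_trans hm1 (le_max_left _ _), fun m hm => ?_⟩
    obtain ⟨C', hC', hih⟩ := hm2' m (le_trans (le_max_right _ _) hm)
    refine ⟨KA A * C', ENNReal.mul_lt_top (KA_lt_top A) hC', ?_⟩
    intro E _ _ _ _ _ ι _ _ W h1 h2 t ht
    have hWc := multilinear_continuous W
    rw [Gam_succ _ (hWc.enorm.measurable.pow_const _)] at h1 h2
    rw [Gam_succ _ (by exact gx_measurable.comp ((hWc.norm.measurable.pow_const _).const_mul _))]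
    have e : ∀ F : E → ℝ≥0∞, ∫⁻ x, ∫⁻ z, F (W (Fin.cons x z)) ∂(Gam (Fin k) ι) ∂(gaussPi ι)
        = ∫⁻ x, ∫⁻ z, F (∑ a, x a • W (Fin.cons (Pi.single a 1) z)) ∂(Gam (Fin k) ι) ∂(gaussPi ι) := fun F =>
      lintegral_congr fun x => lintegral_congr fun z => by rw [curry_expand W x z]
    replace h1 := h1.trans_eq (e fun y => ‖y‖ₑ ^ 2)
    replace h2 := (e fun y => ‖y‖ₑ ^ (2 * m)).symm.trans_le h2
    refine (e fun y => gx (t ^ 2 * ‖y‖ ^ 2)).trans_le ?_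
    have hcur : ∀ (v : ι → ℝ) (z : Fin k → ι → ℝ), ∑ a, v a • W (Fin.cons (Pi.single a 1) z) = W.curryLeft v z := by
      intro v z; rw [← curry_expand W]; rfl
    refine hm1' m (le_trans (le_max_left _ _) hm) (Gam (Fin k) ι) (fun a z => W (Fin.cons (Pi.single a 1) z)) ?_ h1 h2 C' ?_ t ht
    · intro a
      exact (multilinear_continuous (W.curryLeft (Pi.single a 1))).measurable
    · intro v g1 g2 s hs
      simp_rw [hcur] at g1 g2 ⊢
      exact hih (W.curryLeft v) g1 g2 s hs


noncomputable def ee (r : ℝ) : ℂ := Complex.exp ((r : ℂ) * Complex.I)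

lemma ee_norm (r : ℝ) : ‖ee r‖ = 1 := Complex.norm_exp_ofReal_mul_I r

lemma ee_continuous : Continuous ee := by unfold ee; fun_prop

lemma ee_sub (r s : ℝ) : ee (r - s) = ee r * (starRingEnd ℂ) (ee s) := by
  unfold ee
  rw [← Complex.exp_conj, ← Complex.exp_add]
  congr 1
  simp
  ring

lemma ee_integrable {α : Type} [MeasurableSpace α] (μ : Measure α) [IsFiniteMeasure μ] (φ : α → ℝ) (hφ : Measurable φ) :
    Integrable (fun x => ee (φ x)) μ := by
  refine Integrable.of_bound (C := 1) (ee_continuous.measurable.comp hφ).aestronglyMeasurable (ae_of_all _ fun x => ?_)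
  rw [ee_norm]

lemma vdc_one {α : Type} [MeasurableSpace α] (μ : Measure α) [IsProbabilityMeasure μ] (φ : α → ℝ) (_ : Measurable φ) :
    ‖∫ x, ee (φ x) ∂μ‖ ^ 2 = (∫ p, ee (φ p.1 - φ p.2) ∂(μ.prod μ)).re := by
  simp_rw [ee_sub]
  rw [integral_prod_mul (fun x => ee (φ x)) (fun x => (starRingEnd ℂ) (ee (φ x))), integral_conj, Complex.mul_conj,
    Complex.ofReal_re, Complex.normSq_eq_norm_sq]

lemma jensen_real {α : Type} [MeasurableSpace α] (μ : Measure α) [IsProbabilityMeasure μ] (f : α → ℝ)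
    (hf : AEStronglyMeasurable f μ) (h0 : ∀ x, 0 ≤ f x) (h1 : ∀ x, f x ≤ 1) (N : ℕ) : (∫ x, f x ∂μ) ^ N ≤ ∫ x, f x ^ N ∂μ := by
  have hi : Integrable f μ := Integrable.of_bound (C := 1) hf (ae_of_all _ fun x => by
    rw [Real.norm_eq_abs, abs_of_nonneg (h0 x)]; exact h1 x)
  have hi2 : Integrable (fun x => f x ^ N) μ := Integrable.of_bound (C := 1) (hf.pow N) (ae_of_all _ fun x => by
    rw [Real.norm_eq_abs, abs_of_nonneg (pow_nonneg (h0 x) _)]; exact pow_le_one₀ (h0 x) (h1 x))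
  exact (convexOn_pow N).map_integral_le (by fun_prop) isClosed_Ici (ae_of_all _ fun x => h0 x) hi hi2

lemma norm_int_ee_le {α : Type} [MeasurableSpace α] (μ : Measure α) [IsProbabilityMeasure μ] (φ : α → ℝ) :
    ‖∫ x, ee (φ x) ∂μ‖ ≤ 1 := by
  refine (norm_integral_le_integral_norm _).trans ?_
  simp [ee_norm]

lemma vdc_two {α β : Type} [MeasurableSpace α] [MeasurableSpace β] (μ : Measure α) [IsProbabilityMeasure μ]
    (ν : Measure β) [IsProbabilityMeasure ν] (Φ : α × β → ℝ) (hΦ : Measurable Φ) (N : ℕ) :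
    ‖∫ p, ee (Φ p) ∂(μ.prod ν)‖ ^ (2 * N) ≤ ∫ q, ‖∫ z, ee (Φ (q.1, z) - Φ (q.2, z)) ∂ν‖ ^ N ∂(μ.prod μ) := by
  have hm4 : Measurable fun r : (α × α) × β => Φ (r.1.1, r.2) - Φ (r.1.2, r.2) :=
    (hΦ.comp (by fun_prop)).sub (hΦ.comp (by fun_prop))
  have hi4 := ee_integrable ((μ.prod μ).prod ν) _ hm4
  have hmeas : AEStronglyMeasurable (fun q : α × α => ‖∫ z, ee (Φ (q.1, z) - Φ (q.2, z)) ∂ν‖) (μ.prod μ) :=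
    (hi4.aestronglyMeasurable.integral_prod_right').norm
  rw [pow_mul]
  refine le_trans (pow_le_pow_left₀ (by positivity) ?_ N) (jensen_real _ _ hmeas (fun _ => norm_nonneg _) (fun q => norm_int_ee_le ν _) N)
  have hi2 := ee_integrable (μ.prod ν) _ hΦ
  rw [integral_prod_symm _ hi2]
  have hmh : AEStronglyMeasurable (fun z => ‖∫ x, ee (Φ (x, z)) ∂μ‖) ν := by
    exact (hi2.swap.aestronglyMeasurable.integral_prod_right').norm
  calc ‖∫ z, ∫ x, ee (Φ (x, z)) ∂μ ∂ν‖ ^ 2 ≤ (∫ z, ‖∫ x, ee (Φ (x, z)) ∂μ‖ ∂ν) ^ 2 := by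
        gcongr; exact norm_integral_le_integral_norm _
    _ ≤ ∫ z, ‖∫ x, ee (Φ (x, z)) ∂μ‖ ^ 2 ∂ν := jensen_real _ _ hmh (fun _ => norm_nonneg _) (fun q => norm_int_ee_le μ _) 2
    _ = ∫ z, (∫ q, ee (Φ (q.1, z) - Φ (q.2, z)) ∂(μ.prod μ)).re ∂ν := by
        congr 1; ext z
        exact vdc_one μ (fun x => Φ (x, z)) (hΦ.comp (by fun_prop))
    _ = (∫ z, ∫ q, ee (Φ (q.1, z) - Φ (q.2, z)) ∂(μ.prod μ) ∂ν).re := by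
        exact integral_re (𝕜 := ℂ) hi4.integral_prod_right
    _ = (∫ q, ∫ z, ee (Φ (q.1, z) - Φ (q.2, z)) ∂ν ∂(μ.prod μ)).re := by
        rw [integral_integral_swap]
        exact hi4.swap
    _ ≤ ‖∫ q, ∫ z, ee (Φ (q.1, z) - Φ (q.2, z)) ∂ν ∂(μ.prod μ)‖ := Complex.re_le_norm _
    _ ≤ _ := norm_integral_le_integral_norm _

/-- iterated differencing -/
noncomputable def Dl {X : Type} : (d : ℕ) → ((Fin d → X) → ℝ) → (Fin d → X) → (Fin d → X) → ℝ
  | 0, Φ, Y, _ => Φ Y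
  | d+1, Φ, Y, Y' => Dl d (fun Z => Φ (Fin.cons (Y 0) Z) - Φ (Fin.cons (Y' 0) Z)) (Fin.tail Y) (Fin.tail Y')

lemma Dl_continuous {X : Type} [TopologicalSpace X] (d : ℕ) : ∀ {P : Type} [TopologicalSpace P] (Φ : P → (Fin d → X) → ℝ)
    (_ : Continuous fun p : P × (Fin d → X) => Φ p.1 p.2),
    Continuous fun p : P × (Fin d → X) × (Fin d → X) => Dl d (Φ p.1) p.2.1 p.2.2 := by
  induction d with
  | zero =>
    intro P _ Φ h
    simp only [Dl]
    exact h.comp (by fun_prop : Continuous fun p : P × (Fin 0 → X) × (Fin 0 → X) => (p.1, p.2.1))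
  | succ d ih =>
    intro P _ Φ h
    simp only [Dl]
    have hcons : ∀ {Q : Type} [TopologicalSpace Q] (f : Q → X) (g : Q → Fin d → X) (_ : Continuous f) (_ : Continuous g),
        Continuous fun q => (Fin.cons (f q) (g q) : Fin (d+1) → X) := by
      intro Q _ f g hf hg
      refine continuous_pi fun i => ?_
      refine Fin.cases ?_ (fun j => ?_) i
      · simpa using hf
      · simp only [Fin.cons_succ]; fun_prop
    have := ih (P := P × X × X) (fun p Z => Φ p.1 (Fin.cons p.2.1 Z) - Φ p.1 (Fin.cons p.2.2 Z)) (by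
      refine Continuous.sub ?_ ?_
      · exact h.comp (Continuous.prodMk (by fun_prop) (hcons _ _ (by fun_prop) (by fun_prop)))
      · exact h.comp (Continuous.prodMk (by fun_prop) (hcons _ _ (by fun_prop) (by fun_prop))))
    refine this.comp (f := fun p : P × (Fin (d+1) → X) × (Fin (d+1) → X) => ((p.1, p.2.1 0, p.2.2 0), (Fin.tail p.2.1, Fin.tail p.2.2))) ?_
    unfold Fin.tail
    fun_prop

lemma Dl_sum {X κ : Type} (s : Finset κ) (d : ℕ) : ∀ (c : κ → ℝ) (Φ : κ → (Fin d → X) → ℝ) (Y Y' : Fin d → X),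
    Dl d (fun Z => ∑ k ∈ s, c k * Φ k Z) Y Y' = ∑ k ∈ s, c k * Dl d (Φ k) Y Y' := by
  induction d with
  | zero => intro c Φ Y Y'; rfl
  | succ d ih =>
    intro c Φ Y Y'
    simp only [Dl]
    rw [← ih]
    congr 1
    ext Z
    rw [← Finset.sum_sub_distrib]
    exact Finset.sum_congr rfl fun k _ => by ring

lemma Dl_zero {X : Type} (d : ℕ) (Y Y' : Fin d → X) : Dl d (fun _ => 0) Y Y' = 0 := by
  induction d with
  | zero => rfl
  | succ d ih => simp only [Dl, sub_zero]; exact ih _ _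

lemma Dl_indep {X : Type} (d : ℕ) : ∀ (Φ : (Fin d → X) → ℝ) (j : Fin d) (_ : ∀ Z Z', (∀ i, i ≠ j → Z i = Z' i) → Φ Z = Φ Z')
    (Y Y' : Fin d → X), Dl d Φ Y Y' = 0 := by
  induction d with
  | zero => intro Φ j; exact j.elim0
  | succ d ih =>
    intro Φ j h Y Y'
    simp only [Dl]
    revert h
    refine Fin.cases (fun h => ?_) (fun j h => ?_) j
    · have : (fun Z : Fin d → X => Φ (Fin.cons (Y 0) Z) - Φ (Fin.cons (Y' 0) Z)) = fun _ => 0 := by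
        ext Z
        rw [h (Fin.cons (Y 0) Z) (Fin.cons (Y' 0) Z), sub_self]
        intro i hi
        obtain ⟨k, rfl⟩ := Fin.exists_succ_eq.2 hi
        simp
      rw [this]; exact Dl_zero d _ _
    · apply ih _ j
      intro Z Z' hZ
      have : ∀ x : X, Φ (Fin.cons x Z) = Φ (Fin.cons x Z') := by
        intro x
        apply h
        intro i
        refine Fin.cases (fun _ => rfl) (fun k hk => ?_) i
        simp only [Fin.cons_succ]
        exact hZ k fun hkj => hk (by rw [hkj])
      rw [this, this]

lemma Dl_multilinear {V : Type} [AddCommGroup V] [Module ℝ V] (d : ℕ) : ∀ (g : MultilinearMap ℝ (fun _ : Fin d => V) ℝ) (Y Y' : Fin d → V),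
    Dl d (fun Z => g Z) Y Y' = g (Y - Y') ∨ d = 0 := by
  induction d with
  | zero => intro g Y Y'; right; rfl
  | succ d ih =>
    intro g Y Y'
    left
    simp only [Dl]
    have e : (fun Z : Fin d → V => g (Fin.cons (Y 0) Z) - g (Fin.cons (Y' 0) Z)) = fun Z => g.curryLeft (Y 0 - Y' 0) Z := by
      ext Z
      rw [map_sub]; rfl
    rw [e]
    have e2 : g (Y - Y') = g.curryLeft (Y 0 - Y' 0) (Fin.tail Y - Fin.tail Y') := by
      rw [MultilinearMap.curryLeft_apply]
      congr 1
      ext i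
      refine Fin.cases rfl (fun j => rfl) i
    rw [e2]
    rcases ih (g.curryLeft (Y 0 - Y' 0)) (Fin.tail Y) (Fin.tail Y') with h | h
    · exact h
    · subst h
      simp only [Dl]
      congr 1
      exact Subsingleton.elim _ _


lemma rearr {α β : Type} [MeasurableSpace α] [MeasurableSpace β] (μ : Measure α) [IsProbabilityMeasure μ]
    (ν : Measure β) [IsProbabilityMeasure ν] :
    MeasurePreserving (fun q : (α × α) × (β × β) => ((q.1.1, q.2.1), (q.1.2, q.2.2)))
      ((μ.prod μ).prod (ν.prod ν)) ((μ.prod ν).prod (μ.prod ν)) := by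
  have h1 := measurePreserving_prodAssoc μ μ (ν.prod ν)
  have h2 : MeasurePreserving (MeasurableEquiv.prodAssoc : (α × β) × β ≃ᵐ _).symm (μ.prod (ν.prod ν)) ((μ.prod ν).prod ν) :=
    (measurePreserving_prodAssoc μ ν ν).symm
  have h3 : MeasurePreserving (Prod.map Prod.swap id) ((μ.prod ν).prod ν) ((ν.prod μ).prod ν) :=
    Measure.measurePreserving_swap.prod (MeasurePreserving.id ν)
  have h4 := measurePreserving_prodAssoc ν μ ν
  have h5 := (MeasurePreserving.id μ).prod (h4.comp (h3.comp h2))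
  have h6 := (measurePreserving_prodAssoc μ ν (μ.prod ν)).symm
  exact h6.comp (h5.comp h1)

lemma vdc (d : ℕ) {ι : Type} [Fintype ι] : ∀ (Φ : (Fin (d+1) → ι → ℝ) → ℝ) (_ : Continuous Φ),
    ‖∫ Z, ee (Φ Z) ∂(Gam (Fin (d+1)) ι)‖ ^ (2 ^ (d+1)) ≤
      (∫ p, ee (Dl (d+1) Φ p.1 p.2) ∂((Gam (Fin (d+1)) ι).prod (Gam (Fin (d+1)) ι))).re := by
  induction d with
  | zero =>
    intro Φ hΦ
    have := vdc_one (Gam (Fin 1) ι) Φ hΦ.measurable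
    simp only [zero_add, pow_one]
    rw [this]
    apply le_of_eq
    congr 1
    congr 1
    ext p
    simp only [Dl]
    congr 2
    · congr 1; ext i; rw [Fin.fin_one_eq_zero i]; rfl
    · congr 1; ext i; rw [Fin.fin_one_eq_zero i]; rfl
  | succ d ih =>
    intro Φ hΦ
    have hcc : Continuous fun p : (ι → ℝ) × (Fin (d+1) → ι → ℝ) => (Fin.cons p.1 p.2 : Fin (d+2) → ι → ℝ) := by
      refine continuous_pi fun i => ?_
      refine Fin.cases ?_ (fun j => ?_) i
      · simp only [Fin.cons_zero]; fun_prop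
      · simp only [Fin.cons_succ]; fun_prop
    have hΦc := hΦ.comp hcc
    have e1 : ∫ Z, ee (Φ Z) ∂(Gam (Fin (d+2)) ι) = ∫ p, ee (Φ (Fin.cons p.1 p.2)) ∂((gaussPi ι).prod (Gam (Fin (d+1)) ι)) := by
      rw [← (Gam_cons (k := d+1) (ι := ι)).map_eq, integral_map hcc.measurable.aemeasurable]
      exact (ee_continuous.comp hΦ).aestronglyMeasurable
    have hD : Continuous fun r : ((ι → ℝ) × (ι → ℝ)) × ((Fin (d+1) → ι → ℝ) × (Fin (d+1) → ι → ℝ)) =>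
        Dl (d+1) (fun Z => Φ (Fin.cons r.1.1 Z) - Φ (Fin.cons r.1.2 Z)) r.2.1 r.2.2 := by
      refine Dl_continuous (d+1) (P := (ι → ℝ) × (ι → ℝ)) (fun p Z => Φ (Fin.cons p.1 Z) - Φ (Fin.cons p.2 Z)) ?_
      refine Continuous.sub ?_ ?_
      · exact hΦc.comp (g := fun p : (ι → ℝ) × (Fin (d+1) → ι → ℝ) => Φ (Fin.cons p.1 p.2)) (f := fun p : ((ι → ℝ) × (ι → ℝ)) × (Fin (d+1) → ι → ℝ) => (p.1.1, p.2)) (by fun_prop)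
      · exact hΦc.comp (g := fun p : (ι → ℝ) × (Fin (d+1) → ι → ℝ) => Φ (Fin.cons p.1 p.2)) (f := fun p : ((ι → ℝ) × (ι → ℝ)) × (Fin (d+1) → ι → ℝ) => (p.1.2, p.2)) (by fun_prop)
    have hi := ee_integrable (((gaussPi ι).prod (gaussPi ι)).prod ((Gam (Fin (d+1)) ι).prod (Gam (Fin (d+1)) ι))) _ hD.measurable
    rw [e1, pow_succ' 2 (d+1)]
    refine (vdc_two _ _ (fun p => Φ (Fin.cons p.1 p.2)) hΦc.measurable _).trans ?_
    have hm4 : Measurable fun r : ((ι → ℝ) × (ι → ℝ)) × (Fin (d+1) → ι → ℝ) => Φ (Fin.cons r.1.1 r.2) - Φ (Fin.cons r.1.2 r.2) :=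
      (hΦc.measurable.comp (f := fun p : ((ι → ℝ) × (ι → ℝ)) × (Fin (d+1) → ι → ℝ) => (p.1.1, p.2)) (by fun_prop)).sub 
      (hΦc.measurable.comp (f := fun p : ((ι → ℝ) × (ι → ℝ)) × (Fin (d+1) → ι → ℝ) => (p.1.2, p.2)) (by fun_prop))
    have hi4 := ee_integrable (((gaussPi ι).prod (gaussPi ι)).prod (Gam (Fin (d+1)) ι)) _ hm4
    calc _ ≤ ∫ q, (∫ p, ee (Dl (d+1) (fun Z => Φ (Fin.cons q.1 Z) - Φ (Fin.cons q.2 Z)) p.1 p.2) 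
              ∂((Gam (Fin (d+1)) ι).prod (Gam (Fin (d+1)) ι))).re ∂((gaussPi ι).prod (gaussPi ι)) := by
          refine integral_mono_of_nonneg (ae_of_all _ fun q => by positivity) ?_ (ae_of_all _ fun q => ?_)
          · exact hi.integral_prod_left.re
          · refine ih (fun Z => Φ (Fin.cons q.1 Z) - Φ (Fin.cons q.2 Z)) ?_
            exact (hΦc.comp (f := fun Z : Fin (d+1) → ι → ℝ => (q.1, Z)) (by fun_prop)).sub 
              (hΦc.comp (f := fun Z : Fin (d+1) → ι → ℝ => (q.2, Z)) (by fun_prop))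
      _ = (∫ q, ∫ p, ee (Dl (d+1) (fun Z => Φ (Fin.cons q.1 Z) - Φ (Fin.cons q.2 Z)) p.1 p.2) 
              ∂((Gam (Fin (d+1)) ι).prod (Gam (Fin (d+1)) ι)) ∂((gaussPi ι).prod (gaussPi ι))).re := 
          integral_re (𝕜 := ℂ) hi.integral_prod_left
      _ = _ := by
          congr 1
          rw [← integral_prod _ hi]
          haveI i1 : IsProbabilityMeasure ((gaussPi ι).prod (Gam (Fin (d+1)) ι)) := Measure.prod.instIsProbabilityMeasure _ _
          haveI i2 : SFinite ((gaussPi ι).prod (Gam (Fin (d+1)) ι)) := inferInstance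
          have hmp := ((Gam_cons (k := d+1) (ι := ι)).prod (Gam_cons (k := d+1) (ι := ι))).comp (rearr (gaussPi ι) (Gam (Fin (d+1)) ι))
          rw [← hmp.map_eq, integral_map hmp.measurable.aemeasurable]
          · rfl
          · rw [hmp.map_eq]
            have := Dl_continuous (X := ι → ℝ) (d+2) (P := Unit) (fun _ => Φ) (hΦ.comp continuous_snd)
            have h2 := this.comp (f := fun p : (Fin (d+2) → ι → ℝ) × (Fin (d+2) → ι → ℝ) => ((), p)) (by fun_prop)
            exact (ee_continuous.comp h2).aestronglyMeasurable


lemma orthon {α κ : Type} [MeasurableSpace α] (μ : Measure α) [Fintype κ] [DecidableEq κ] (u : κ → α → ℝ) (b : κ → ℝ)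
    (hi : ∀ q r, Integrable (fun x => u q x * u r x) μ) (ho : ∀ q r, ∫ x, u q x * u r x ∂μ = if q = r then 1 else 0) :
    ∫⁻ x, ‖∑ q, b q * u q x‖ₑ ^ 2 ∂μ = ENNReal.ofReal (∑ q, b q ^ 2) := by
  have e : ∀ x, (∑ q, b q * u q x) ^ 2 = ∑ q, ∑ r, (b q * b r) * (u q x * u r x) := by
    intro x
    rw [sq, Finset.sum_mul_sum]
    exact Finset.sum_congr rfl fun q _ => Finset.sum_congr rfl fun r _ => by ring
  have hI : Integrable (fun x => (∑ q, b q * u q x) ^ 2) μ := by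
    simp_rw [e]
    exact integrable_finsetSum _ fun q _ => integrable_finsetSum _ fun r _ => (hi q r).const_mul _
  have e2 : ∀ x, ‖∑ q, b q * u q x‖ₑ ^ 2 = ENNReal.ofReal ((∑ q, b q * u q x) ^ 2) := by
    intro x
    rw [← sq_abs, ← Real.norm_eq_abs, ENNReal.ofReal_pow (norm_nonneg _), ofReal_norm]
  simp_rw [e2]
  rw [← ofReal_integral_eq_lintegral_ofReal hI (ae_of_all _ fun x => by positivity)]
  congr 1
  simp_rw [e]
  rw [integral_finsetSum _ fun q _ => integrable_finsetSum _ fun r _ => (hi q r).const_mul _]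
  refine Finset.sum_congr rfl fun q _ => ?_
  rw [integral_finsetSum _ fun r _ => (hi q r).const_mul _]
  simp_rw [integral_const_mul, ho]
  simp [sq]

/-- the polynomial -/
noncomputable def Pol (n d : ℕ) (a : Finset (Fin n) → ℝ) (x : Fin n → ℝ) : ℝ :=
  ∑ S ∈ Finset.powersetCard d (Finset.univ : Finset (Fin n)), a S * ∏ i ∈ S, x i

lemma Pol_continuous (n d : ℕ) (a : Finset (Fin n) → ℝ) : Continuous (Pol n d a) := by
  unfold Pol; fun_prop

abbrev SubS (n d : ℕ) := {S : Finset (Fin n) // S.card = d}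

noncomputable def emb {n d : ℕ} (S : SubS n d) : Fin d → Fin n := S.1.orderEmbOfFin S.2

lemma emb_inj {n d : ℕ} (S : SubS n d) : Function.Injective (emb S) := (S.1.orderEmbOfFin S.2).injective

lemma emb_range {n d : ℕ} (S : SubS n d) : Set.range (emb S) = S.1 := Finset.range_orderEmbOfFin _ _

lemma Pol_eq (n d : ℕ) (a : Finset (Fin n) → ℝ) (x : Fin n → ℝ) : Pol n d a x = ∑ S : SubS n d, a S.1 * ∏ j, x (emb S j) := by
  unfold Pol
  rw [Finset.sum_subtype (p := fun S => S.card = d) _ (by intro S; simp)]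
  refine Finset.sum_congr rfl fun S _ => ?_
  congr 1
  have : S.1 = Finset.univ.map (S.1.orderEmbOfFin S.2).toEmbedding := by
    ext i; rw [← Finset.mem_coe, ← Finset.range_orderEmbOfFin S.1 S.2]; simp
  conv_lhs => rw [this]
  rw [Finset.prod_map]
  rfl

noncomputable def gq {n d : ℕ} (q : SubS n d × Equiv.Perm (Fin d)) : Fin d → Fin n := emb q.1 ∘ q.2

lemma gq_inj {n d : ℕ} : Function.Injective (gq (n := n) (d := d)) := by
  rintro ⟨S, σ⟩ ⟨T, τ⟩ h
  have hr : Set.range (gq (S, σ)) = Set.range (gq (T, τ)) := by rw [h]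
  simp only [gq, Set.range_comp, Equiv.range_eq_univ, Set.image_univ, emb_range] at hr
  have hST : S = T := Subtype.ext (Finset.coe_injective hr)
  subst hST
  have : σ = τ := by
    ext j
    have := congrFun h j
    simp only [gq, Function.comp] at this
    rw [emb_inj S this]
  rw [this]

noncomputable def ff (n d : ℕ) (a : Finset (Fin n) → ℝ) : MultilinearMap ℝ (fun _ : Fin d => Fin n → ℝ) ℝ :=
  ∑ q : SubS n d × Equiv.Perm (Fin d), a q.1.1 • (MultilinearMap.mkPiAlgebra ℝ (Fin d) ℝ).compLinearMap (fun j => LinearMap.proj (gq q j))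

lemma ff_apply (n d : ℕ) (a : Finset (Fin n) → ℝ) (Y : Fin d → Fin n → ℝ) :
    ff n d a Y = ∑ q : SubS n d × Equiv.Perm (Fin d), a q.1.1 * ∏ j, Y j (gq q j) := by
  simp [ff, sum_apply, smul_apply]

lemma ff_symm (n d : ℕ) (a : Finset (Fin n) → ℝ) (Y : Fin d → Fin n → ℝ) (τ : Equiv.Perm (Fin d)) :
    ff n d a (Y ∘ τ) = ff n d a Y := by
  rw [ff_apply, ff_apply, Fintype.sum_prod_type, Fintype.sum_prod_type]
  refine Finset.sum_congr rfl fun S _ => ?_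
  refine Fintype.sum_equiv (Equiv.mulRight τ⁻¹) _ _ fun σ => ?_
  congr 1
  refine Fintype.prod_equiv τ _ _ fun j => ?_
  simp [gq]

lemma ff_diag (n d : ℕ) (a : Finset (Fin n) → ℝ) (x : Fin n → ℝ) : ff n d a (fun _ => x) = d.factorial * Pol n d a x := by
  rw [ff_apply, Fintype.sum_prod_type, Pol_eq, Finset.mul_sum]
  refine Finset.sum_congr rfl fun S _ => ?_
  have : ∀ σ : Equiv.Perm (Fin d), a S.1 * ∏ j, x (gq (S, σ) j) = a S.1 * ∏ j, x (emb S j) := by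
    intro σ
    congr 1
    exact Fintype.prod_equiv σ _ _ fun j => rfl
  simp_rw [this]
  rw [Finset.sum_const, Finset.card_univ, Fintype.card_perm, Fintype.card_fin, nsmul_eq_mul]

lemma ff_sq (n d : ℕ) (a : Finset (Fin n) → ℝ) :
    ∫⁻ Y, ‖ff n d a Y‖ₑ ^ 2 ∂(Gam (Fin d) (Fin n)) = ENNReal.ofReal (d.factorial * ∑ S : SubS n d, a S.1 ^ 2) := by
  classical
  simp_rw [ff_apply]
  have key : ∀ q r : SubS n d × Equiv.Perm (Fin d), (fun Y : Fin d → Fin n → ℝ => (∏ j, Y j (gq q j)) * ∏ j, Y j (gq r j)) =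
      fun Y => ∏ j, (fun y : Fin n → ℝ => y (gq q j) * y (gq r j)) (Y j) := by
    intro q r; ext Y; rw [Finset.prod_mul_distrib]
  have hIntg : ∀ q r : SubS n d × Equiv.Perm (Fin d), ∀ j, Integrable (fun y : Fin n → ℝ => y (gq q j) * y (gq r j)) (gaussPi (Fin n)) :=
    fun q r j => (memLp_coord _).integrable_mul (memLp_coord _)
  rw [orthon (Gam (Fin d) (Fin n)) (fun q Y => ∏ j, Y j (gq q j)) (fun q => a q.1.1)]
  · rw [Fintype.sum_prod_type]
    simp [Finset.sum_const, Finset.card_univ, Fintype.card_perm, Fintype.card_fin, Finset.mul_sum]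
  · intro q r
    rw [key]
    unfold Gam
    exact Integrable.fintype_prod (hIntg q r)
  · intro q r
    rw [key]
    unfold Gam
    rw [integral_fintype_prod_eq_prod (f := fun j (y : Fin n → ℝ) => y (gq q j) * y (gq r j))]
    simp_rw [integral_coord_mul]
    by_cases h : q = r
    · subst h; simp
    · rw [if_neg h]
      have : gq q ≠ gq r := fun h' => h (gq_inj h')
      obtain ⟨j, hj⟩ := Function.ne_iff.1 this
      exact Finset.prod_eq_zero (Finset.mem_univ j) (if_neg hj)

lemma Pol_sq (n d : ℕ) (a : Finset (Fin n) → ℝ) :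
    ∫⁻ x, ‖Pol n d a x‖ₑ ^ 2 ∂(gaussPi (Fin n)) = ENNReal.ofReal (∑ S : SubS n d, a S.1 ^ 2) := by
  classical
  have e : ∀ x, Pol n d a x = ∑ S : SubS n d, a S.1 * ∏ i, (if i ∈ S.1 then x i else 1) := by
    intro x
    unfold Pol
    rw [Finset.sum_subtype (p := fun S => S.card = d) _ (by intro S; simp)]
    refine Finset.sum_congr rfl fun S _ => ?_
    congr 1
    simp [Finset.prod_ite_mem]
  simp_rw [e]
  have key : ∀ S T : SubS n d, (fun x : Fin n → ℝ => (∏ i, if i ∈ S.1 then x i else 1) * ∏ i, if i ∈ T.1 then x i else 1) =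
      fun x => ∏ i, (fun y : ℝ => (if i ∈ S.1 then y else 1) * (if i ∈ T.1 then y else 1)) (x i) := by
    intro q r; ext Y; rw [Finset.prod_mul_distrib]
  have h2 : MemLp (fun y : ℝ => y) 2 (gaussianReal 0 1) := memLp_id_gaussianReal 2
  have hm : ∀ (S : SubS n d) (i : Fin n), MemLp (fun y : ℝ => if i ∈ S.1 then y else 1) 2 (gaussianReal 0 1) := by
    intro S i
    split_ifs
    · exact h2
    · exact memLp_const 1
  have hv : ∫ y : ℝ, y * y ∂(gaussianReal 0 1) = 1 := by
    have := variance_eq_sub h2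
    rw [variance_fun_id_gaussianReal] at this
    simp [sq] at this
    linarith
  rw [orthon (gaussPi (Fin n)) (fun (S : SubS n d) x => ∏ i, (if i ∈ S.1 then x i else 1)) (fun S => a S.1)]
  · intro q r
    rw [key]
    exact Integrable.fintype_prod fun i => (hm q i).integrable_mul (hm r i)
  · intro q r
    rw [key]
    unfold gaussPi
    rw [integral_fintype_prod_eq_prod (f := fun i (y : ℝ) => (if i ∈ q.1 then y else 1) * (if i ∈ r.1 then y else 1))]
    by_cases h : q = r
    · subst h; 
      rw [if_pos rfl]
      refine Finset.prod_eq_one fun i _ => ?_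
      split_ifs
      · exact hv
      · simp
    · rw [if_neg h]
      have : q.1 ≠ r.1 := fun h' => h (Subtype.ext h')
      have : ∃ i, ¬ (i ∈ q.1 ↔ i ∈ r.1) := by
        by_contra hc
        push Not at hc
        exact this (Finset.ext fun i => hc i)
      obtain ⟨i, hi⟩ := this
      refine Finset.prod_eq_zero (Finset.mem_univ i) ?_
      by_cases h1 : i ∈ q.1 <;> by_cases h2 : i ∈ r.1 <;> simp [h1, h2] at hi ⊢


lemma card_bij (d : ℕ) : (Finset.univ.filter fun φ : Fin d → Fin d => Function.Bijective φ).card = d.factorial := by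
  classical
  rw [← Fintype.card_subtype]
  have e : {φ : Fin d → Fin d // Function.Bijective φ} ≃ Equiv.Perm (Fin d) :=
    { toFun := fun φ => Equiv.ofBijective φ.1 φ.2
      invFun := fun σ => ⟨σ, σ.bijective⟩
      left_inv := fun φ => by ext; rfl
      right_inv := fun σ => by ext; rfl }
  rw [Fintype.card_congr e, Fintype.card_perm, Fintype.card_fin]

lemma Dl_Phi (n d : ℕ) (hd : d ≠ 0) (a : Finset (Fin n) → ℝ) (t s : ℝ) (Y Y' : Fin d → Fin n → ℝ) :
    Dl d (fun X : Fin d → Fin n → ℝ => t * Pol n d a (∑ j, s • X j)) Y Y' = t * s ^ d * ff n d a (Y - Y') := by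
  classical
  have hF : (d.factorial : ℝ) ≠ 0 := by exact_mod_cast d.factorial_ne_zero
  have e : (fun X : Fin d → Fin n → ℝ => t * Pol n d a (∑ j, s • X j)) =
      fun X => ∑ φ ∈ (Finset.univ : Finset (Fin d → Fin d)), (t * s ^ d / d.factorial) * ff n d a (X ∘ φ) := by
    ext X
    have h1 := ff_diag n d a (∑ j, s • X j)
    have h2 : ff n d a (fun _ => ∑ j, s • X j) = ∑ φ : Fin d → Fin d, s ^ d * ff n d a (X ∘ φ) := by
      rw [MultilinearMap.map_sum (ff n d a) (fun _ j => s • X j)]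
      refine Finset.sum_congr rfl fun φ _ => ?_
      rw [MultilinearMap.map_smul_univ (ff n d a) (fun _ => s) (fun i => X (φ i))]
      simp [Function.comp_def]
    have h3 : Pol n d a (∑ j, s • X j) = (∑ φ : Fin d → Fin d, s ^ d * ff n d a (X ∘ φ)) / d.factorial := by
      rw [← h2, h1]; field_simp
    rw [h3, Finset.sum_div, Finset.mul_sum]
    exact Finset.sum_congr rfl fun φ _ => by ring
  rw [e, Dl_sum Finset.univ d (fun _ => t * s ^ d / d.factorial) (fun φ X => ff n d a (X ∘ φ))]
  have h : ∀ φ : Fin d → Fin d, Dl d (fun X => ff n d a (X ∘ φ)) Y Y' = if Function.Bijective φ then ff n d a (Y - Y') else 0 := by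
    intro φ
    split_ifs with hb
    · have : (fun X : Fin d → Fin n → ℝ => ff n d a (X ∘ φ)) = fun X => ff n d a X := by
        ext X
        exact ff_symm n d a X (Equiv.ofBijective φ hb)
      rw [this]
      exact (Dl_multilinear d (ff n d a) Y Y').resolve_right hd
    · have : ¬ Function.Surjective φ := fun hs => hb (Finite.surjective_iff_bijective.1 hs)
      unfold Function.Surjective at this
      push Not at this
      obtain ⟨j, hj⟩ := this
      refine Dl_indep d _ j (fun Z Z' hZ => ?_) Y Y'
      congr 1
      ext1 i
      exact hZ _ (hj i)
  simp_rw [h]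
  rw [← Finset.mul_sum, ← Finset.sum_filter, Finset.sum_const, card_bij, nsmul_eq_mul]
  field_simp

lemma enorm_sub_pow_le (x y : ℝ) (M : ℕ) : ‖x - y‖ₑ ^ M ≤ 2 ^ M * (‖x‖ₑ ^ M + ‖y‖ₑ ^ M) := by
  have h1 : ‖x - y‖ₑ ≤ ‖x‖ₑ + ‖y‖ₑ := enorm_sub_le
  rcases le_total ‖x‖ₑ ‖y‖ₑ with h | h
  · calc ‖x - y‖ₑ ^ M ≤ (2 * ‖y‖ₑ) ^ M := by
          gcongr; rw [two_mul]; exact h1.trans (by gcongr)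
      _ = 2 ^ M * ‖y‖ₑ ^ M := mul_pow _ _ _
      _ ≤ _ := by gcongr; exact le_add_self
  · calc ‖x - y‖ₑ ^ M ≤ (2 * ‖x‖ₑ) ^ M := by
          gcongr; rw [two_mul]; exact h1.trans (by gcongr)
      _ = 2 ^ M * ‖x‖ₑ ^ M := mul_pow _ _ _
      _ ≤ _ := by gcongr; exact le_self_add

lemma cons_continuous {ι : Type} (d : ℕ) :
    Continuous fun p : (ι → ℝ) × (Fin d → ι → ℝ) => (Fin.cons p.1 p.2 : Fin (d+1) → ι → ℝ) := by
  refine continuous_pi fun i => ?_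
  refine Fin.cases ?_ (fun j => ?_) i
  · simp only [Fin.cons_zero]; fun_prop
  · simp only [Fin.cons_succ]; fun_prop

lemma Dl_moment (d M : ℕ) {ι : Type} [Fintype ι] : ∀ (Φ : (Fin d → ι → ℝ) → ℝ) (_ : Continuous Φ),
    ∫⁻ p, ‖Dl d Φ p.1 p.2‖ₑ ^ M ∂((Gam (Fin d) ι).prod (Gam (Fin d) ι)) ≤
      ((2:ℝ≥0∞) ^ (M+1)) ^ d * ∫⁻ Z, ‖Φ Z‖ₑ ^ M ∂(Gam (Fin d) ι) := by
  induction d with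
  | zero =>
    intro Φ hΦ
    simp only [Dl, pow_zero, one_mul]
    rw [lintegral_prod (fun p : (Fin 0 → ι → ℝ) × (Fin 0 → ι → ℝ) => ‖Φ p.1‖ₑ ^ M) ((hΦ.comp continuous_fst).measurable.enorm.pow_const M).aemeasurable]
    simp
  | succ d ih =>
    intro Φ hΦ
    have hcc := cons_continuous (ι := ι) d
    have hΦc := hΦ.comp hcc
    have hc1 : Continuous fun r : ((ι → ℝ) × (ι → ℝ)) × (Fin d → ι → ℝ) => Φ (Fin.cons r.1.1 r.2) :=
      hΦc.comp (f := fun p : ((ι → ℝ) × (ι → ℝ)) × (Fin d → ι → ℝ) => (p.1.1, p.2)) (by fun_prop)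
    have hc2 : Continuous fun r : ((ι → ℝ) × (ι → ℝ)) × (Fin d → ι → ℝ) => Φ (Fin.cons r.1.2 r.2) :=
      hΦc.comp (f := fun p : ((ι → ℝ) × (ι → ℝ)) × (Fin d → ι → ℝ) => (p.1.2, p.2)) (by fun_prop)
    have hD : Continuous fun r : ((ι → ℝ) × (ι → ℝ)) × ((Fin d → ι → ℝ) × (Fin d → ι → ℝ)) =>
        Dl d (fun Z => Φ (Fin.cons r.1.1 Z) - Φ (Fin.cons r.1.2 Z)) r.2.1 r.2.2 :=
      Dl_continuous d (P := (ι → ℝ) × (ι → ℝ)) (fun p Z => Φ (Fin.cons p.1 Z) - Φ (Fin.cons p.2 Z)) (hc1.sub hc2)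
    have i1 : IsProbabilityMeasure ((gaussPi ι).prod (Gam (Fin d) ι)) := Measure.prod.instIsProbabilityMeasure _ _
    have i2 : SFinite ((gaussPi ι).prod (Gam (Fin d) ι)) := inferInstance
    have i3 : IsProbabilityMeasure ((Gam (Fin d) ι).prod (Gam (Fin d) ι)) := Measure.prod.instIsProbabilityMeasure _ _
    have hmp := ((Gam_cons (k := d) (ι := ι)).prod (Gam_cons (k := d) (ι := ι))).comp (rearr (gaussPi ι) (Gam (Fin d) ι))
    have hDm : Measurable fun p : (Fin (d+1) → ι → ℝ) × (Fin (d+1) → ι → ℝ) => ‖Dl (d+1) Φ p.1 p.2‖ₑ ^ M := by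
      have := Dl_continuous (X := ι → ℝ) (d+1) (P := Unit) (fun _ => Φ) (hΦ.comp continuous_snd)
      have h2 := this.comp (f := fun p : (Fin (d+1) → ι → ℝ) × (Fin (d+1) → ι → ℝ) => ((), p)) (by fun_prop)
      exact h2.measurable.enorm.pow_const M
    rw [← hmp.lintegral_comp hDm]
    have hm1 : Measurable fun r : ((ι → ℝ) × (ι → ℝ)) × (Fin d → ι → ℝ) => ‖Φ (Fin.cons r.1.1 r.2)‖ₑ ^ M := hc1.measurable.enorm.pow_const M
    have hm2 : Measurable fun r : ((ι → ℝ) × (ι → ℝ)) × (Fin d → ι → ℝ) => ‖Φ (Fin.cons r.1.2 r.2)‖ₑ ^ M := hc2.measurable.enorm.pow_const M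
    have hm1' := hm1.lintegral_prod_right' (ν := Gam (Fin d) ι)
    have hmb : Measurable fun x : ι → ℝ => ∫⁻ Z, ‖Φ (Fin.cons x Z)‖ₑ ^ M ∂(Gam (Fin d) ι) :=
      (hΦc.measurable.enorm.pow_const M).lintegral_prod_right' (ν := Gam (Fin d) ι)
    calc _ = ∫⁻ q, ∫⁻ r, ‖Dl d (fun Z => Φ (Fin.cons q.1 Z) - Φ (Fin.cons q.2 Z)) r.1 r.2‖ₑ ^ M 
              ∂((Gam (Fin d) ι).prod (Gam (Fin d) ι)) ∂((gaussPi ι).prod (gaussPi ι)) := by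
          rw [← lintegral_prod (f := fun r : ((ι → ℝ) × (ι → ℝ)) × ((Fin d → ι → ℝ) × (Fin d → ι → ℝ)) =>
        ‖Dl d (fun Z => Φ (Fin.cons r.1.1 Z) - Φ (Fin.cons r.1.2 Z)) r.2.1 r.2.2‖ₑ ^ M) (hD.measurable.enorm.pow_const M).aemeasurable]
          rfl
      _ ≤ ∫⁻ q, ((2:ℝ≥0∞) ^ (M+1)) ^ d * (2 ^ M * (∫⁻ Z, ‖Φ (Fin.cons q.1 Z)‖ₑ ^ M ∂(Gam (Fin d) ι) + ∫⁻ Z, ‖Φ (Fin.cons q.2 Z)‖ₑ ^ M ∂(Gam (Fin d) ι))) 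
              ∂((gaussPi ι).prod (gaussPi ι)) := by
          refine lintegral_mono fun q => ?_
          have hq : Measurable fun Z : Fin d → ι → ℝ => ‖Φ (Fin.cons q.1 Z)‖ₑ ^ M := 
            hm1.comp (measurable_prodMk_left (x := q))
          refine (ih _ ?_).trans ?_
          · exact (hc1.sub hc2).comp (f := fun Z : Fin d → ι → ℝ => (q, Z)) (by fun_prop)
          · gcongr
            rw [← lintegral_add_left hq, ← lintegral_const_mul' _ _ (by simp)]
            exact lintegral_mono fun Z => enorm_sub_pow_le _ _ _
      _ = _ := by
          rw [lintegral_const_mul' _ _ (by simp), lintegral_const_mul' _ _ (by simp), lintegral_add_left hm1']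
          rw [lintegral_prod _ hm1'.aemeasurable]
          rw [lintegral_prod _ (hm2.lintegral_prod_right' (ν := Gam (Fin d) ι)).aemeasurable]
          simp only [lintegral_const, measure_univ, mul_one]
          rw [Gam_succ _ (hΦ.measurable.enorm.pow_const M)]
          ring


lemma gm_one : gm 1 = 1 := by
  have h := Pol_sq 1 1 (fun _ => 1)
  have h1 : ∀ x, Pol 1 1 (fun _ => 1) x = ∑ a : Fin 1, 1 * x a := by
    intro x
    unfold Pol
    simp [Finset.powersetCard_one]
  simp_rw [h1] at h
  have h2 := proj_moment (ι := Fin 1) (fun _ => 1) 1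
  simp only [mul_one] at h2
  rw [h] at h2
  have hc : Fintype.card (SubS 1 1) = 1 := by
    rw [Fintype.card_finset_len]; simp
  have h3 : ∑ S : SubS 1 1, (1:ℝ) ^ 2 = 1 := by simp [Finset.card_univ, hc]
  rw [h3] at h2
  simp at h2
  exact h2.symm

noncomputable def WW (n k : ℕ) (a : Finset (Fin n) → ℝ) : MultilinearMap ℝ (fun _ : Fin k => Fin n → ℝ) (EuclideanSpace ℝ (Fin n)) :=
  ((WithLp.linearEquiv 2 ℝ (Fin n → ℝ)).symm.toLinearMap).compMultilinearMap
    (MultilinearMap.pi fun b => (ff n (k+1) a).curryLeft (Pi.single b 1))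

lemma WW_apply (n k : ℕ) (a : Finset (Fin n) → ℝ) (z : Fin k → Fin n → ℝ) (b : Fin n) :
    WW n k a z b = ff n (k+1) a (Fin.cons (Pi.single b 1) z) := rfl

lemma ff_cons (n k : ℕ) (a : Finset (Fin n) → ℝ) (x : Fin n → ℝ) (z : Fin k → Fin n → ℝ) :
    ff n (k+1) a (Fin.cons x z) = ∑ b, WW n k a z b * x b := by
  rw [curry_expand]
  exact Finset.sum_congr rfl fun b _ => by rw [WW_apply, smul_eq_mul, mul_comm]

lemma WW_norm (n k : ℕ) (a : Finset (Fin n) → ℝ) (z : Fin k → Fin n → ℝ) : ‖WW n k a z‖ ^ 2 = ∑ b, WW n k a z b ^ 2 := by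
  rw [EuclideanSpace.norm_sq_eq]; simp

lemma WW_moment (n k m : ℕ) (a : Finset (Fin n) → ℝ) :
    (∫⁻ z, ‖WW n k a z‖ₑ ^ (2 * m) ∂(Gam (Fin k) (Fin n))) * gm m = ∫⁻ Y, ‖ff n (k+1) a Y‖ₑ ^ (2 * m) ∂(Gam (Fin (k+1)) (Fin n)) := by
  have hc := (multilinear_continuous (ff n (k+1) a))
  have hW := (multilinear_continuous (WW n k a))
  have hm : Measurable fun Y => ‖ff n (k+1) a Y‖ₑ ^ (2 * m) := hc.measurable.enorm.pow_const _
  rw [Gam_succ _ hm]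
  have hm2 : Measurable fun p : (Fin n → ℝ) × (Fin k → Fin n → ℝ) => ‖ff n (k+1) a (Fin.cons p.1 p.2)‖ₑ ^ (2 * m) :=
    hm.comp (cons_continuous k).measurable
  rw [lintegral_lintegral_swap (by exact hm2.aemeasurable), ← lintegral_mul_const _ (hW.measurable.enorm.pow_const _)]
  refine lintegral_congr fun z => ?_
  simp_rw [ff_cons]
  rw [proj_moment, ← WW_norm, ENNReal.ofReal_pow (norm_nonneg _), ofReal_norm, pow_mul]

lemma WW_char (n k : ℕ) (a : Finset (Fin n) → ℝ) (t : ℝ) :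
    (∫ Y, ee (t * ff n (k+1) a Y) ∂(Gam (Fin (k+1)) (Fin n))).re ≤
      (∫⁻ z, gx (t ^ 2 * ‖WW n k a z‖ ^ 2) ∂(Gam (Fin k) (Fin n))).toReal := by
  have hc := (multilinear_continuous (ff n (k+1) a))
  have hW := (multilinear_continuous (WW n k a))
  have hcc := cons_continuous (ι := Fin n) k
  have hcm : Continuous fun p : (Fin n → ℝ) × (Fin k → Fin n → ℝ) => t * ff n (k+1) a (Fin.cons p.1 p.2) :=
    continuous_const.mul (hc.comp hcc)
  rw [← (Gam_cons (k := k) (ι := Fin n)).map_eq, integral_map (f := fun Y => ee (t * ff n (k+1) a Y)) hcc.measurable.aemeasurable 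
    (ee_continuous.comp (continuous_const.mul hc)).aestronglyMeasurable]
  rw [integral_prod_symm _ (ee_integrable _ _ hcm.measurable)]
  have e : ∀ z, ∫ x, ee (t * ff n (k+1) a (Fin.cons x z)) ∂(gaussPi (Fin n)) = ((Real.exp (-(t ^ 2 * ‖WW n k a z‖ ^ 2 / 2)) : ℝ) : ℂ) := by
    intro z
    have := gaussPi_char (fun b => t * WW n k a z b)
    unfold ee
    simp_rw [ff_cons, Finset.mul_sum, ← mul_assoc]
    rw [this, WW_norm, Complex.ofReal_exp, Finset.mul_sum]
    congr 1
    push_cast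
    simp [mul_pow]
  simp_rw [e]
  rw [integral_complex_ofReal, Complex.ofReal_re, integral_eq_lintegral_of_nonneg_ae (ae_of_all _ fun z => by positivity)]
  · rfl
  · refine Continuous.aestronglyMeasurable ?_
    fun_prop

lemma Phi_int (n d : ℕ) (hd : d ≠ 0) :
    MeasurePreserving (fun Y : Fin d → Fin n → ℝ => ∑ j, (√d)⁻¹ • Y j) (Gam (Fin d) (Fin n)) (gaussPi (Fin n)) := by
  refine Gam_comb (fun _ => (√d)⁻¹) ?_
  have : (0:ℝ) < d := by positivity
  simp [inv_pow, Real.sq_sqrt this.le]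
  field_simp

noncomputable def kap (d : ℕ) : ℝ := ((√d)⁻¹ * √2) ^ d

lemma kap_pos (d : ℕ) (hd : d ≠ 0) : 0 < kap d := by
  unfold kap; positivity

lemma Dl_Phi2 (n d : ℕ) (hd : d ≠ 0) (a : Finset (Fin n) → ℝ) (t : ℝ) (Y Y' : Fin d → Fin n → ℝ) :
    Dl d (fun X : Fin d → Fin n → ℝ => t * Pol n d a (∑ j, (√d)⁻¹ • X j)) Y Y' = t * kap d * ff n d a ((√2)⁻¹ • (Y - Y')) := by
  rw [Dl_Phi n d hd]
  have h2 : √2 ≠ 0 := by positivity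
  have : ff n d a (Y - Y') = √2 ^ d * ff n d a ((√2)⁻¹ • (Y - Y')) := by
    have := MultilinearMap.map_smul_univ (ff n d a) (fun _ => √2) (fun i => ((√2)⁻¹ • (Y - Y')) i)
    simp only [Finset.prod_const, Finset.card_univ, Fintype.card_fin, smul_eq_mul] at this
    rw [← this]
    congr 1
    ext i
    simp [h2]
  rw [this, kap, mul_pow]
  ring

lemma ff_moment (n d : ℕ) (hd : d ≠ 0) (a : Finset (Fin n) → ℝ) (M : ℕ) :
    ENNReal.ofReal (kap d) ^ M * ∫⁻ Y, ‖ff n d a Y‖ₑ ^ M ∂(Gam (Fin d) (Fin n)) ≤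
      ((2:ℝ≥0∞) ^ (M+1)) ^ d * ∫⁻ x, ‖Pol n d a x‖ₑ ^ M ∂(gaussPi (Fin n)) := by
  have hc := multilinear_continuous (ff n d a)
  have hP := Pol_continuous n d a
  have hΦ : Continuous (fun X : Fin d → Fin n → ℝ => 1 * Pol n d a (∑ j, (√d)⁻¹ • X j)) := by fun_prop
  have h := Dl_moment d M (ι := Fin n) _ hΦ
  simp_rw [Dl_Phi2 n d hd] at h
  simp only [one_mul] at h
  have e1 := (Phi_int n d hd).lintegral_comp (f := fun x => ‖Pol n d a x‖ₑ ^ M) (hP.measurable.enorm.pow_const M)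
  rw [e1] at h
  have e2 := (Gam_diff (κ := Fin d) (ι := Fin n)).lintegral_comp (f := fun Z => ‖kap d * ff n d a Z‖ₑ ^ M) 
    ((continuous_const.mul hc).measurable.enorm.pow_const M)
  rw [e2] at h
  refine le_trans (le_of_eq ?_) h
  rw [← lintegral_const_mul _ (hc.measurable.enorm.pow_const M)]
  refine lintegral_congr fun Z => ?_
  rw [enorm_mul, mul_pow, Real.enorm_eq_ofReal (kap_pos d hd).le]

lemma Pol_char (n k : ℕ) (a : Finset (Fin n) → ℝ) (t : ℝ) :
    ‖∫ x, ee (t * Pol n (k+1) a x) ∂(gaussPi (Fin n))‖ ^ (2 ^ (k+1)) ≤ 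
     (∫⁻ z, gx ((t * kap (k+1)) ^ 2 * ‖WW n k a z‖ ^ 2) ∂(Gam (Fin k) (Fin n))).toReal := by
  have hP := Pol_continuous n (k+1) a
  have hc := multilinear_continuous (ff n (k+1) a)
  have hΦ : Continuous (fun X : Fin (k+1) → Fin n → ℝ => t * Pol n (k+1) a (∑ j, (√((k+1 : ℕ):ℝ))⁻¹ • X j)) := by fun_prop
  have h := vdc k _ hΦ
  have hp := Phi_int n (k+1) (by simp)
  have e1 : ∫ x, ee (t * Pol n (k+1) a x) ∂(gaussPi (Fin n)) = 
    ∫ X, ee (t * Pol n (k+1) a (∑ j, (√((k+1 : ℕ):ℝ))⁻¹ • X j)) ∂(Gam (Fin (k+1)) (Fin n)) := by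
    rw [← hp.map_eq, integral_map hp.measurable.aemeasurable]
    exact (ee_continuous.comp (continuous_const.mul hP)).aestronglyMeasurable
  rw [e1]
  refine h.trans ?_
  simp_rw [Dl_Phi2 n (k+1) (by simp)]
  refine le_trans (le_of_eq ?_) (WW_char n k a (t * kap (k+1)))
  congr 1
  have hd := Gam_diff (κ := Fin (k+1)) (ι := Fin n)
  rw [← integral_map hd.measurable.aemeasurable (f := fun Z => ee (t * kap (k+1) * ff n (k+1) a Z)), hd.map_eq]
  exact (ee_continuous.comp (continuous_const.mul hc)).aestronglyMeasurable

theorem char_decay (k A : ℕ) (hA : 1 ≤ A) (c L : ℝ) (hc : 0 < c) (hL : 0 < L) : ∃ m0 : ℕ, 1 ≤ m0 ∧ ∀ m ≥ m0, ∃ C : ℝ, 0 < C ∧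
    ∀ (n : ℕ) (a : Finset (Fin n) → ℝ), ENNReal.ofReal c ≤ ∫⁻ x, ‖Pol n (k+1) a x‖ₑ ^ 2 ∂(gaussPi (Fin n)) →
      ∫⁻ x, ‖Pol n (k+1) a x‖ₑ ^ (2 * m) ∂(gaussPi (Fin n)) ≤ ENNReal.ofReal L ^ m * gm m →
      ∀ t > (0:ℝ), ‖∫ x, ee (t * Pol n (k+1) a x) ∂(gaussPi (Fin n))‖ ^ (2 ^ (k+1)) ≤ C * (t ^ A)⁻¹ := by
  set κ := kap (k+1)
  have hκ : 0 < κ := kap_pos (k+1) (by simp)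
  obtain ⟨m0, hm0, H⟩ := core k A hA c (8 ^ (k+1) * L / κ ^ 2) hc (by positivity)
  obtain ⟨m1, H1⟩ := gm_large 1
  refine ⟨max m0 m1, le_max_of_le_left hm0, fun m hm => ?_⟩
  obtain ⟨C, hC, HC⟩ := H m (le_trans (le_max_left _ _) hm)
  have hg : gm m ≠ 0 := by
    have := H1 m (le_trans (le_max_right _ _) hm)
    intro h; rw [h] at this; simp at this
  have hmpos : 1 ≤ m := hm0.trans (le_trans (le_max_left _ _) hm)
  refine ⟨(C.toReal + 1) * (κ ^ A)⁻¹, by positivity, fun n a h1 h2 t ht => ?_⟩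
  have key := HC (WW n k a) ?_ ?_ (t * κ) (by positivity)
  · refine (Pol_char n k a t).trans ?_
    have := ENNReal.toReal_mono (ENNReal.mul_ne_top hC.ne ENNReal.ofReal_ne_top) key
    refine this.trans ?_
    rw [ENNReal.toReal_mul, ENNReal.toReal_ofReal (by positivity), mul_pow, mul_inv]
    have : 0 ≤ (t ^ A)⁻¹ * (κ ^ A)⁻¹ := by positivity
    nlinarith
  · have h3 := WW_moment n k 1 a
    rw [gm_one, mul_one, mul_one, ff_sq] at h3
    rw [h3]
    rw [Pol_sq] at h1
    refine h1.trans (ENNReal.ofReal_le_ofReal ?_)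
    have : (1:ℝ) ≤ (k+1).factorial := by exact_mod_cast Nat.one_le_iff_ne_zero.2 (k+1).factorial_ne_zero
    exact le_mul_of_one_le_left (Finset.sum_nonneg fun _ _ => by positivity) this
  · have h3 := WW_moment n k m a
    have h4 := ff_moment n (k+1) (by simp) a (2*m)
    rw [← h3] at h4
    have h5 : ENNReal.ofReal κ ^ (2*m) * ((∫⁻ z, ‖WW n k a z‖ₑ ^ (2 * m) ∂(Gam (Fin k) (Fin n))) * gm m) ≤ ENNReal.ofReal (8 ^ (k+1)) ^ m * (ENNReal.ofReal L ^ m * gm m) := by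
      refine h4.trans (mul_le_mul' ?_ h2)
      rw [ENNReal.ofReal_pow (by norm_num), show ENNReal.ofReal 8 = 2 ^ 3 by norm_num [ENNReal.ofReal_ofNat], ← pow_mul, ← pow_mul, ← pow_mul]
      exact pow_le_pow_right₀ (by norm_num) (by nlinarith [Nat.mul_le_mul_right (k+1) hmpos])
    have h6 : ENNReal.ofReal (κ^2) ^ m * ∫⁻ z, ‖WW n k a z‖ₑ ^ (2 * m) ∂(Gam (Fin k) (Fin n)) ≤ ENNReal.ofReal (8 ^ (k+1)) ^ m * ENNReal.ofReal L ^ m := by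
      rw [← mul_assoc, ← mul_assoc] at h5
      have := (ENNReal.mul_le_mul_iff_left hg (gm_lt_top m).ne).1 h5
      rwa [pow_mul, ← ENNReal.ofReal_pow hκ.le] at this
    have h7 : ENNReal.ofReal (8 ^ (k+1)) ^ m * ENNReal.ofReal L ^ m = ENNReal.ofReal (κ^2) ^ m * ENNReal.ofReal (8 ^ (k+1) * L / κ ^ 2) ^ m := by
      rw [← mul_pow, ← mul_pow, ← ENNReal.ofReal_mul (by positivity), ← ENNReal.ofReal_mul (by positivity)]
      congr 2
      field_simp
    rw [h7] at h6
    exact (ENNReal.mul_le_mul_iff_right (by positivity) (by finiteness)).1 h6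


lemma two_point_aux (N : ℕ) (A y : ℝ) (M : ℕ) (hM : M ≤ N) :
    ((A ^ 2 + y ^ 2 + 2 * A * y) ^ M + (A ^ 2 + y ^ 2 - 2 * A * y) ^ M) / 2 ≤ (A ^ 2 + y ^ 2 + 4 * N * y ^ 2) ^ M ∧
    (2 * A * y) * (((A ^ 2 + y ^ 2 + 2 * A * y) ^ M - (A ^ 2 + y ^ 2 - 2 * A * y) ^ M) / 2) ≤ 4 * M * y ^ 2 * (A ^ 2 + y ^ 2 + 4 * N * y ^ 2) ^ M := by
  induction M with
  | zero => simp
  | succ M ih =>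
    obtain ⟨h1, h2⟩ := ih (by omega)
    have hs : 0 ≤ A ^ 2 + y ^ 2 := by positivity
    have hN : (M:ℝ) + 1 ≤ N := by exact_mod_cast hM
    have hT : 0 ≤ A ^ 2 + y ^ 2 + 4 * N * y ^ 2 := by positivity
    set s := A ^ 2 + y ^ 2
    set h := 2 * A * y
    set T := s + 4 * N * y ^ 2
    set u := (s + h) ^ M
    set v := (s - h) ^ M
    have hTM : 0 ≤ T ^ M := by positivity
    have hh : h ^ 2 ≤ 4 * s * y ^ 2 := by
      simp only [h, s]; nlinarith [sq_nonneg (y ^ 2)]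
    have hsT : s ≤ T := by simp only [T]; nlinarith [sq_nonneg y, Nat.cast_nonneg (α := ℝ) N]
    rw [pow_succ, pow_succ (s - h), pow_succ T]
    constructor
    · have e : (u * (s + h) + v * (s - h)) / 2 = s * ((u + v) / 2) + h * ((u - v) / 2) := by ring
      rw [e]
      have e1 : s * ((u + v) / 2) ≤ s * T ^ M := by gcongr
      have e2 : 4 * M * y ^ 2 * T ^ M ≤ 4 * N * y ^ 2 * T ^ M := by gcongr; linarith
      have : T ^ M * T = s * T ^ M + 4 * N * y ^ 2 * T ^ M := by simp only [T]; ring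
      linarith
    · have e : h * ((u * (s + h) - v * (s - h)) / 2) = s * (h * ((u - v) / 2)) + h ^ 2 * ((u + v) / 2) := by ring
      rw [e]
      have e1 : s * (h * ((u - v) / 2)) ≤ s * (4 * M * y ^ 2 * T ^ M) := by gcongr
      have e2 : h ^ 2 * ((u + v) / 2) ≤ h ^ 2 * T ^ M := by gcongr
      have e3 : h ^ 2 * T ^ M ≤ 4 * s * y ^ 2 * T ^ M := by gcongr
      have e4 : s * (4 * (M + 1) * y ^ 2 * T ^ M) ≤ T * (4 * (M + 1) * y ^ 2 * T ^ M) := by gcongr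
      push_cast
      linarith

lemma two_point (N : ℕ) (A y : ℝ) : ((A + y) ^ (2 * N) + (A - y) ^ (2 * N)) / 2 ≤ (A ^ 2 + (4 * N + 1) * y ^ 2) ^ N := by
  have := (two_point_aux N A y N le_rfl).1
  rw [pow_mul, pow_mul]
  convert this using 1
  · congr 3 <;> ring
  · congr 1; ring

lemma gaussPi_cons (n : ℕ) :
    MeasurePreserving (fun p : ℝ × (Fin n → ℝ) => (Fin.cons p.1 p.2 : Fin (n+1) → ℝ))
      ((gaussianReal 0 1).prod (gaussPi (Fin n))) (gaussPi (Fin (n+1))) := by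
  have hp := (measurePreserving_piFinSuccAbove (fun _ : Fin (n+1) => gaussianReal 0 1) 0).symm
  unfold gaussPi
  convert! hp using 1
  ext p
  simp [MeasurableEquiv.piFinSuccAbove]

lemma psc_succ (n d : ℕ) (F : Finset (Fin (n+1)) → ℝ) :
    ∑ S ∈ Finset.powersetCard (d+1) (Finset.univ : Finset (Fin (n+1))), F S =
    ∑ S ∈ Finset.powersetCard (d+1) (Finset.univ : Finset (Fin n)), F (S.map (Fin.succEmb n)) +
    ∑ S ∈ Finset.powersetCard d (Finset.univ : Finset (Fin n)), F (insert 0 (S.map (Fin.succEmb n))) := by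
  have h0 : ∀ S : Finset (Fin n), (0 : Fin (n+1)) ∉ S.map (Fin.succEmb n) := by
    intro S; simp [Fin.succ_ne_zero]
  have hu : (Finset.univ : Finset (Fin (n+1))) = insert 0 (Finset.univ.map (Fin.succEmb n)) := by
    rw [Fin.univ_succ, Finset.cons_eq_insert]; rfl
  rw [hu, Finset.powersetCard_succ_insert (h0 _), Finset.sum_union, Finset.sum_image,
    Finset.powersetCard_map, Finset.powersetCard_map, Finset.sum_map, Finset.sum_map]
  · rfl
  · intro S hS T hT hST
    simp only [Finset.mem_coe, Finset.powersetCard_map, Finset.mem_map] at hS hT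
    obtain ⟨S', _, rfl⟩ := hS
    obtain ⟨T', _, rfl⟩ := hT
    have := congrArg (fun U => Finset.erase U 0) hST
    simpa [Finset.erase_insert, h0] using this
  · rw [Finset.disjoint_left]
    intro S hS hS'
    obtain ⟨T, _, rfl⟩ := Finset.mem_image.1 hS'
    rw [Finset.powersetCard_map, Finset.mem_map] at hS
    obtain ⟨U, _, hU⟩ := hS
    have : (0 : Fin (n+1)) ∈ U.map (Fin.succEmb n) := by
      have := Finset.mem_insert_self 0 T
      rw [← hU] at this
      exact this
    exact h0 _ this

lemma Pol_cons (n d : ℕ) (a : Finset (Fin (n+1)) → ℝ) (x : ℝ) (z : Fin n → ℝ) :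
    Pol (n+1) (d+1) a (Fin.cons x z) = Pol n (d+1) (fun S => a (S.map (Fin.succEmb n))) z +
      x * Pol n d (fun S => a (insert 0 (S.map (Fin.succEmb n)))) z := by
  unfold Pol
  rw [psc_succ, Finset.mul_sum]
  congr 1
  · refine Finset.sum_congr rfl fun S _ => ?_
    simp
  · refine Finset.sum_congr rfl fun S _ => ?_
    rw [Finset.prod_insert (by simp [Fin.succ_ne_zero])]
    simp
    ring

lemma two_point_enorm (N : ℕ) (A y : ℝ) :
    ‖A + y‖ₑ ^ (2 * N) + ‖A - y‖ₑ ^ (2 * N) ≤ 2 * (‖A‖ₑ ^ 2 + ENNReal.ofReal (4 * N + 1) * ‖y‖ₑ ^ 2) ^ N := by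
  have e : ∀ (r : ℝ) (M : ℕ), ‖r‖ₑ ^ (2 * M) = ENNReal.ofReal (r ^ (2 * M)) := by
    intro r M
    rw [← Even.pow_abs (even_two_mul M), ← Real.norm_eq_abs, ENNReal.ofReal_pow (norm_nonneg _), ofReal_norm]
  have e1 := fun r => e r 1
  simp only [mul_one] at e1
  have hp : ∀ r : ℝ, 0 ≤ r ^ (2 * N) := fun r => by rw [pow_mul]; positivity
  rw [e, e, e1, e1, ← ENNReal.ofReal_add (hp _) (hp _), ← ENNReal.ofReal_mul (by positivity), ← ENNReal.ofReal_add (by positivity) (by positivity),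
    ← ENNReal.ofReal_pow (by positivity), show (2:ℝ≥0∞) = ENNReal.ofReal 2 by norm_num, ← ENNReal.ofReal_mul (by norm_num)]
  apply ENNReal.ofReal_le_ofReal
  have := two_point N A y
  linarith

lemma hyper_step (N : ℕ) (hN : 1 ≤ N) (n : ℕ) (A B : (Fin n → ℝ) → ℝ) (hA : Continuous A) (hB : Continuous B) :
    (∫⁻ p, ‖A p.2 + p.1 * B p.2‖ₑ ^ (2 * N) ∂((gaussianReal 0 1).prod (gaussPi (Fin n)))) ^ (1 / (N:ℝ)) ≤
     (∫⁻ z, ‖A z‖ₑ ^ (2 * N) ∂(gaussPi (Fin n))) ^ (1 / (N:ℝ)) + 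
      (ENNReal.ofReal (4 * N + 1) * gm N ^ (1 / (N:ℝ))) * (∫⁻ z, ‖B z‖ₑ ^ (2 * N) ∂(gaussPi (Fin n))) ^ (1 / (N:ℝ)) := by
  have hN0 : (0:ℝ) < N := by positivity
  set μ := (gaussianReal 0 1).prod (gaussPi (Fin n))
  have hneg : MeasurePreserving (fun x : ℝ => -x) (gaussianReal 0 1) (gaussianReal 0 1) := by
    refine ⟨measurable_neg, ?_⟩
    rw [gaussianReal_map_neg]; simp
  have hmp : MeasurePreserving (Prod.map (fun x : ℝ => -x) id) μ μ := hneg.prod (MeasurePreserving.id _)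
  have hG : Measurable fun p : ℝ × (Fin n → ℝ) => ‖A p.2 + p.1 * B p.2‖ₑ ^ (2 * N) := by
    have : Continuous fun p : ℝ × (Fin n → ℝ) => A p.2 + p.1 * B p.2 := by fun_prop
    exact this.measurable.enorm.pow_const _
  have e1 := hmp.lintegral_comp hG
  have hf : Measurable fun p : ℝ × (Fin n → ℝ) => ‖A p.2‖ₑ ^ 2 := 
    (hA.comp continuous_snd).measurable.enorm.pow_const _
  have hg : Measurable fun p : ℝ × (Fin n → ℝ) => ENNReal.ofReal (4 * N + 1) * ‖p.1 * B p.2‖ₑ ^ 2 := by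
    have : Continuous fun p : ℝ × (Fin n → ℝ) => p.1 * B p.2 := by fun_prop
    exact (this.measurable.enorm.pow_const _).const_mul _
  have hle : ∫⁻ p, ‖A p.2 + p.1 * B p.2‖ₑ ^ (2 * N) ∂μ ≤ ∫⁻ p, (‖A p.2‖ₑ ^ 2 + ENNReal.ofReal (4 * N + 1) * ‖p.1 * B p.2‖ₑ ^ 2) ^ N ∂μ := by
    have h2 : 2 * ∫⁻ p, ‖A p.2 + p.1 * B p.2‖ₑ ^ (2 * N) ∂μ ≤ 2 * ∫⁻ p, (‖A p.2‖ₑ ^ 2 + ENNReal.ofReal (4 * N + 1) * ‖p.1 * B p.2‖ₑ ^ 2) ^ N ∂μ := by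
      rw [two_mul]
      nth_rewrite 2 [← e1]
      rw [← lintegral_add_left hG, ← lintegral_const_mul' _ _ (by norm_num)]
      refine lintegral_mono fun p => ?_
      have := two_point_enorm N (A p.2) (p.1 * B p.2)
      simpa [sub_eq_add_neg] using this
    exact (ENNReal.mul_le_mul_iff_right (by norm_num) (by norm_num)).1 h2
  have hM := ENNReal.lintegral_Lp_add_le (μ := μ) (p := N) hf.aemeasurable hg.aemeasurable (by exact_mod_cast hN)
  simp only [Pi.add_apply, ENNReal.rpow_natCast] at hM
  refine (ENNReal.rpow_le_rpow hle (by positivity)).trans (hM.trans ?_)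
  refine add_le_add (le_of_eq ?_) (le_of_eq ?_)
  · congr 1
    rw [lintegral_prod _ (hf.pow_const N).aemeasurable]
    simp [pow_mul]
  · have e3 : ∫⁻ p, (ENNReal.ofReal (4 * N + 1) * ‖p.1 * B p.2‖ₑ ^ 2) ^ N ∂μ = 
      ENNReal.ofReal (4 * N + 1) ^ N * (gm N * ∫⁻ z, ‖B z‖ₑ ^ (2 * N) ∂(gaussPi (Fin n))) := by
      have : ∀ p : ℝ × (Fin n → ℝ), (ENNReal.ofReal (4 * N + 1) * ‖p.1 * B p.2‖ₑ ^ 2) ^ N = 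
        ENNReal.ofReal (4 * N + 1) ^ N * (‖p.1‖ₑ ^ (2 * N) * ‖B p.2‖ₑ ^ (2 * N)) := by
        intro p; rw [enorm_mul, mul_pow, ← pow_mul, mul_pow]
      simp_rw [this]
      rw [lintegral_const_mul' _ _ (by finiteness)]
      rw [lintegral_prod_mul (f := fun x : ℝ => ‖x‖ₑ ^ (2 * N)) (g := fun z => ‖B z‖ₑ ^ (2 * N)) 
        (measurable_id.enorm.pow_const _).aemeasurable (hB.measurable.enorm.pow_const _).aemeasurable]
      rfl
    rw [e3, ENNReal.mul_rpow_of_nonneg _ _ (by positivity), ENNReal.mul_rpow_of_nonneg _ _ (by positivity), ← ENNReal.rpow_natCast,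
      ← ENNReal.rpow_mul, mul_one_div_cancel hN0.ne', ENNReal.rpow_one, mul_assoc]

lemma hyper (N : ℕ) (hN : 1 ≤ N) : ∃ K : ℝ, 1 ≤ K ∧ ∀ (n d : ℕ) (a : Finset (Fin n) → ℝ),
    (∫⁻ x, ‖Pol n d a x‖ₑ ^ (2 * N) ∂(gaussPi (Fin n))) ^ (1 / (N:ℝ)) ≤ 
      ENNReal.ofReal (K ^ d * ∑ S ∈ Finset.powersetCard d (Finset.univ : Finset (Fin n)), a S ^ 2) := by
  have hN0 : (0:ℝ) < N := by positivity
  set T := ENNReal.ofReal (4 * N + 1) * gm N ^ (1 / (N:ℝ))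
  have hT : T ≠ ∞ := ENNReal.mul_ne_top ENNReal.ofReal_ne_top (ENNReal.rpow_ne_top_of_nonneg (by positivity) (gm_lt_top N).ne)
  refine ⟨T.toReal + 1, by linarith [ENNReal.toReal_nonneg (a := T)], ?_⟩
  set K := T.toReal + 1
  have hK : 1 ≤ K := by linarith [ENNReal.toReal_nonneg (a := T)]
  have hTK : T ≤ ENNReal.ofReal K := by
    rw [← ENNReal.ofReal_toReal hT]; exact ENNReal.ofReal_le_ofReal (by linarith)
  have hzero : ∀ n (a : Finset (Fin n) → ℝ), (∫⁻ x, ‖Pol n 0 a x‖ₑ ^ (2 * N) ∂(gaussPi (Fin n))) ^ (1 / (N:ℝ)) ≤ 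
      ENNReal.ofReal (K ^ 0 * ∑ S ∈ Finset.powersetCard 0 (Finset.univ : Finset (Fin n)), a S ^ 2) := by
    intro n a
    have : ∀ x, Pol n 0 a x = a ∅ := by intro x; simp [Pol]
    simp_rw [this]
    simp only [lintegral_const, measure_univ, mul_one, Finset.powersetCard_zero, Finset.sum_singleton, pow_zero, one_mul]
    rw [pow_mul, ← ENNReal.rpow_natCast _ N, ← ENNReal.rpow_mul, mul_one_div_cancel hN0.ne', ENNReal.rpow_one, ← sq_abs, ← Real.norm_eq_abs,
      ENNReal.ofReal_pow (norm_nonneg _), ofReal_norm]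
  intro n
  induction n with
  | zero =>
    intro d a
    rcases Nat.eq_zero_or_pos d with rfl | hd
    · exact hzero 0 a
    · have : ∀ x, Pol 0 d a x = 0 := by
        intro x
        unfold Pol
        rw [Finset.powersetCard_eq_empty.2 (by simpa using hd)]; simp
      simp_rw [this]
      have h2 : 2 * N ≠ 0 := by omega
      simp [h2, hN0]
  | succ n ih =>
    intro d a
    rcases d with _ | d
    · exact hzero _ a
    · rw [← (gaussPi_cons n).lintegral_comp ((Pol_continuous (n+1) (d+1) a).measurable.enorm.pow_const _)]
      simp_rw [Pol_cons]
      refine (hyper_step N hN n _ _ (Pol_continuous _ _ _) (Pol_continuous _ _ _)).trans ?_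
      rw [psc_succ, mul_add]
      refine le_trans ?_ (le_of_eq (ENNReal.ofReal_add ?_ ?_).symm)
      · refine add_le_add (ih _ _) ?_
        rw [pow_succ', mul_assoc K, ENNReal.ofReal_mul (p := K) (by linarith)]
        exact mul_le_mul' hTK (ih _ _)
      · exact mul_nonneg (by positivity) (Finset.sum_nonneg fun _ _ => by positivity)
      · exact mul_nonneg (by positivity) (Finset.sum_nonneg fun _ _ => by positivity)

lemma Pol_sq' (n d : ℕ) (a : Finset (Fin n) → ℝ) :
    ∫⁻ x, ‖Pol n d a x‖ₑ ^ 2 ∂(gaussPi (Fin n)) = ENNReal.ofReal (∑ S ∈ Finset.powersetCard d (Finset.univ : Finset (Fin n)), a S ^ 2) := by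
  rw [Pol_sq, Finset.sum_subtype (p := fun S : Finset (Fin n) => S.card = d) (Finset.powersetCard d Finset.univ) (by intro S; simp)]

/-- moment comparison -/
lemma hyper2 (m d : ℕ) (hm : 1 ≤ m) : ∃ H : ℝ, 1 ≤ H ∧ ∀ (n : ℕ) (a : Finset (Fin n) → ℝ),
    (∫⁻ x, ‖Pol n d a x‖ₑ ^ (2 * m) ∂(gaussPi (Fin n))) < ∞ ∧ 
    ∫⁻ x, ‖Pol n d a x‖ₑ ^ (4 * m) ∂(gaussPi (Fin n)) ≤ ENNReal.ofReal H * (∫⁻ x, ‖Pol n d a x‖ₑ ^ (2 * m) ∂(gaussPi (Fin n))) ^ 2 := by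
  obtain ⟨K1, hK1, H1⟩ := hyper m hm
  obtain ⟨K, hK, HK⟩ := hyper (2 * m) (by omega)
  refine ⟨(K ^ d) ^ (2 * m), one_le_pow₀ (one_le_pow₀ hK), fun n a => ⟨?_, ?_⟩⟩
  · have := (H1 n d a).trans_lt ENNReal.ofReal_lt_top
    exact (ENNReal.rpow_lt_top_iff_of_pos (by positivity)).1 this
  · have h := HK n d a
    rw [ENNReal.ofReal_mul (by positivity), ← Pol_sq'] at h
    have hj := jensen_pow (gaussPi (Fin n)) (fun x => ‖Pol n d a x‖ₑ ^ 2) ((Pol_continuous n d a).measurable.enorm.pow_const _) m hm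
    have h0 : (0:ℝ) < (2 * m : ℕ) := by positivity
    have h2 := ENNReal.rpow_le_rpow h h0.le
    rw [← ENNReal.rpow_mul, one_div_mul_cancel h0.ne', ENNReal.rpow_one, ENNReal.rpow_natCast] at h2
    rw [show 4 * m = 2 * (2 * m) by ring]
    refine h2.trans ?_
    rw [mul_pow, ENNReal.ofReal_pow (p := K ^ d) (by positivity)]
    refine mul_le_mul' le_rfl ?_
    rw [mul_comm 2 m, pow_mul]
    refine pow_le_pow_left' ?_ 2
    rw [mul_comm m 2]
    refine hj.trans (le_of_eq ?_)
    simp_rw [← pow_mul]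


def LPc (ν : Measure ℝ) (e : ℝ) : Prop := ∀ B : Set ℝ, MeasurableSet B →
  ν B ≤ gaussianReal 0 1 (Metric.thickening e B) + ENNReal.ofReal e ∧
  gaussianReal 0 1 B ≤ ν (Metric.thickening e B) + ENNReal.ofReal e

lemma LPc_of (ν : Measure ℝ) [IsProbabilityMeasure ν] (e : ℝ) (he : 0 < e)
    (h : levyProkhorovDist ν (gaussianReal 0 1) ≤ e / 2) : LPc ν e := by
  have h1 : levyProkhorovEDist ν (gaussianReal 0 1) < ENNReal.ofReal e := by
    have h2 := levyProkhorovEDist_ne_top ν (gaussianReal 0 1)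
    rw [← ENNReal.ofReal_toReal h2]
    apply (ENNReal.ofReal_lt_ofReal_iff he).2
    unfold levyProkhorovDist at h
    linarith
  intro B hB
  have h3 := left_measure_le_of_levyProkhorovEDist_lt h1 hB
  have h4 := right_measure_le_of_levyProkhorovEDist_lt h1 hB
  rw [ENNReal.toReal_ofReal he.le] at h3 h4
  exact ⟨h3, h4⟩

lemma thick_mem {e : ℝ} {B : Set ℝ} {x : ℝ} (h : x ∈ Metric.thickening e B) : ∃ y ∈ B, |x - y| < e := by
  obtain ⟨y, hy, h⟩ := Metric.mem_thickening_iff.1 h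
  exact ⟨y, hy, h⟩

lemma gauss_tail (H : ℝ) (hH : 1 ≤ H) :
    gaussianReal 0 1 {x : ℝ | √(8 * H) ≤ |x|} ≤ ENNReal.ofReal (1 / (8 * H)) := by
  have h1 := mul_meas_ge_le_lintegral (μ := gaussianReal 0 1) (f := fun x : ℝ => ‖x‖ₑ ^ (2 * 1))
    (by fun_prop) (ENNReal.ofReal (8 * H))
  have h2 : ∫⁻ x : ℝ, ‖x‖ₑ ^ (2 * 1) ∂(gaussianReal 0 1) = 1 := gm_one
  rw [h2] at h1
  have h3 : {x : ℝ | √(8 * H) ≤ |x|} ⊆ {x : ℝ | ENNReal.ofReal (8 * H) ≤ ‖x‖ₑ ^ (2 * 1)} := by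
    intro x hx
    simp only [Set.mem_ofPred_eq] at hx ⊢
    rw [← ofReal_norm, ← ENNReal.ofReal_pow (norm_nonneg _)]
    apply ENNReal.ofReal_le_ofReal
    have := pow_le_pow_left₀ (Real.sqrt_nonneg _) hx 2
    rw [Real.sq_sqrt (by positivity)] at this
    simpa using this
  refine (measure_mono h3).trans ?_
  rw [one_div, ENNReal.ofReal_inv_of_pos (by positivity), ← one_div]
  rw [ENNReal.le_div_iff_mul_le (Or.inl (by simp; linarith)) (Or.inl ENNReal.ofReal_ne_top), mul_comm]
  exact h1

lemma nu_tail (ν : Measure ℝ) (e H : ℝ) (hH : 1 ≤ H) (he : e ≤ 1 / (8 * H)) (h : LPc ν e) :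
    ν {x : ℝ | √(8 * H) + 1 ≤ |x|} ≤ ENNReal.ofReal (1 / (4 * H)) := by
  have h1 := (h {x : ℝ | √(8 * H) + 1 ≤ |x|} (measurableSet_le (by fun_prop) (by fun_prop))).1
  have he1 : e ≤ 1 := by
    refine he.trans ?_
    rw [div_le_one (by positivity)]; linarith
  have h2 : Metric.thickening e {x : ℝ | √(8 * H) + 1 ≤ |x|} ⊆ {x : ℝ | √(8 * H) ≤ |x|} := by
    intro x hx
    obtain ⟨y, hy, hxy⟩ := thick_mem hx
    simp only [Set.mem_ofPred_eq] at hy ⊢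
    have := abs_sub_abs_le_abs_sub y x
    rw [abs_sub_comm] at hxy
    linarith
  calc _ ≤ _ := h1
    _ ≤ ENNReal.ofReal (1 / (8 * H)) + ENNReal.ofReal (1 / (8 * H)) :=
        add_le_add ((measure_mono h2).trans (gauss_tail H hH)) (ENNReal.ofReal_le_ofReal he)
    _ = _ := by
        rw [← ENNReal.ofReal_add (by positivity) (by positivity)]
        congr 1; field_simp; norm_num

lemma trunc (ν : Measure ℝ) [IsProbabilityMeasure ν] (m : ℕ) (H K : ℝ) (hH : 1 ≤ H) (hK : 0 ≤ K)
    (ht : ν {x : ℝ | K ≤ |x|} ≤ ENNReal.ofReal (1 / (4 * H)))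
    (hA : ∫⁻ x, ‖x‖ₑ ^ (2 * m) ∂ν < ∞)
    (h4 : ∫⁻ x, ‖x‖ₑ ^ (4 * m) ∂ν ≤ ENNReal.ofReal H * (∫⁻ x, ‖x‖ₑ ^ (2 * m) ∂ν) ^ 2) :
    ∫⁻ x, ‖x‖ₑ ^ (2 * m) ∂ν ≤ 2 * ∫⁻ x, ENNReal.ofReal ((min |x| K) ^ (2 * m)) ∂ν := by
  set A := ∫⁻ x, ‖x‖ₑ ^ (2 * m) ∂ν with hAdef
  set T := ∫⁻ x, ENNReal.ofReal ((min |x| K) ^ (2 * m)) ∂ν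
  set B := {x : ℝ | K ≤ |x|} with hB
  have hBm : MeasurableSet B := measurableSet_le (by fun_prop) (by fun_prop)
  set S := ∫⁻ x, ‖x‖ₑ ^ (2 * m) * B.indicator 1 x ∂ν with hS
  have hind : Measurable (B.indicator (1 : ℝ → ℝ≥0∞)) := measurable_one.indicator hBm
  have h1 : A ≤ S + T := by
    rw [hS, ← lintegral_add_left (by fun_prop)]
    apply lintegral_mono
    intro x
    by_cases hx : x ∈ B
    · simp [hx]
    · have : |x| < K := by simpa [hB] using hx
      simp only [hx, not_false_eq_true, Set.indicator_of_notMem, mul_zero, zero_add]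
      rw [min_eq_left this.le, ← ofReal_norm, ← ENNReal.ofReal_pow (norm_nonneg _)]
      simp
  have h2 : (2 * S) ^ 2 ≤ A ^ 2 := by
    have hcs := ENNReal.lintegral_mul_le_Lp_mul_Lq ν (p := 2) (q := 2) ⟨by norm_num, by norm_num, by norm_num⟩
      (f := fun x : ℝ => ‖x‖ₑ ^ (2 * m)) (g := B.indicator 1) (by fun_prop) hind.aemeasurable
    have hcs2 : S ≤ (∫⁻ x, ‖x‖ₑ ^ (4 * m) ∂ν) ^ (1 / (2:ℝ)) * (ν B) ^ (1 / (2:ℝ)) := by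
      refine hcs.trans (le_of_eq ?_)
      congr 2
      · apply lintegral_congr; intro x
        rw [ENNReal.rpow_ofNat, ← pow_mul]; congr 1; ring
      · rw [← lintegral_indicator_one hBm]
        apply lintegral_congr; intro x
        by_cases hx : x ∈ B <;> simp [hx]
    have hS2 : S ^ 2 ≤ (∫⁻ x, ‖x‖ₑ ^ (4 * m) ∂ν) * ν B := by
      refine (pow_le_pow_left' hcs2 2).trans (le_of_eq ?_)
      rw [mul_pow, ← ENNReal.rpow_natCast, ← ENNReal.rpow_mul, ← ENNReal.rpow_natCast, ← ENNReal.rpow_mul]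
      norm_num
    calc (2 * S) ^ 2 = 4 * S ^ 2 := by rw [mul_pow]; norm_num
      _ ≤ 4 * ((ENNReal.ofReal H * A ^ 2) * ENNReal.ofReal (1 / (4 * H))) :=
          mul_le_mul' le_rfl (hS2.trans (mul_le_mul' h4 ht))
      _ = (ENNReal.ofReal 4 * ENNReal.ofReal H * ENNReal.ofReal (1 / (4 * H))) * A ^ 2 := by
          rw [show ENNReal.ofReal 4 = 4 by norm_num]; ring
      _ = A ^ 2 := by
          rw [← ENNReal.ofReal_mul (by positivity), ← ENNReal.ofReal_mul (by positivity)]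
          rw [show 4 * H * (1 / (4 * H)) = 1 by field_simp]; simp
  have h3 : 2 * S ≤ A := by
    exact (ENNReal.pow_le_pow_left_iff (two_ne_zero)).1 h2
  have h5 : A + A ≤ A + 2 * T := by
    calc A + A = 2 * A := (two_mul A).symm
      _ ≤ 2 * (S + T) := mul_le_mul' le_rfl h1
      _ = 2 * S + 2 * T := mul_add _ _ _
      _ ≤ _ := add_le_add h3 le_rfl
  exact (ENNReal.add_le_add_iff_left hA.ne).1 h5

lemma layer (ν : Measure ℝ) [IsProbabilityMeasure ν] (m : ℕ) (hm : 1 ≤ m) (e K : ℝ) (hK : 0 ≤ K) (he : e ≤ 1) (h : LPc ν e) :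
    ∫⁻ x, ENNReal.ofReal ((min |x| K) ^ (2 * m)) ∂ν ≤
      ∫⁻ x, ENNReal.ofReal ((|x| + 1) ^ (2 * m)) ∂(gaussianReal 0 1) + ENNReal.ofReal e * ENNReal.ofReal (K ^ (2 * m)) := by
  rw [lintegral_eq_lintegral_meas_lt ν (Eventually.of_forall fun x => by positivity) (by fun_prop),
    lintegral_eq_lintegral_meas_lt _ (Eventually.of_forall fun x => by positivity) (by fun_prop)]
  have key : ∀ t : ℝ, ν {x : ℝ | t < (min |x| K) ^ (2 * m)} ≤ gaussianReal 0 1 {x : ℝ | t < (|x| + 1) ^ (2 * m)} +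
      (Set.Iio (K ^ (2 * m))).indicator (fun _ => ENNReal.ofReal e) t := by
    intro t
    by_cases ht : t < K ^ (2 * m)
    · rw [Set.indicator_of_mem (by exact ht)]
      refine (h _ (measurableSet_lt (by fun_prop) (by fun_prop))).1.trans ?_
      gcongr
      intro x hx
      obtain ⟨y, hy, hxy⟩ := thick_mem hx
      simp only [Set.mem_ofPred_eq] at hy ⊢
      have := abs_sub_abs_le_abs_sub y x
      rw [abs_sub_comm] at hxy
      refine hy.trans_le (pow_le_pow_left₀ (by positivity) ?_ _)
      exact (min_le_left _ _).trans (by linarith)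
    · have : {x : ℝ | t < (min |x| K) ^ (2 * m)} = ∅ := by
        ext x
        simp only [Set.mem_ofPred_eq, Set.mem_empty_iff_false, iff_false, not_lt]
        push Not at ht
        refine le_trans (pow_le_pow_left₀ (by positivity) (min_le_right _ _) _) ht
      rw [this]; simp
  calc _ ≤ ∫⁻ t in Set.Ioi (0:ℝ), (gaussianReal 0 1 {x : ℝ | t < (|x| + 1) ^ (2 * m)} +
      (Set.Iio (K ^ (2 * m))).indicator (fun _ => ENNReal.ofReal e) t) := lintegral_mono key
    _ = _ := lintegral_add_right _ (measurable_const.indicator measurableSet_Iio)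
    _ ≤ _ := by
      gcongr
      rw [lintegral_indicator measurableSet_Iio, Measure.restrict_restrict measurableSet_Iio, setLIntegral_const]
      rw [Set.inter_comm, Set.Ioi_inter_Iio, Real.volume_Ioo, sub_zero]

lemma plus_one (m : ℕ) (hm : 1 ≤ m) (hg : 1 ≤ gm m) :
    ∫⁻ x, ENNReal.ofReal ((|x| + 1) ^ (2 * m)) ∂(gaussianReal 0 1) ≤ 2 * 4 ^ m * gm m := by
  calc _ ≤ ∫⁻ x, (4:ℝ≥0∞) ^ m * (‖x‖ₑ ^ (2 * m) + 1) ∂(gaussianReal 0 1) := by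
        apply lintegral_mono
        intro x
        have h := enorm_sub_pow_le |x| (-1) (2 * m)
        rw [sub_neg_eq_add] at h
        have h2 : ENNReal.ofReal ((|x| + 1) ^ (2 * m)) = ‖|x| + 1‖ₑ ^ (2 * m) := by
          rw [ENNReal.ofReal_pow (by positivity), Real.enorm_of_nonneg (by positivity)]
        dsimp only
        rw [h2]
        refine h.trans (le_of_eq ?_)
        rw [pow_mul]; norm_num
    _ = 4 ^ m * (gm m + 1) := by
        rw [lintegral_const_mul _ (by fun_prop), lintegral_add_right _ measurable_const]
        simp [gm]
    _ ≤ 4 ^ m * (gm m + gm m) := by gcongr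
    _ = _ := by ring

lemma mom_upper (m : ℕ) (hm : 1 ≤ m) (hg : 1 ≤ gm m) (H : ℝ) (hH : 1 ≤ H) : ∃ e0 : ℝ, 0 < e0 ∧ ∀ e : ℝ, e ≤ e0 →
    ∀ (ν : Measure ℝ) [IsProbabilityMeasure ν], LPc ν e → (∫⁻ x, ‖x‖ₑ ^ (2 * m) ∂ν < ∞) →
    (∫⁻ x, ‖x‖ₑ ^ (4 * m) ∂ν ≤ ENNReal.ofReal H * (∫⁻ x, ‖x‖ₑ ^ (2 * m) ∂ν) ^ 2) →
    ∫⁻ x, ‖x‖ₑ ^ (2 * m) ∂ν ≤ ENNReal.ofReal 24 ^ m * gm m := by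
  set K := √(8 * H) + 1 with hKd
  have hK : 0 < K := by positivity
  refine ⟨min (1 / (8 * H)) (1 / K ^ (2 * m)), by positivity, ?_⟩
  intro e he ν _ hL hA h4
  have he1 : e ≤ 1 / (8 * H) := he.trans (min_le_left _ _)
  have he2 : e ≤ 1 / K ^ (2 * m) := he.trans (min_le_right _ _)
  have he3 : e ≤ 1 := by
    refine he1.trans ?_
    rw [div_le_one (by positivity)]; linarith
  have h1 := trunc ν m H K hH hK.le (nu_tail ν e H hH he1 hL) hA h4
  have h2 := layer ν m hm e K hK.le he3 hL
  have h3 : ENNReal.ofReal e * ENNReal.ofReal (K ^ (2 * m)) ≤ 1 := by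
    calc _ ≤ ENNReal.ofReal (1 / K ^ (2 * m)) * ENNReal.ofReal (K ^ (2 * m)) := by gcongr
      _ = 1 := by
        rw [← ENNReal.ofReal_mul (by positivity), one_div_mul_cancel (by positivity)]; simp
  have h24 : (ENNReal.ofReal 24) = 4 * 6 := by norm_num
  have h6 : (4:ℝ≥0∞) * 4 ^ m + 2 ≤ 4 ^ m * 6 ^ m := by
    have : 4 * 4 ^ m + 2 ≤ 4 ^ m * 6 ^ m := by
      have a1 : 6 ≤ 6 ^ m := by simpa using Nat.pow_le_pow_right (n := 6) (by norm_num) hm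
      have a2 : 4 ≤ 4 ^ m := by simpa using Nat.pow_le_pow_right (n := 4) (by norm_num) hm
      nlinarith
    exact_mod_cast this
  calc _ ≤ _ := h1
    _ ≤ 2 * (2 * 4 ^ m * gm m + gm m) := mul_le_mul' le_rfl (h2.trans (add_le_add (plus_one m hm hg) (h3.trans hg)))
    _ = (4 * 4 ^ m + 2) * gm m := by ring
    _ ≤ (4 ^ m * 6 ^ m) * gm m := by gcongr
    _ = _ := by rw [h24, mul_pow]

lemma gauss_ge_two : 0 < gaussianReal 0 1 {x : ℝ | 2 ≤ |x|} := by
  rw [pos_iff_ne_zero]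
  intro h
  have h1 := gaussianReal_absolutelyContinuous' 0 (one_ne_zero (α := ℝ≥0)) h
  have h2 : Set.Ici (2:ℝ) ⊆ {x : ℝ | 2 ≤ |x|} := fun x hx => le_trans (show (2:ℝ) ≤ x from hx) (le_abs_self x)
  have := measure_mono_null h2 h1
  simp at this

lemma mom_lower : ∃ c : ℝ, 0 < c ∧ ∃ e0 : ℝ, 0 < e0 ∧ ∀ e : ℝ, e ≤ e0 → ∀ (ν : Measure ℝ), LPc ν e →
    ENNReal.ofReal c ≤ ∫⁻ x, ‖x‖ₑ ^ 2 ∂ν := by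
  set p := (gaussianReal 0 1 {x : ℝ | 2 ≤ |x|}).toReal with hp
  have hpe : gaussianReal 0 1 {x : ℝ | 2 ≤ |x|} = ENNReal.ofReal p := (ENNReal.ofReal_toReal (measure_ne_top _ _)).symm
  have hp0 : 0 < p := ENNReal.toReal_pos gauss_ge_two.ne' (measure_ne_top _ _)
  refine ⟨p / 2, by positivity, min 1 (p / 2), by positivity, ?_⟩
  intro e he ν hL
  have he1 : e ≤ 1 := he.trans (min_le_left _ _)
  have he2 : e ≤ p / 2 := he.trans (min_le_right _ _)
  have h1 := (hL {x : ℝ | 2 ≤ |x|} (measurableSet_le (by fun_prop) (by fun_prop))).2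
  have h2 : ν (Metric.thickening e {x : ℝ | 2 ≤ |x|}) ≤ ∫⁻ x, ‖x‖ₑ ^ 2 ∂ν := by
    have h3 := mul_meas_ge_le_lintegral (μ := ν) (f := fun x : ℝ => ‖x‖ₑ ^ 2) (by fun_prop) 1
    rw [one_mul] at h3
    refine (measure_mono ?_).trans h3
    intro x hx
    obtain ⟨y, hy, hxy⟩ := thick_mem hx
    simp only [Set.mem_ofPred_eq] at hy ⊢
    have := abs_sub_abs_le_abs_sub y x
    rw [abs_sub_comm] at hxy
    apply one_le_pow₀
    rw [← ofReal_norm, Real.norm_eq_abs, ← ENNReal.ofReal_one]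
    exact ENNReal.ofReal_le_ofReal (by linarith)
  rw [hpe] at h1
  have h5 : ENNReal.ofReal (p / 2) + ENNReal.ofReal (p / 2) ≤ ∫⁻ x, ‖x‖ₑ ^ 2 ∂ν + ENNReal.ofReal (p / 2) := by
    rw [← ENNReal.ofReal_add (by positivity) (by positivity), add_halves]
    exact h1.trans (add_le_add h2 (ENNReal.ofReal_le_ofReal he2))
  exact (ENNReal.add_le_add_iff_right ENNReal.ofReal_ne_top).1 h5

theorem LP_moments : ∃ c : ℝ, 0 < c ∧ ∃ m1 : ℕ, ∀ m ≥ m1, ∀ d : ℕ, ∃ δ : ℝ, 0 < δ ∧ ∀ n a,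
    levyProkhorovDist (Measure.map (Pol n d a) (gaussPi (Fin n))) (gaussianReal 0 1) ≤ δ →
    ENNReal.ofReal c ≤ ∫⁻ x, ‖Pol n d a x‖ₑ ^ 2 ∂gaussPi (Fin n) ∧
    ∫⁻ x, ‖Pol n d a x‖ₑ ^ (2 * m) ∂gaussPi (Fin n) ≤ ENNReal.ofReal 24 ^ m * gm m := by
  obtain ⟨c, hc, e0, he0, hlow⟩ := mom_lower
  obtain ⟨m0, hm0⟩ := gm_large 1
  refine ⟨c, hc, max m0 1, ?_⟩
  intro m hm d
  have hm1 : 1 ≤ m := le_trans (le_max_right _ _) hm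
  have hg : 1 ≤ gm m := by simpa using hm0 m (le_trans (le_max_left _ _) hm)
  obtain ⟨H, hH, hyp⟩ := hyper2 m d hm1
  obtain ⟨e1, he1, hup⟩ := mom_upper m hm1 hg H hH
  refine ⟨min e0 e1 / 2, by positivity, ?_⟩
  intro n a hLP
  have hmeas : Measurable (Pol n d a) := (Pol_continuous n d a).measurable
  have : IsProbabilityMeasure (Measure.map (Pol n d a) (gaussPi (Fin n))) :=
    Measure.isProbabilityMeasure_map hmeas.aemeasurable
  have hL := LPc_of _ (min e0 e1) (by positivity) hLP
  have hmap : ∀ k : ℕ, ∫⁻ x, ‖x‖ₑ ^ k ∂(Measure.map (Pol n d a) (gaussPi (Fin n))) =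
      ∫⁻ x, ‖Pol n d a x‖ₑ ^ k ∂gaussPi (Fin n) := fun k =>
    lintegral_map (f := fun x : ℝ => ‖x‖ₑ ^ k) (by fun_prop) hmeas
  obtain ⟨y1, y2⟩ := hyp n a
  constructor
  · rw [← hmap]; exact hlow _ (min_le_left _ _) _ hL
  · rw [← hmap]
    refine hup _ (min_le_right _ _) _ hL ?_ ?_
    · rw [hmap]; exact y1
    · rw [hmap, hmap]; exact y2


lemma esseen {α : Type} [MeasurableSpace α] (μ : Measure α) [IsProbabilityMeasure μ] (F : α → ℝ) (hF : Measurable F)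
    (C : ℝ) (hC : 0 < C) (hφ : ∀ t : ℝ, ‖∫ x, ee (t * F x) ∂μ‖ ≤ C * (1 + t ^ 2)⁻¹) (ε : ℝ) (hε : 0 < ε) :
    μ {x | |F x| ≤ ε} ≤ ENNReal.ofReal ((Real.exp (1 / 2) * C * Real.pi) * ε) := by
  set E : α → ℝ := fun x => Real.exp (-((F x / ε) ^ 2 / 2)) with hE
  have hEm : Measurable E := by fun_prop
  have hEi : Integrable E μ := by
    refine Integrable.of_bound (C := 1) hEm.aestronglyMeasurable (ae_of_all _ fun x => ?_)
    rw [Real.norm_eq_abs, abs_of_pos (Real.exp_pos _)]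
    apply Real.exp_le_one_iff.2
    have : 0 ≤ (F x / ε) ^ 2 / 2 := by positivity
    linarith
  have h1 : ‖∫ x, (E x : ℂ) ∂μ‖ ≤ C * Real.pi * ε := by
    have a1 : ∀ x, (E x : ℂ) = ∫ g, ee (F x / ε * g) ∂(gaussianReal 0 1) := by
      intro x
      unfold ee
      rw [gauss_char, hE]
      push_cast; rfl
    simp_rw [a1]
    rw [integral_integral_swap (f := fun x g => ee (F x / ε * g))
      (ee_integrable (μ.prod (gaussianReal 0 1)) (fun p : α × ℝ => F p.1 / ε * p.2) (by fun_prop))]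
    refine (norm_integral_le_integral_norm _).trans ?_
    have hIntg : Integrable (fun g : ℝ => C * (1 + (g / ε) ^ 2)⁻¹) volume :=
      (integrable_inv_one_add_sq.comp_div hε.ne').const_mul C
    calc ∫ g, ‖∫ x, ee (F x / ε * g) ∂μ‖ ∂(gaussianReal 0 1)
        ≤ ∫ g, C * (1 + (g / ε) ^ 2)⁻¹ ∂(gaussianReal 0 1) := by
          apply integral_mono_of_nonneg (ae_of_all _ fun g => norm_nonneg _) (hIntg.mono_measure gauss_le_volume)
          refine ae_of_all _ fun g => ?_
          refine le_trans (le_of_eq ?_) (hφ (g / ε))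
          dsimp only
          congr 2
          ext x
          congr 1; ring
      _ ≤ ∫ g, C * (1 + (g / ε) ^ 2)⁻¹ :=
          integral_mono_measure gauss_le_volume (ae_of_all _ fun g => by positivity) hIntg
      _ = C * Real.pi * ε := by
          rw [integral_const_mul, Measure.integral_comp_div (fun x : ℝ => (1 + x ^ 2)⁻¹) ε, integral_univ_inv_one_add_sq,
            abs_of_pos hε]
          simp; ring
  have h2 : ∫ x, E x ∂μ ≤ C * Real.pi * ε := by
    rw [integral_complex_ofReal, Complex.norm_real] at h1
    exact (le_abs_self _).trans h1
  have hS : MeasurableSet {x | |F x| ≤ ε} := measurableSet_le (by fun_prop) measurable_const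
  have h3 : μ.real {x | |F x| ≤ ε} ≤ Real.exp (1 / 2) * ∫ x, E x ∂μ := by
    rw [← integral_indicator_one hS, ← integral_const_mul]
    apply integral_mono ((integrable_const (1:ℝ)).indicator hS) (hEi.const_mul _)
    intro x
    by_cases hx : x ∈ {x | |F x| ≤ ε}
    · rw [Set.indicator_of_mem hx]
      simp only [Pi.one_apply, hE]
      rw [← Real.exp_add]
      apply Real.one_le_exp
      have hx' : |F x| ≤ ε := hx
      have : (F x / ε) ^ 2 ≤ 1 := by
        rw [← sq_abs, abs_div, abs_of_pos hε]
        exact pow_le_one₀ (by positivity) ((div_le_one hε).2 hx')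
      linarith
    · rw [Set.indicator_of_notMem hx]
      positivity
  rw [← ENNReal.ofReal_toReal (measure_ne_top μ {x | |F x| ≤ ε})]
  apply ENNReal.ofReal_le_ofReal
  refine h3.trans ?_
  calc _ ≤ Real.exp (1 / 2) * (C * Real.pi * ε) := by gcongr
    _ = _ := by ring

lemma decay_bound {α : Type} [MeasurableSpace α] (μ : Measure α) [IsProbabilityMeasure μ] (F : α → ℝ)
    (N : ℕ) (hN : N ≠ 0) (C : ℝ) (h : ∀ t > 0, ‖∫ x, ee (t * F x) ∂μ‖ ^ N ≤ C * (t ^ (2 * N))⁻¹) (t : ℝ) :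
    ‖∫ x, ee (t * F x) ∂μ‖ ≤ (2 * max C 1) * (1 + t ^ 2)⁻¹ := by
  have hC1 : 1 ≤ max C 1 := le_max_right _ _
  have hC0 : C ≤ max C 1 := le_max_left _ _
  set C' := max C 1
  have hpos : ∀ t > 0, ‖∫ x, ee (t * F x) ∂μ‖ ≤ (2 * C') * (1 + t ^ 2)⁻¹ := by
    intro t ht
    have h1 := norm_int_ee_le μ (fun x => t * F x)
    have h2 : ‖∫ x, ee (t * F x) ∂μ‖ ≤ C' * (t ^ 2)⁻¹ := by
      refine le_of_pow_le_pow_left₀ hN (by positivity) ((h t ht).trans ?_)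
      rw [mul_pow, inv_pow, ← pow_mul]
      gcongr
      exact hC0.trans (le_self_pow₀ hC1 hN)
    rw [← div_eq_mul_inv, le_div_iff₀ (by positivity)]
    rw [← div_eq_mul_inv, le_div_iff₀ (by positivity)] at h2
    nlinarith
  rcases lt_trichotomy t 0 with ht | ht | ht
  · have := hpos (-t) (by linarith)
    have h2 : ∫ x, ee (t * F x) ∂μ = (starRingEnd ℂ) (∫ x, ee (-t * F x) ∂μ) := by
      rw [← integral_conj]
      congr 1; ext x
      have := ee_sub 0 (-t * F x)
      simp only [zero_sub, neg_mul, neg_neg] at this ⊢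
      rw [this]
      simp [ee]
    rw [h2, RCLike.norm_conj]
    simpa using this
  · subst ht
    refine (norm_int_ee_le μ _).trans ?_
    norm_num; linarith
  · exact hpos t ht

lemma deg_zero (n : ℕ) (a : Finset (Fin n) → ℝ)
    (h : levyProkhorovDist (Measure.map (Pol n 0 a) (gaussPi (Fin n))) (gaussianReal 0 1) ≤ 1 / 20) : False := by
  have hmeas : Measurable (Pol n 0 a) := (Pol_continuous n 0 a).measurable
  have : IsProbabilityMeasure (Measure.map (Pol n 0 a) (gaussPi (Fin n))) :=
    Measure.isProbabilityMeasure_map hmeas.aemeasurable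
  have hL := (LPc_of _ (1 / 10) (by positivity) (h.trans (by norm_num)) {a ∅} (measurableSet_singleton _)).1
  rw [Measure.map_apply hmeas (measurableSet_singleton _)] at hL
  have h1 : Pol n 0 a ⁻¹' {a ∅} = Set.univ := by
    ext x; simp [Pol]
  rw [h1, measure_univ, Metric.thickening_singleton] at hL
  have h2 : gaussianReal 0 1 (Metric.ball (a ∅) (1 / 10)) ≤ ENNReal.ofReal (2 * (1 / 10)) :=
    (gauss_le_volume _).trans (le_of_eq (Real.volume_ball _ _))
  have h3 := hL.trans (add_le_add h2 le_rfl)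
  rw [← ENNReal.ofReal_add (by norm_num) (by norm_num), ← ENNReal.ofReal_one, ENNReal.ofReal_le_ofReal_iff (by norm_num)] at h3
  norm_num at h3

/-- Improved Carbery–Wright estimate near Gaussianity: a degree-`d` multilinear
homogeneous Gaussian polynomial whose law is close to `N(0,1)` satisfies a small-ball estimate
with exponent `1` (instead of `1/d`), with constants independent of the number of variables. -/
theorem carbery_wright_improvement (d : ℕ) :
    ∃ δ > (0:ℝ), ∃ c > (0:ℝ), ∀ (n : ℕ) (a : Finset (Fin n) → ℝ),
      levyProkhorovDist
          (Measure.map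
            (fun x : Fin n → ℝ =>
              ∑ S ∈ Finset.powersetCard d (Finset.univ : Finset (Fin n)), a S * ∏ i ∈ S, x i)
            (gaussPi (Fin n)))
          (gaussianReal 0 1) ≤ δ →
      ∀ ε > (0:ℝ),
        gaussPi (Fin n)
            {x | |∑ S ∈ Finset.powersetCard d (Finset.univ : Finset (Fin n)),
                    a S * ∏ i ∈ S, x i| ≤ ε}
          ≤ ENNReal.ofReal (c * ε) := by
  rcases d with _ | k
  · refine ⟨1 / 20, by norm_num, 1, one_pos, ?_⟩
    intro n a h
    exact (deg_zero n a h).elim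
  · obtain ⟨c, hc, m1, hm1⟩ := LP_moments
    obtain ⟨m0, hm0, hchar⟩ := char_decay k (2 * 2 ^ (k + 1)) (by have := Nat.one_le_two_pow (n := k + 1); omega) c 24 hc (by norm_num)
    obtain ⟨C, hC, hdec⟩ := hchar (max m0 m1) (le_max_left _ _)
    obtain ⟨δ, hδ, hmom⟩ := hm1 (max m0 m1) (le_max_right _ _) (k + 1)
    refine ⟨δ, hδ, Real.exp (1 / 2) * (2 * max C 1) * Real.pi, by positivity, ?_⟩
    intro n a hLP ε hε
    obtain ⟨b1, b2⟩ := hmom n a hLP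
    exact esseen (gaussPi (Fin n)) (Pol n (k + 1) a) (Pol_continuous n (k + 1) a).measurable (2 * max C 1) (by positivity)
      (decay_bound _ _ (2 ^ (k + 1)) (by positivity) C (hdec n a b1 b2)) ε hε
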